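/- Let φ : ℝ → ℝ be a C^∞ sigmoid (0 < φ < 1, φ′ > 0, φ(z) → 1 as z → +∞, φ(z) → 0 as z → −∞) satisfying the algebraic-decay assumption (A) with decay rate k, and fix α ∈ (0,1), α + β > 1. Then there exist real numbers η^L₀ < 0 < η^R₀ such that: for every μ₁ ≥ 0 and every η₁ with η^L₀ + μ₁/α < η₁ < η^R₀ + μ₁/(α+β), and for every c > 0, there exists ε₀ > 0 such that for all ε ∈ (0, ε₀) the planar system ẋ = (α + β φ((x−1)/ε)) y − x, ẏ = η − (μ + α + β φ((x−1)/ε)) y with η = 1 + ε^{k/(k+1)} η₁ and μ = ε^{k/(k+1)} μ₁ has an attracting limit cycle (a nonconstant periodic solution that attracts all solutions starting in some open neighborhood of its image) whose image lies within Hausdorff distance c of the singular cycle Γ₀. -/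

import Mathlib

open Filter Topology

/-- The substrate-depletion vector field
`(x, y) ↦ ((α + βφ((x−1)/ε))y − x, η − (μ + α + βφ((x−1)/ε))y)`. -/
noncomputable def sdVF (φ : ℝ → ℝ) (α β μ η ε : ℝ) (p : ℝ × ℝ) : ℝ × ℝ :=
  ((α + β * φ ((p.1 - 1) / ε)) * p.2 - p.1,
   η - (μ + α + β * φ ((p.1 - 1) / ε)) * p.2)

/-!
On either side of the switching line `x = 1` the sigmoid is an algebraically small perturbation of
one of its two limits, and after a reflection both sides take the form of one half system, whose
orbits follow the limiting arc towards a node on the line. At distance `δ = ε ^ (k / (k + 1))` the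
algebraic tail becomes comparable to the distance itself and, since `η - 1` and `μ` are small
multiples of `δ`, pushes the orbits across the line with positive speed. On the way down to this
layer two orbits approach each other by a factor `(δ / u) ^ l`, whereas the expansion inside it is
bounded independently of `ε`. Hence for small `ε` the transition maps between the sections
`x = 1 ± u₀` are contractions, and the fixed point of their composition is an attracting cycle close
to the two arcs.
-/

namespace SubstrateDepletion

open Set NNReal

/-! ### Differential inequalities on an interval -/

section DifferentialInequalities

variable {f f' : ℝ → ℝ} {a b c K : ℝ}

lemma exists_first_hit (hf : ContinuousOn f (Icc a b)) (ha : c < f a)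
    (hex : ∃ t ∈ Icc a b, f t ≤ c) :
    ∃ t ∈ Ioc a b, f t = c ∧ ∀ s ∈ Ico a t, c < f s := by
  obtain ⟨t₀, ht₀, hft₀⟩ := hex
  have hclosed : IsClosed (Icc a b ∩ f ⁻¹' Iic c) :=
    hf.preimage_isClosed_of_isClosed isClosed_Icc isClosed_Iic
  have hbdd : BddBelow (Icc a b ∩ f ⁻¹' Iic c) := ⟨a, fun x hx => hx.1.1⟩
  obtain ⟨hm, hfm⟩ := hclosed.csInf_mem ⟨t₀, ht₀, hft₀⟩ hbdd
  set m := sInf (Icc a b ∩ f ⁻¹' Iic c)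
  have hbefore : ∀ s ∈ Ico a m, c < f s := fun s hs => by
    by_contra hle
    exact (csInf_le hbdd ⟨⟨hs.1, hs.2.le.trans hm.2⟩, not_lt.1 hle⟩).not_gt hs.2
  obtain ⟨s, hs, hfs⟩ := intermediate_value_Icc' hm.1 (hf.mono (Icc_subset_Icc_right hm.2))
    ⟨hfm, ha.le⟩
  have hsm : s = m := hs.2.eq_of_not_lt fun h => (hbefore s ⟨hs.1, h⟩).ne' hfs
  rw [hsm] at hfs
  exact ⟨m, ⟨hm.1.lt_of_ne fun h => ha.ne' (h ▸ hfs), hm.2⟩, hfs, hbefore⟩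

lemma forall_pos_of_bootstrap (hf : ContinuousOn f (Icc a b)) (ha : 0 < f a)
    (step : ∀ t ∈ Ioc a b, (∀ s ∈ Icc a t, 0 ≤ f s) → 0 < f t) :
    ∀ t ∈ Icc a b, 0 < f t := by
  by_contra! hex
  obtain ⟨t, ht, hft, hpos⟩ := exists_first_hit hf ha hex
  refine (step t ht fun s hs => ?_).ne' hft
  rcases hs.2.lt_or_eq with h | rfl
  exacts [(hpos s ⟨hs.1, h⟩).le, hft.ge]

lemma forall_pos_of_deriv_pos_of_eq_zero (hf : ∀ t ∈ Icc a b, HasDerivAt f (f' t) t)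
    (ha : 0 < f a) (h : ∀ t ∈ Icc a b, f t = 0 → 0 < f' t) : ∀ t ∈ Icc a b, 0 < f t := by
  refine forall_pos_of_bootstrap (HasDerivAt.continuousOn hf) ha fun t ht hnonneg => ?_
  have htI : t ∈ Icc a b := Ioc_subset_Icc_self ht
  refine (hnonneg t ⟨ht.1.le, le_rfl⟩).lt_of_ne fun h0 => ?_
  have hslope : ∀ᶠ s in 𝓝[<] t, 0 < slope f t s :=
    ((hasDerivAt_iff_tendsto_slope.1 (hf t htI)).eventually (lt_mem_nhds (h t htI h0.symm)))
      |>.filter_mono (nhdsWithin_mono _ fun s hs => ne_of_lt hs)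
  obtain ⟨s, hs, hsI⟩ := (hslope.and (Ioo_mem_nhdsLT ht.1)).exists
  rw [slope_def_field, ← h0, sub_zero] at hs
  exact hs.not_ge (div_nonpos_of_nonneg_of_nonpos (hnonneg s ⟨hsI.1.le, hsI.2.le⟩)
    (by linarith [hsI.2]))

lemma le_of_forall_deriv_nonneg (hab : a ≤ b) (hf : ∀ t ∈ Icc a b, HasDerivAt f (f' t) t)
    (h : ∀ t ∈ Icc a b, 0 ≤ f' t) : f a ≤ f b :=
  monotoneOn_of_hasDerivWithinAt_nonneg (convex_Icc a b) (HasDerivAt.continuousOn hf)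
    (fun t ht => (hf t (interior_subset ht)).hasDerivWithinAt)
    (fun t ht => h t (interior_subset ht)) (left_mem_Icc.2 hab) (right_mem_Icc.2 hab) hab

lemma le_of_forall_deriv_nonpos (hab : a ≤ b) (hf : ∀ t ∈ Icc a b, HasDerivAt f (f' t) t)
    (h : ∀ t ∈ Icc a b, f' t ≤ 0) : f b ≤ f a :=
  neg_le_neg_iff.1 <| le_of_forall_deriv_nonneg (f := fun t => -f t) hab
    (fun t ht => (hf t ht).neg) fun t ht => neg_nonneg.2 (h t ht)

lemma mul_le_mul_of_integrating_factor {E p : ℝ → ℝ} (hab : a ≤ b)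
    (hf : ContinuousOn f (Icc a b)) (hf' : ∀ t ∈ Ioo a b, HasDerivAt f (f' t) t)
    (hE : ContinuousOn E (Icc a b)) (hE' : ∀ t ∈ Ioo a b, HasDerivAt E (-(p t * E t)) t)
    (hE0 : ∀ t ∈ Ioo a b, 0 ≤ E t) (h : ∀ t ∈ Ioo a b, p t * f t ≤ f' t) :
    f a * E a ≤ f b * E b := by
  refine monotoneOn_of_hasDerivWithinAt_nonneg (f := fun t => f t * E t)
    (f' := fun t => f' t * E t + f t * (-(p t * E t))) (convex_Icc a b) (hf.mul hE) ?_ ?_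
    (left_mem_Icc.2 hab) (right_mem_Icc.2 hab) hab <;> rw [interior_Icc] <;> intro t ht
  · exact ((hf' t ht).mul (hE' t ht)).hasDerivWithinAt
  · calc 0 ≤ (f' t - p t * f t) * E t := mul_nonneg (sub_nonneg.2 (h t ht)) (hE0 t ht)
      _ = f' t * E t + f t * (-(p t * E t)) := by ring

lemma le_mul_exp_of_neg_mul_le_deriv (hab : a ≤ b) (hf : ContinuousOn f (Icc a b))
    (hf' : ∀ t ∈ Ioo a b, HasDerivAt f (f' t) t) (h : ∀ t ∈ Ioo a b, -K * f t ≤ f' t) :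
    f a ≤ f b * Real.exp (K * (b - a)) := by
  have hE (t : ℝ) : HasDerivAt (fun s => Real.exp (K * (s - a)))
      (-(-K * Real.exp (K * (t - a)))) t := by
    refine (((hasDerivAt_id t).sub_const a).const_mul K).exp.congr_deriv ?_
    simp only [id]; ring
  simpa using mul_le_mul_of_integrating_factor hab hf hf' (by fun_prop) (fun t _ => hE t)
    (fun t _ => (Real.exp_pos _).le) h

lemma le_mul_exp_of_deriv_le (hab : a ≤ b) (hf : ∀ t ∈ Icc a b, HasDerivAt f (f' t) t)
    (h : ∀ t ∈ Icc a b, f' t ≤ K * f t) : f b ≤ f a * Real.exp (K * (b - a)) := by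
  have hneg := le_mul_exp_of_neg_mul_le_deriv (K := -K) hab (HasDerivAt.continuousOn hf).neg
    (fun t ht => (hf t (Ioo_subset_Icc_self ht)).neg)
    (fun t ht => by simpa using h t (Ioo_subset_Icc_self ht))
  have hexp : Real.exp (-K * (b - a)) * Real.exp (K * (b - a)) = 1 := by
    rw [← Real.exp_add]; simp
  calc f b = f b * Real.exp (-K * (b - a)) * Real.exp (K * (b - a)) := by
        rw [mul_assoc, hexp, mul_one]
    _ ≤ f a * Real.exp (K * (b - a)) := by gcongr; simpa using hneg

lemma le_mul_rpow_of_mul_div_le_deriv {l : ℝ} (ha : 0 < a) (hab : a ≤ b)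
    (hf : ContinuousOn f (Icc a b)) (hf' : ∀ t ∈ Ioo a b, HasDerivAt f (f' t) t)
    (h : ∀ t ∈ Ioo a b, l * f t / t ≤ f' t) : f a ≤ f b * (a / b) ^ l := by
  have hb : 0 < b := ha.trans_le hab
  have hE : ∀ t ∈ Ioo a b, HasDerivAt (fun s : ℝ => s ^ (-l)) (-(l / t * t ^ (-l))) t := by
    intro t ht
    have ht0 : t ≠ 0 := (ha.trans ht.1).ne'
    refine (Real.hasDerivAt_rpow_const (Or.inl ht0)).congr_deriv ?_
    rw [Real.rpow_sub_one ht0]; ring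
  have key := mul_le_mul_of_integrating_factor hab hf hf'
    (fun t ht => (Real.continuousAt_rpow_const t (-l)
      (Or.inl (ha.trans_le ht.1).ne')).continuousWithinAt) hE
    (fun t ht => Real.rpow_nonneg (ha.trans ht.1).le _)
    (fun t ht => (div_mul_eq_mul_div l t (f t)).trans_le (h t ht))
  rw [Real.rpow_neg ha.le, Real.rpow_neg hb.le, ← div_eq_mul_inv, ← div_eq_mul_inv,
    div_le_iff₀ (Real.rpow_pos_of_pos ha l)] at key
  rwa [Real.div_rpow ha.le hb.le, ← mul_div_assoc, ← div_mul_eq_mul_div]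

lemma exists_inverse_of_deriv_neg {N : ℝ → ℝ} (hab : a ≤ b)
    (hf : ∀ t ∈ Icc a b, HasDerivAt f (-N t) t) (hN : ∀ t ∈ Icc a b, 0 < N t) :
    ∃ τ : ℝ → ℝ, (∀ x ∈ Icc (f b) (f a), τ x ∈ Icc a b ∧ f (τ x) = x) ∧
      (∀ t ∈ Icc a b, τ (f t) = t) ∧ ContinuousOn τ (Icc (f b) (f a)) ∧
      ∀ x ∈ Ioo (f b) (f a), HasDerivAt τ (-(N (τ x))⁻¹) x := by
  have hcont : ContinuousOn f (Icc a b) := HasDerivAt.continuousOn hf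
  have hanti : StrictAntiOn f (Icc a b) :=
    strictAntiOn_of_hasDerivWithinAt_neg (convex_Icc a b) hcont
      (fun t ht => (hf t (interior_subset ht)).hasDerivWithinAt)
      (fun t ht => neg_lt_zero.2 (hN t (interior_subset ht)))
  have hsurj : ∀ x ∈ Icc (f b) (f a), ∃ t ∈ Icc a b, f t = x :=
    fun x hx => intermediate_value_Icc' hab hcont hx
  choose! τ hτ hfτ using hsurj
  have hτf : ∀ t ∈ Icc a b, τ (f t) = t := fun t ht =>
    have hft : f t ∈ Icc (f b) (f a) :=
      ⟨hanti.antitoneOn ht (right_mem_Icc.2 hab) ht.2,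
        hanti.antitoneOn (left_mem_Icc.2 hab) ht ht.1⟩
    hanti.injOn (hτ _ hft) ht (hfτ _ hft)
  have hτcont : ContinuousOn τ (Icc (f b) (f a)) := by
    refine continuousOn_iff_isClosed.2 fun C hC => ⟨f '' (C ∩ Icc a b), ?_, ?_⟩
    · exact ((isCompact_Icc.inter_left hC).image_of_continuousOn
        (hcont.mono inter_subset_right)).isClosed
    · ext x
      constructor
      · exact fun ⟨hxC, hx⟩ => ⟨⟨τ x, ⟨hxC, hτ x hx⟩, hfτ x hx⟩, hx⟩
      · rintro ⟨⟨s, ⟨hsC, hs⟩, rfl⟩, hx⟩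
        exact ⟨by rwa [mem_preimage, hτf s hs], hx⟩
  refine ⟨τ, fun x hx => ⟨hτ x hx, hfτ x hx⟩, hτf, hτcont, fun x hx => ?_⟩
  have hx' := Ioo_subset_Icc_self hx
  have hnhds : Icc (f b) (f a) ∈ 𝓝 x := Icc_mem_nhds hx.1 hx.2
  rw [neg_inv]
  exact HasDerivAt.of_local_left_inverse (hτcont.continuousAt hnhds) (hf _ (hτ x hx'))
    (neg_ne_zero.2 (hN _ (hτ x hx')).ne') (eventually_of_mem hnhds hfτ)

end DifferentialInequalities

/-! ### Half systems -/

/-- Constants witnessing that `R` decays at `+∞` like `z ^ (-k)` and is, for `1 ≤ z`, a Lipschitz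
function of `z⁻¹`. -/
structure AlgebraicTail (R : ℝ → ℝ) (k : ℕ) where
  cLow : ℝ
  cHigh : ℝ
  L : ℝ
  cLow_pos : 0 < cLow
  cHigh_pos : 0 < cHigh
  L_nonneg : 0 ≤ L
  low_le : ∀ z, 1 ≤ z → cLow * (z⁻¹) ^ k ≤ R z
  le_high : ∀ z, 1 ≤ z → R z ≤ cHigh * (z⁻¹) ^ k
  abs_sub_le : ∀ z₁ z₂, 1 ≤ z₁ → 1 ≤ z₂ → |R z₁ - R z₂| ≤ L * |z₁⁻¹ - z₂⁻¹|

/-- The system on one side of the switching line `x = 1`, in the coordinates in which the limiting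
orbit leaves the corner `(0, v₀)` and runs into the corner `(0, 0)`. The right side is
`x = 1 + u`, `y = 1 / (α + β) + v` (so `σ = 1`, `g₀ = α + β`, `R = β (1 - φ)`), the left side is
`x = 1 - u`, `y = 1 / α - v` (so `σ = -1`, `g₀ = α`, `R z = β φ (-z)`). Here `R` is the deviation of
the sigmoid from its limit, with an algebraic tail of order `k`, and `(U, V)` is the limiting
orbit. -/
structure HalfSystem where
  g₀ : ℝ
  σ : ℝ
  gMin : ℝ
  gMax : ℝ
  yMin : ℝ
  yMax : ℝ
  v₀ : ℝ
  k : ℕ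
  R : ℝ → ℝ
  R' : ℝ → ℝ
  U : ℝ → ℝ
  V : ℝ → ℝ
  one_le_k : 1 ≤ k
  g₀_pos : 0 < g₀
  σ_eq : σ = 1 ∨ σ = -1
  gMin_pos : 0 < gMin
  yMin_pos : 0 < yMin
  yMin_le_yMax : yMin ≤ yMax
  v₀_pos : 0 < v₀
  hasDerivAt_R : ∀ z, HasDerivAt R (R' z) z
  R'_nonpos : ∀ z, R' z ≤ 0
  R_pos : ∀ z, 0 < R z
  gMin_le : ∀ z, gMin ≤ g₀ - σ * R z
  le_gMax : ∀ z, g₀ - σ * R z ≤ gMax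
  tail : AlgebraicTail R k
  hasDerivAt_U : ∀ t, HasDerivAt U (g₀ * V t - U t) t
  hasDerivAt_V : ∀ t, HasDerivAt V (-(g₀ * V t)) t
  U_zero : U 0 = 0
  V_zero : V 0 = v₀
  tendsto_U : Tendsto U atTop (𝓝 0)
  tendsto_V : Tendsto V atTop (𝓝 0)

namespace HalfSystem

/-- The original coordinate `y` in terms of the half-system coordinate `v`. -/
noncomputable def y (S : HalfSystem) (v : ℝ) : ℝ := 1 / S.g₀ + S.σ * v

/-- The speed `-u̇` at which a solution approaches and crosses the switching line. -/
noncomputable def speed (S : HalfSystem) (ε u v : ℝ) : ℝ :=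
  u + S.R (u / ε) * S.y v - S.g₀ * v

/-- The constant `M` such that `u + v ≤ (M - 1) δ` once a solution has entered the layer
`u ≤ δ`. -/
noncomputable def layerConst (S : HalfSystem) : ℝ := 2 + (1 + S.tail.cHigh * S.yMax) / S.g₀

/-- A lower bound for the speed on the far side `u ≤ 0` of the switching line. -/
noncomputable def crossingSpeed (S : HalfSystem) : ℝ := S.R 0 * S.yMin / 2

/-- Forward solutions `(u, v)` of the half system with perturbation parameters `e` and `μ` that
stay in the strip `yMin ≤ y ≤ yMax`. -/
structure IsSolution (S : HalfSystem) (ε e μ : ℝ) (u v : ℝ → ℝ) : Prop where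
  hasDerivAt_u : ∀ t, 0 ≤ t → HasDerivAt u (-(S.speed ε (u t) (v t))) t
  hasDerivAt_v : ∀ t, 0 ≤ t → HasDerivAt v (e - μ * v t - u t + S.speed ε (u t) (v t)) t
  yMin_le : ∀ t, 0 ≤ t → S.yMin ≤ S.y (v t)
  le_yMax : ∀ t, 0 ≤ t → S.y (v t) ≤ S.yMax

/-- The scaling `ε ^ k = δ ^ (k + 1)`, i.e. `δ = ε ^ (k / (k + 1))` is the width of the layer in
which `R (u / ε)` is of the size of `u`; the perturbations `e` and `μ` are small multiples of
`δ`. -/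
structure Scaling (S : HalfSystem) (ρ δ ε e μ : ℝ) : Prop where
  ρ_pos : 0 < ρ
  ρ_le : ρ ≤ 1 / 6
  ρ_le_layer : (S.g₀ * S.layerConst + 2) * (3 * ρ) ≤ S.tail.cLow * S.yMin
  δ_pos : 0 < δ
  δ_le_one : δ ≤ 1
  δ_le_g₀ : δ ≤ S.g₀
  ε_pos : 0 < ε
  ε_pow : ε ^ S.k = δ ^ (S.k + 1)
  ε_le : ε ≤ 3 * ρ * δ
  abs_e_le : |e| ≤ ρ * δ
  μ_nonneg : 0 ≤ μ
  μ_le : μ ≤ ρ * δ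

section Constants

variable (S : HalfSystem)

lemma R_antitone : Antitone S.R :=
  antitone_of_hasDerivAt_nonpos S.hasDerivAt_R S.R'_nonpos

lemma yMax_pos : 0 < S.yMax := S.yMin_pos.trans_le S.yMin_le_yMax

lemma gMax_pos : 0 < S.gMax := S.gMin_pos.trans_le ((S.gMin_le 0).trans (S.le_gMax 0))

lemma crossingSpeed_pos : 0 < S.crossingSpeed :=
  half_pos (mul_pos (S.R_pos 0) S.yMin_pos)

lemma two_lt_layerConst : 2 < S.layerConst := by
  have := S.g₀_pos; have := S.tail.cHigh_pos; have := S.yMax_pos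
  exact lt_add_of_pos_right 2 (by positivity)

end Constants

variable {S : HalfSystem} {ρ δ ε e μ : ℝ} {u v : ℝ → ℝ}

namespace Scaling

lemma ρδ_pos (P : S.Scaling ρ δ ε e μ) : 0 < ρ * δ := mul_pos P.ρ_pos P.δ_pos

lemma ρδ_le (P : S.Scaling ρ δ ε e μ) : ρ * δ ≤ δ / 6 := by nlinarith [P.ρ_le, P.δ_pos]

lemma div_pow_eq (P : S.Scaling ρ δ ε e μ) : (ε / δ) ^ S.k = δ := by
  rw [div_pow, P.ε_pow, pow_succ, mul_div_cancel_left₀ _ (pow_pos P.δ_pos _).ne']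

lemma ε_le_δ (P : S.Scaling ρ δ ε e μ) : ε ≤ δ := by linarith [P.ε_le, P.ρδ_le, P.δ_pos]

lemma R_le (P : S.Scaling ρ δ ε e μ) {x : ℝ} (hx : δ ≤ x) : S.R (x / ε) ≤ S.tail.cHigh * δ :=
  calc S.R (x / ε) ≤ S.R (δ / ε) := S.R_antitone (div_le_div_of_nonneg_right hx P.ε_pos.le)
    _ ≤ S.tail.cHigh * ((δ / ε)⁻¹) ^ S.k := S.tail.le_high _ ((one_le_div P.ε_pos).2 P.ε_le_δ)
    _ = S.tail.cHigh * δ := by rw [inv_div, P.div_pow_eq]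

lemma le_R_mul_yMin (P : S.Scaling ρ δ ε e μ) {x : ℝ} (hx : x ≤ 3 * ρ * δ) :
    (S.g₀ * S.layerConst + 2) * δ ≤ S.R (x / ε) * S.yMin := by
  have hρ := P.ρ_pos
  have hδ := P.δ_pos
  have hc := S.tail.cLow_pos
  have hy := S.yMin_pos
  have hpow : (3 * ρ)⁻¹ ≤ ((3 * ρ)⁻¹) ^ S.k :=
    le_self_pow₀ ((one_le_inv₀ (by positivity)).2 (by linarith [P.ρ_le]))
      (Nat.one_le_iff_ne_zero.1 S.one_le_k)
  have hinv : (3 * ρ * δ / ε)⁻¹ = ε / δ * (3 * ρ)⁻¹ := by rw [inv_div]; field_simp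
  have htail : S.tail.cLow * (δ * (3 * ρ)⁻¹) ≤ S.R (x / ε) := calc
    S.tail.cLow * (δ * (3 * ρ)⁻¹) ≤ S.tail.cLow * (δ * ((3 * ρ)⁻¹) ^ S.k) := by gcongr
    _ = S.tail.cLow * ((3 * ρ * δ / ε)⁻¹) ^ S.k := by rw [hinv, mul_pow, P.div_pow_eq]
    _ ≤ S.R (3 * ρ * δ / ε) := S.tail.low_le _ ((one_le_div P.ε_pos).2 P.ε_le)
    _ ≤ S.R (x / ε) := S.R_antitone (div_le_div_of_nonneg_right hx P.ε_pos.le)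
  have hlayer : S.g₀ * S.layerConst + 2 ≤ S.tail.cLow * S.yMin * (3 * ρ)⁻¹ := by
    rw [← div_eq_mul_inv, le_div_iff₀ (by positivity)]; exact P.ρ_le_layer
  calc (S.g₀ * S.layerConst + 2) * δ ≤ S.tail.cLow * S.yMin * (3 * ρ)⁻¹ * δ := by gcongr
    _ = S.tail.cLow * (δ * (3 * ρ)⁻¹) * S.yMin := by ring
    _ ≤ S.R (x / ε) * S.yMin := by gcongr

lemma drift_le (P : S.Scaling ρ δ ε e μ) {x : ℝ} (hx : -(2 * ρ * δ / S.g₀) < x) :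
    e - μ * x ≤ 3 / 2 * (ρ * δ) := by
  have hthird : 2 * ρ * δ / S.g₀ ≤ 1 / 3 := by
    rw [div_le_iff₀ S.g₀_pos]; linarith [P.ρδ_le, P.δ_le_g₀]
  have hμx : -μ * x ≤ μ * (1 / 3) := by nlinarith [P.μ_nonneg]
  linarith [(abs_le.1 P.abs_e_le).2, P.μ_le, P.ρδ_pos]

end Scaling

namespace IsSolution

lemma y_pos (H : S.IsSolution ε e μ u v) {t : ℝ} (ht : 0 ≤ t) : 0 < S.y (v t) :=
  S.yMin_pos.trans_le (H.yMin_le t ht)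

lemma continuousOn_u (H : S.IsSolution ε e μ u v) {a b : ℝ} (ha : 0 ≤ a) :
    ContinuousOn u (Icc a b) :=
  HasDerivAt.continuousOn fun t ht => H.hasDerivAt_u t (ha.trans ht.1)

lemma continuousOn_v (H : S.IsSolution ε e μ u v) {a b : ℝ} (ha : 0 ≤ a) :
    ContinuousOn v (Icc a b) :=
  HasDerivAt.continuousOn fun t ht => H.hasDerivAt_v t (ha.trans ht.1)

lemma hasDerivAt_add (H : S.IsSolution ε e μ u v) {t : ℝ} (ht : 0 ≤ t) :
    HasDerivAt (fun s => u s + v s) (e - μ * v t - u t) t :=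
  ((H.hasDerivAt_u t ht).add (H.hasDerivAt_v t ht)).congr_deriv (by ring)

lemma hasDerivAt_speed (H : S.IsSolution ε e μ u v) {t : ℝ} (ht : 0 ≤ t) :
    HasDerivAt (fun s => S.speed ε (u s) (v s))
      ((u t - (e - μ * v t)) * (S.g₀ - S.σ * S.R (u t / ε))
        - S.speed ε (u t) (v t) * (1 + S.R' (u t / ε) / ε * S.y (v t)
          + (S.g₀ - S.σ * S.R (u t / ε)))) t := by
  have hu := H.hasDerivAt_u t ht
  have hv := H.hasDerivAt_v t ht
  have hR : HasDerivAt (fun s => S.R (u s / ε))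
      (S.R' (u t / ε) * (-(S.speed ε (u t) (v t)) / ε)) t :=
    (S.hasDerivAt_R (u t / ε)).comp t (hu.div_const ε)
  have hy : HasDerivAt (fun s => S.y (v s))
      (S.σ * (e - μ * v t - u t + S.speed ε (u t) (v t))) t :=
    (hv.const_mul S.σ).const_add (1 / S.g₀)
  exact ((hu.add (hR.mul hy)).sub (hv.const_mul S.g₀)).congr_deriv (by ring)

lemma R_mul_y_le (H : S.IsSolution ε e μ u v) (P : S.Scaling ρ δ ε e μ) {t : ℝ} (ht : 0 ≤ t)
    (hu : δ ≤ u t) : S.R (u t / ε) * S.y (v t) ≤ S.tail.cHigh * δ * S.yMax :=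
  mul_le_mul (P.R_le hu) (H.le_yMax t ht) (H.y_pos ht).le (mul_pos S.tail.cHigh_pos P.δ_pos).le

lemma neg_lt_v (H : S.IsSolution ε e μ u v) (P : S.Scaling ρ δ ε e μ) (hv₀ : 0 < v 0)
    {t : ℝ} (ht : 0 ≤ t) : -(2 * ρ * δ / S.g₀) < v t := by
  have hρδ := P.ρδ_pos
  have hg := S.g₀_pos
  have hb : 0 < 2 * ρ * δ / S.g₀ := div_pos (by linarith) hg
  have hgb : S.g₀ * (2 * ρ * δ / S.g₀) = 2 * ρ * δ := mul_div_cancel₀ _ hg.ne'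
  set b := 2 * ρ * δ / S.g₀
  have hpos := forall_pos_of_deriv_pos_of_eq_zero (f := fun s => v s + b) (a := 0) (b := t)
    (fun s hs => (H.hasDerivAt_v s hs.1).add_const b) (by linarith)
    (fun s hs hz => by
      have hvs : v s = -b := by linarith
      have hRy := mul_pos (S.R_pos (u s / ε)) (H.y_pos hs.1)
      have hμb := mul_nonneg P.μ_nonneg hb.le
      have he := (abs_le.1 P.abs_e_le).1
      unfold speed
      rw [hvs] at hRy ⊢
      linarith) t ⟨ht, le_rfl⟩
  linarith

/-- Above the level `2 ρ δ` the drift is dominated by `u`, so both the positivity of the speed and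
the decrease of `u + v` persist there. -/
lemma drift_sub_le (H : S.IsSolution ε e μ u v) (P : S.Scaling ρ δ ε e μ) (hv₀ : 0 < v 0)
    {t : ℝ} (ht : 0 ≤ t) (hu : 2 * ρ * δ ≤ u t) : e - μ * v t - u t ≤ -(ρ * δ / 2) := by
  linarith [P.drift_le (H.neg_lt_v P hv₀ ht)]

lemma speed_pos (H : S.IsSolution ε e μ u v) (P : S.Scaling ρ δ ε e μ) (hv₀ : 0 < v 0)
    {a b : ℝ} (ha : 0 ≤ a) (hN : 0 < S.speed ε (u a) (v a))
    (hu : ∀ t ∈ Icc a b, 2 * ρ * δ ≤ u t) : ∀ t ∈ Icc a b, 0 < S.speed ε (u t) (v t) := by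
  refine forall_pos_of_deriv_pos_of_eq_zero (fun t ht => H.hasDerivAt_speed (ha.trans ht.1)) hN
    fun t ht hz => ?_
  have hdrift := H.drift_sub_le P hv₀ (ha.trans ht.1) (hu t ht)
  rw [hz, zero_mul, sub_zero]
  exact mul_pos (by linarith [P.ρδ_pos]) (S.gMin_pos.trans_le (S.gMin_le _))

lemma u_add_v_le (H : S.IsSolution ε e μ u v) (P : S.Scaling ρ δ ε e μ) (hv₀ : 0 < v 0)
    {a b : ℝ} (ha : 0 ≤ a) (hab : a ≤ b) (hu : ∀ t ∈ Icc a b, 2 * ρ * δ ≤ u t) :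
    u b + v b ≤ u a + v a :=
  le_of_forall_deriv_nonpos (f := fun t => u t + v t) hab
    (fun t ht => H.hasDerivAt_add (ha.trans ht.1))
    fun t ht => by linarith [H.drift_sub_le P hv₀ (ha.trans ht.1) (hu t ht), P.ρδ_pos]

lemma u_antitoneOn (H : S.IsSolution ε e μ u v) {a b : ℝ} (ha : 0 ≤ a)
    (hN : ∀ t ∈ Icc a b, 0 ≤ S.speed ε (u t) (v t)) : AntitoneOn u (Icc a b) :=
  fun _ hs _ ht hst => le_of_forall_deriv_nonpos hst
    (fun r hr => H.hasDerivAt_u r (ha.trans (hs.1.trans hr.1)))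
    fun r hr => neg_nonpos.2 (hN r ⟨hs.1.trans hr.1, hr.2.trans ht.2⟩)

/-! ### Descent into the layer and crossing of the switching line -/

lemma exists_hit_two_mul (H : S.IsSolution ε e μ u v) (P : S.Scaling ρ δ ε e μ) (hv₀ : 0 < v 0)
    {T₀ : ℝ} (hT₀ : 0 ≤ T₀) (hu : δ < u T₀) :
    ∃ t₁ ∈ Ioc T₀ (T₀ + 2 * (u T₀ + v T₀ + 1) / (ρ * δ)), u t₁ = 2 * ρ * δ ∧
      ∀ t ∈ Icc T₀ t₁, 2 * ρ * δ ≤ u t := by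
  have hρδ := P.ρδ_pos
  have hρδ' := P.ρδ_le
  have hthird : 2 * ρ * δ / S.g₀ ≤ 1 / 3 := by
    rw [div_le_iff₀ S.g₀_pos]; linarith [P.δ_le_g₀]
  set τ := 2 * (u T₀ + v T₀ + 1) / (ρ * δ)
  have hτ_pos : 0 < τ := div_pos (by linarith [H.neg_lt_v P hv₀ hT₀]) hρδ
  have hhit : ∃ t ∈ Icc T₀ (T₀ + τ), u t ≤ 2 * ρ * δ := by
    by_contra! habove
    have hdecay := le_of_forall_deriv_nonpos (f := fun t => u t + v t + ρ * δ / 2 * t)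
      (a := T₀) (b := T₀ + τ) (by linarith)
      (fun t ht => (H.hasDerivAt_add (hT₀.trans ht.1)).add
        ((hasDerivAt_id t).const_mul (ρ * δ / 2)))
      (fun t ht => by linarith [H.drift_sub_le P hv₀ (hT₀.trans ht.1) (habove t ht).le])
    have hdist : ρ * δ / 2 * τ = u T₀ + v T₀ + 1 := by
      linarith [mul_div_cancel₀ (2 * (u T₀ + v T₀ + 1)) hρδ.ne']
    linarith [habove (T₀ + τ) ⟨by linarith, le_rfl⟩,
      H.neg_lt_v P hv₀ (t := T₀ + τ) (by linarith)]
  obtain ⟨t₁, ht₁, hut₁, habove⟩ :=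
    exists_first_hit (H.continuousOn_u hT₀) (by linarith [P.δ_pos]) hhit
  refine ⟨t₁, ht₁, hut₁, fun t ht => ?_⟩
  rcases ht.2.lt_or_eq with h | rfl
  exacts [(habove t ⟨ht.1, h⟩).le, hut₁.ge]

lemma add_le_of_u_eq (H : S.IsSolution ε e μ u v) (P : S.Scaling ρ δ ε e μ) {t : ℝ}
    (ht : 0 ≤ t) (hu : u t = δ) (hN : 0 < S.speed ε (u t) (v t)) :
    u t + v t ≤ (S.layerConst - 1) * δ := by
  have hRy := H.R_mul_y_le P ht hu.ge
  have hv : v t ≤ (1 + S.tail.cHigh * S.yMax) / S.g₀ * δ := by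
    rw [div_mul_eq_mul_div, le_div_iff₀ S.g₀_pos]
    unfold speed at hN
    linarith
  unfold layerConst
  linarith

lemma exists_descent_to_layer (H : S.IsSolution ε e μ u v) (P : S.Scaling ρ δ ε e μ)
    (hv₀ : 0 < v 0) {T₀ : ℝ} (hT₀ : 0 ≤ T₀) (hN : 0 < S.speed ε (u T₀) (v T₀))
    (hu : δ < u T₀) :
    ∃ t₁ ∈ Ioc T₀ (T₀ + 2 * (u T₀ + v T₀ + 1) / (ρ * δ)), u t₁ = 2 * ρ * δ ∧
      (∀ t ∈ Icc T₀ t₁, 2 * ρ * δ ≤ u t ∧ 0 < S.speed ε (u t) (v t) ∧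
        u t + v t ≤ u T₀ + v T₀) ∧ u t₁ + v t₁ ≤ (S.layerConst - 1) * δ := by
  obtain ⟨t₁, ht₁, hut₁, habove⟩ := H.exists_hit_two_mul P hv₀ hT₀ hu
  have hpos := H.speed_pos P hv₀ hT₀ hN habove
  refine ⟨t₁, ht₁, hut₁, fun t ht => ⟨habove t ht, hpos t ht, H.u_add_v_le P hv₀ hT₀ ht.1
    fun s hs => habove s ⟨hs.1, hs.2.trans ht.2⟩⟩, ?_⟩
  obtain ⟨s, hs, hus⟩ := intermediate_value_Icc' ht₁.1.le (H.continuousOn_u hT₀)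
    (show δ ∈ Icc (u t₁) (u T₀) from
      ⟨by linarith [P.ρδ_le, P.δ_pos], hu.le⟩)
  exact (H.u_add_v_le P hv₀ (hT₀.trans hs.1) hs.2
    fun t ht => habove t ⟨hs.1.trans ht.1, ht.2⟩).trans
    (H.add_le_of_u_eq P (hT₀.trans hs.1) hus (hpos s hs))

variable {u₀ : ℝ}

lemma crossingSpeed_le (H : S.IsSolution ε e μ u v) (P : S.Scaling ρ δ ε e μ) {t : ℝ}
    (ht : 0 ≤ t) (hu₀ : u₀ + S.g₀ * (S.layerConst * δ + 2 * u₀) ≤ S.crossingSpeed)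
    (hlow : -u₀ ≤ u t) (hv : 2 * u t + v t ≤ S.layerConst * δ) (hneg : u t ≤ 0) :
    S.crossingSpeed ≤ S.speed ε (u t) (v t) := by
  have hR : S.R 0 * S.yMin ≤ S.R (u t / ε) * S.y (v t) :=
    mul_le_mul (S.R_antitone (div_nonpos_of_nonpos_of_nonneg hneg P.ε_pos.le)) (H.yMin_le t ht)
      S.yMin_pos.le (S.R_pos _).le
  have hgv : S.g₀ * v t ≤ S.g₀ * (S.layerConst * δ + 2 * u₀) :=
    mul_le_mul_of_nonneg_left (by linarith) S.g₀_pos.le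
  unfold crossingSpeed at hu₀ ⊢
  unfold speed
  linarith

lemma two_mul_le_speed (H : S.IsSolution ε e μ u v) (P : S.Scaling ρ δ ε e μ) {t : ℝ}
    (ht : 0 ≤ t) (hu₀ : u₀ + S.g₀ * (S.layerConst * δ + 2 * u₀) ≤ S.crossingSpeed)
    (hδ : 2 * δ ≤ S.crossingSpeed) (hlow : -u₀ ≤ u t) (hhigh : u t ≤ 3 * ρ * δ)
    (hv : 2 * u t + v t ≤ S.layerConst * δ) : 2 * δ ≤ S.speed ε (u t) (v t) := by
  rcases le_total (u t) 0 with hneg | hnonneg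
  · exact hδ.trans (H.crossingSpeed_le P ht hu₀ hlow hv hneg)
  · have hRy : S.R (u t / ε) * S.yMin ≤ S.R (u t / ε) * S.y (v t) :=
      mul_le_mul_of_nonneg_left (H.yMin_le t ht) (S.R_pos _).le
    have hgv : S.g₀ * v t ≤ S.g₀ * (S.layerConst * δ) :=
      mul_le_mul_of_nonneg_left (by linarith) S.g₀_pos.le
    unfold speed
    linarith [P.le_R_mul_yMin hhigh]

/-- In the layer the speed is so large that `u` and `2 u + v` decrease; a bootstrap keeps the
solution inside the region where this is true. -/
lemma stays_in_layer (H : S.IsSolution ε e μ u v) (P : S.Scaling ρ δ ε e μ) (hv₀ : 0 < v 0)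
    {t₁ b : ℝ} (ht₁ : 0 ≤ t₁) (hut₁ : u t₁ = 2 * ρ * δ)
    (hw : u t₁ + v t₁ ≤ (S.layerConst - 1) * δ)
    (hu₀ : u₀ + S.g₀ * (S.layerConst * δ + 2 * u₀) ≤ S.crossingSpeed)
    (hδ : 2 * δ ≤ S.crossingSpeed) (hu₀δ : u₀ + δ < S.crossingSpeed)
    (hlow : ∀ t ∈ Icc t₁ b, -u₀ ≤ u t) :
    ∀ t ∈ Icc t₁ b, u t < 3 * ρ * δ ∧ 2 * u t + v t < S.layerConst * δ := by
  have hρδ := P.ρδ_pos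
  have hρδ' := P.ρδ_le
  suffices h : ∀ t ∈ Icc t₁ b,
      0 < min (3 * ρ * δ - u t) (S.layerConst * δ - (2 * u t + v t)) from
    fun t ht => by simpa only [lt_min_iff, sub_pos] using h t ht
  refine forall_pos_of_bootstrap ?_ (lt_min (by linarith) (by linarith)) fun t ht hnonneg => ?_
  · exact (continuousOn_const.sub (H.continuousOn_u ht₁)).inf (continuousOn_const.sub
      ((continuousOn_const.mul (H.continuousOn_u ht₁)).add (H.continuousOn_v ht₁)))
  have hin : ∀ s ∈ Icc t₁ t, u s ≤ 3 * ρ * δ ∧ 2 * u s + v s ≤ S.layerConst * δ := fun s hs => by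
    simpa only [le_min_iff, sub_nonneg] using hnonneg s hs
  have hlow' : ∀ s ∈ Icc t₁ t, -u₀ ≤ u s := fun s hs => hlow s ⟨hs.1, hs.2.trans ht.2⟩
  have hspeed : ∀ s ∈ Icc t₁ t, 2 * δ ≤ S.speed ε (u s) (v s) := fun s hs =>
    H.two_mul_le_speed P (ht₁.trans hs.1) hu₀ hδ (hlow' s hs) (hin s hs).1 (hin s hs).2
  have hu : u t ≤ u t₁ := H.u_antitoneOn ht₁ (fun s hs => by linarith [hspeed s hs])
    (left_mem_Icc.2 ht.1.le) (right_mem_Icc.2 ht.1.le) ht.1.le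
  have hw' : u t + v t + u t ≤ u t₁ + v t₁ + u t₁ :=
    le_of_forall_deriv_nonpos (f := fun s => u s + v s + u s) ht.1.le
      (fun s hs => (H.hasDerivAt_add (ht₁.trans hs.1)).add (H.hasDerivAt_u s (ht₁.trans hs.1)))
      (fun s hs => by
        have hs0 := ht₁.trans hs.1
        have hdrift := P.drift_le (H.neg_lt_v P hv₀ hs0)
        rcases le_total (u s) 0 with hneg | hnonneg
        · linarith [H.crossingSpeed_le P hs0 hu₀ (hlow' s hs) (hin s hs).2 hneg, hlow' s hs]
        · linarith [hspeed s hs])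
  exact lt_min (by linarith) (by linarith)

lemma exists_crossing (H : S.IsSolution ε e μ u v) (P : S.Scaling ρ δ ε e μ) (hv₀ : 0 < v 0)
    {t₁ : ℝ} (ht₁ : 0 ≤ t₁) (hut₁ : u t₁ = 2 * ρ * δ)
    (hw : u t₁ + v t₁ ≤ (S.layerConst - 1) * δ) (hu₀_pos : 0 < u₀) (hu₀_le : u₀ ≤ 1)
    (hu₀ : u₀ + S.g₀ * (S.layerConst * δ + 2 * u₀) ≤ S.crossingSpeed)
    (hδ : 2 * δ ≤ S.crossingSpeed) (hu₀δ : u₀ + δ < S.crossingSpeed) :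
    ∃ te ∈ Ioc t₁ (t₁ + 1 / δ), u te = -u₀ ∧ (∀ t ∈ Ico t₁ te, -u₀ < u t) ∧
      ∀ t ∈ Icc t₁ te, u t ≤ 2 * ρ * δ ∧ 2 * δ ≤ S.speed ε (u t) (v t) ∧
        (u t ≤ 0 → S.crossingSpeed ≤ S.speed ε (u t) (v t)) ∧
        v t ≤ S.layerConst * δ + 2 * u₀ := by
  have hρδ := P.ρδ_pos
  have hδ_pos := P.δ_pos
  have hstay {b : ℝ} := H.stays_in_layer (b := b) P hv₀ ht₁ hut₁ hw hu₀ hδ hu₀δ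
  have hspeed {b : ℝ} (hlow : ∀ t ∈ Icc t₁ b, -u₀ ≤ u t) (t : ℝ) (ht : t ∈ Icc t₁ b) :
      2 * δ ≤ S.speed ε (u t) (v t) :=
    H.two_mul_le_speed P (ht₁.trans ht.1) hu₀ hδ (hlow t ht) (hstay hlow t ht).1.le
      (hstay hlow t ht).2.le
  have hhit : ∃ t ∈ Icc t₁ (t₁ + 1 / δ), u t ≤ -u₀ := by
    by_contra! habove
    have hinv : 0 < 1 / δ := by positivity
    have hdecay := le_of_forall_deriv_nonpos (f := fun t => u t + 2 * δ * t)
      (a := t₁) (b := t₁ + 1 / δ) (by linarith)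
      (fun t ht => (H.hasDerivAt_u t (ht₁.trans ht.1)).add
        ((hasDerivAt_id t).const_mul (2 * δ)))
      (fun t ht => by linarith [hspeed (fun t ht => (habove t ht).le) t ht])
    have hdist : 2 * δ * (1 / δ) = 2 := by field_simp
    linarith [habove (t₁ + 1 / δ) ⟨by linarith, le_rfl⟩, P.δ_le_one, P.ρδ_le]
  obtain ⟨te, hte, hute, habove⟩ :=
    exists_first_hit (H.continuousOn_u ht₁) (by linarith) hhit
  have hlow : ∀ t ∈ Icc t₁ te, -u₀ ≤ u t := fun t ht => by
    rcases ht.2.lt_or_eq with h | rfl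
    exacts [(habove t ⟨ht.1, h⟩).le, hute.ge]
  refine ⟨te, hte, hute, habove, fun t ht => ⟨?_, hspeed hlow t ht,
    H.crossingSpeed_le P (ht₁.trans ht.1) hu₀ (hlow t ht) (hstay hlow t ht).2.le, ?_⟩⟩
  · exact hut₁ ▸ H.u_antitoneOn ht₁ (fun s hs => by linarith [hspeed hlow s hs])
      (left_mem_Icc.2 hte.1.le) ht ht.1
  · linarith [(hstay hlow t ht).2, hlow t ht]

end IsSolution

/-! ### One passage from `u = u₀` to `u = -u₀` -/

section Constants

variable (S : HalfSystem)

/-- A lower bound for `v` up to time `t` along a passage. -/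
noncomputable def vLow (t : ℝ) : ℝ := S.v₀ / 2 * Real.exp (-(2 * S.g₀ * t))

/-- A lower bound for `u` up to time `T₀` along a passage that starts at `u₀`. -/
noncomputable def uLow (T₀ u₀ : ℝ) : ℝ := min (u₀ / 2) (S.g₀ * S.vLow T₀ / 4)

/-- A bound for `|v|` in the strip `yMin ≤ y ≤ yMax`. -/
noncomputable def vBound : ℝ := S.yMax + 1 / S.g₀

/-- The deviation of the vector field from its limit is at most `errorConst * δ` where `δ ≤ u`. -/
noncomputable def errorConst : ℝ := S.tail.cHigh * S.yMax + 1 + S.vBound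

/-- The speed `-U̇` of the limiting orbit. -/
noncomputable def limitSpeed (t : ℝ) : ℝ := S.U t - S.g₀ * S.V t

/-- The constant `C` such that `speed ≤ C u` where `δ ≤ u`. -/
noncomputable def speedConst : ℝ := S.tail.cHigh * S.yMax + 2

/-- The exponent `l` of the contraction factor `(δ / u) ^ l` gained on the way from `u` to `δ`. -/
noncomputable def contractionExp : ℝ := S.gMin / S.speedConst ^ 2

/-- A bound for `|d(u + v) / du|` along solutions near time `T₀`. -/
noncomputable def slopeBound (T₀ : ℝ) : ℝ := 4 * (S.U T₀ + 3) / S.limitSpeed T₀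

/-- The logarithm of the expansion that may occur below the level `2 ρ δ`. -/
noncomputable def expansionConst : ℝ := S.gMax / 2 + 4 * S.gMax / S.crossingSpeed ^ 2

/-- A bound for the duration of a passage. -/
noncomputable def passageTime (T₀ ρ δ : ℝ) : ℝ :=
  T₀ + 2 * (S.U T₀ + S.V T₀ + 3) / (ρ * δ) + 1 / δ

end Constants

/-- The time `T₀` after which the limiting orbit is `c / 8`-close to its end point and the
tolerance `r` with which solutions have to follow it up to `T₀`. -/
structure Window (S : HalfSystem) (c T₀ r : ℝ) : Prop where
  T₀_pos : 0 < T₀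
  U_pos : 0 < S.U T₀
  limitSpeed_pos : 0 < S.limitSpeed T₀
  abs_U_le : ∀ t, T₀ ≤ t → |S.U t| ≤ c / 8
  abs_V_le : ∀ t, T₀ ≤ t → |S.V t| ≤ c / 8
  r_pos : 0 < r
  r_le_one : r ≤ 1
  r_le_c : r ≤ c / 8
  r_le_U : r ≤ S.U T₀ / 2
  r_le_limitSpeed : (1 + S.g₀) * r ≤ S.limitSpeed T₀ / 2
  two_mul_r_le_limitSpeed : (1 + S.gMax) * (2 * r) ≤ S.limitSpeed T₀ / 4

/-- Smallness of the position `u₀` of the entry section. -/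
structure EntrySmall (S : HalfSystem) (c T₀ r u₀ : ℝ) : Prop where
  u₀_pos : 0 < u₀
  u₀_le_one : u₀ ≤ 1
  u₀_le_c : u₀ ≤ c / 8
  u₀_le_v₀ : 7 * u₀ ≤ S.v₀
  u₀_lt_crossingSpeed : u₀ + S.g₀ * (2 * u₀) < S.crossingSpeed
  exp_le : 11 * u₀ ^ 2 * Real.exp ((S.g₀ + 1) * T₀) ≤ r ^ 2

/-- Smallness of the layer width `δ`. -/
structure LayerSmall (S : HalfSystem) (T₀ u₀ δ : ℝ) : Prop where
  δ_le_uLow : δ ≤ S.uLow T₀ u₀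
  δ_lt_U : δ < S.U T₀ / 2
  δ_le_u₀ : δ ≤ S.g₀ * u₀
  layerConst_mul_lt : S.layerConst * δ < u₀
  two_mul_le_crossingSpeed : 2 * δ ≤ S.crossingSpeed
  add_lt_crossingSpeed : u₀ + δ < S.crossingSpeed
  entry_le_crossingSpeed : u₀ + S.g₀ * (S.layerConst * δ + 2 * u₀) ≤ S.crossingSpeed
  cHigh_mul_le_one : S.tail.cHigh * δ ≤ 1
  cHigh_mul_le_vLow : S.tail.cHigh * δ * S.yMax ≤ S.g₀ * S.vLow T₀ / 4
  drift_le_vLow : δ * (1 + S.v₀) ≤ S.g₀ * S.vLow T₀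
  error_le : 2 * (S.errorConst * δ) ^ 2 ≤ u₀ ^ 2
  lipschitz_le : S.tail.L * δ * S.yMax ≤ S.uLow T₀ u₀ ^ 2
  contraction_le : Real.exp S.expansionConst * (δ / (S.U T₀ / 2)) ^ S.contractionExp *
    (2 * (1 + S.slopeBound T₀) ^ 2 * Real.exp ((S.g₀ + 4) * T₀)) ≤ 1 / 4

/-- The smallness conditions under which passages are controlled with accuracy `c`. -/
structure Thresholds (S : HalfSystem) (c T₀ r u₀ δ : ℝ) : Prop extends
  S.Window c T₀ r, S.EntrySmall c T₀ r u₀, S.LayerSmall T₀ u₀ δ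

/-- Solutions that start on the section `u = u₀` near the initial point of the limiting orbit. -/
structure IsEntering (S : HalfSystem) (u₀ ε e μ : ℝ) (u v : ℝ → ℝ) : Prop extends
  S.IsSolution ε e μ u v where
  u_zero : u 0 = u₀
  abs_v_zero_sub_le : |v 0 - S.v₀| ≤ 3 * u₀

/-- A solution reaches `u = -u₀` for the first time at `te`; from time `T₀` on it descends with
definite speed and stays near the corner `(0, 0)`. -/
structure Descent (S : HalfSystem) (c u₀ T₀ ρ δ ε te : ℝ) (u v : ℝ → ℝ) : Prop where
  T₀_lt : T₀ < te
  le_passageTime : te ≤ S.passageTime T₀ ρ δ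
  u_te : u te = -u₀
  neg_lt_u : ∀ t ∈ Ico 0 te, -u₀ < u t
  abs_v_te_lt : |v te| < 3 * u₀
  speed_pos : ∀ t ∈ Icc T₀ te, 0 < S.speed ε (u t) (v t)
  two_mul_le_speed : ∀ t ∈ Icc T₀ te, u t < 2 * ρ * δ → 2 * δ ≤ S.speed ε (u t) (v t)
  crossingSpeed_le : ∀ t ∈ Icc T₀ te, u t ≤ 0 → S.crossingSpeed ≤ S.speed ε (u t) (v t)
  near_corner : ∀ t ∈ Icc T₀ te, |u t| ≤ 3 / 4 * c ∧ |v t| ≤ 3 / 4 * c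

section Constants

variable (S : HalfSystem)

lemma vLow_pos (t : ℝ) : 0 < S.vLow t := mul_pos (half_pos S.v₀_pos) (Real.exp_pos _)

lemma vLow_zero : S.vLow 0 = S.v₀ / 2 := by
  simp only [vLow, mul_zero, neg_zero, Real.exp_zero, mul_one]

lemma vLow_antitone : Antitone S.vLow := fun s t hst => by
  have := S.g₀_pos; have := S.v₀_pos
  unfold vLow
  gcongr

lemma hasDerivAt_vLow (t : ℝ) : HasDerivAt S.vLow (-(2 * S.g₀) * S.vLow t) t :=
  ((((hasDerivAt_id t).const_mul (2 * S.g₀)).neg).exp.const_mul (S.v₀ / 2)).congr_deriv (by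
    unfold vLow; simp only [id_eq, Pi.neg_apply]; ring)

lemma vBound_pos : 0 < S.vBound :=
  add_pos S.yMax_pos (one_div_pos.2 S.g₀_pos)

end Constants

variable {c T₀ r u₀ : ℝ}

lemma IsSolution.abs_v_le (H : S.IsSolution ε e μ u v) {t : ℝ} (ht : 0 ≤ t) :
    |v t| ≤ S.vBound := by
  have hy := H.y_pos ht
  have hyMax := H.le_yMax t ht
  have hinv := one_div_pos.2 S.g₀_pos
  unfold y at hy hyMax
  unfold vBound
  rw [abs_le]
  rcases S.σ_eq with h | h <;> rw [h] at hy hyMax <;>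
    constructor <;> linarith [S.yMax_pos]

lemma IsSolution.abs_drift_le (H : S.IsSolution ε e μ u v) (P : S.Scaling ρ δ ε e μ) {t : ℝ}
    (ht : 0 ≤ t) : |e - μ * v t| ≤ (1 + S.vBound) * δ := by
  have hρδ : ρ * δ ≤ δ := by linarith [P.ρδ_le, P.δ_pos]
  calc |e - μ * v t| ≤ |e| + μ * |v t| := by
        rw [← abs_of_nonneg P.μ_nonneg, ← abs_mul, abs_of_nonneg P.μ_nonneg]
        exact abs_sub _ _
    _ ≤ δ + δ * S.vBound := add_le_add (P.abs_e_le.trans hρδ)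
        (mul_le_mul (P.μ_le.trans hρδ) (H.abs_v_le ht) (abs_nonneg _) P.δ_pos.le)
    _ = (1 + S.vBound) * δ := by ring

namespace Thresholds

lemma uLow_pos (C : S.Thresholds c T₀ r u₀ δ) : 0 < S.uLow T₀ u₀ :=
  lt_min (half_pos C.u₀_pos) (div_pos (mul_pos S.g₀_pos (S.vLow_pos T₀)) (by norm_num))

lemma two_mul_ρδ_le (C : S.Thresholds c T₀ r u₀ δ) (P : S.Scaling ρ δ ε e μ) :
    2 * ρ * δ ≤ u₀ := by
  nlinarith [C.layerConst_mul_lt, S.two_lt_layerConst, P.ρδ_le, P.δ_pos]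

lemma two_mul_ρδ_div_le (C : S.Thresholds c T₀ r u₀ δ) (P : S.Scaling ρ δ ε e μ) :
    2 * ρ * δ / S.g₀ ≤ u₀ / 3 := by
  rw [div_le_iff₀ S.g₀_pos]
  linarith [C.δ_le_u₀, P.ρδ_le]

lemma slopeBound_nonneg (C : S.Thresholds c T₀ r u₀ δ) : 0 ≤ S.slopeBound T₀ := by
  have := C.U_pos; have := C.limitSpeed_pos
  unfold slopeBound
  positivity

end Thresholds

/-! ### Closeness to the limiting orbit -/

lemma sq_dist_deriv_le {g p q a b ω : ℝ} (hg : 0 ≤ g) (hp : p ^ 2 ≤ ω ^ 2) (hq : q ^ 2 ≤ ω ^ 2) :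
    2 * a * (-a - p + g * b) + 2 * b * (q - g * b) ≤ (g + 1) * (a ^ 2 + b ^ 2) + 2 * ω ^ 2 := by
  nlinarith [mul_nonneg hg (sq_nonneg (a - b)), mul_nonneg hg (sq_nonneg b),
    sq_nonneg (a + p), sq_nonneg (b - q), sq_nonneg a]

namespace IsEntering

lemma half_v₀_lt (E : S.IsEntering u₀ ε e μ u v) (C : S.Thresholds c T₀ r u₀ δ) :
    S.v₀ / 2 < v 0 := by
  linarith [(abs_le.1 E.abs_v_zero_sub_le).1, C.u₀_le_v₀, C.u₀_pos]

lemma v_zero_pos (E : S.IsEntering u₀ ε e μ u v) (C : S.Thresholds c T₀ r u₀ δ) : 0 < v 0 :=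
  (half_pos S.v₀_pos).trans (E.half_v₀_lt C)

lemma vLow_lt (E : S.IsEntering u₀ ε e μ u v) (P : S.Scaling ρ δ ε e μ)
    (C : S.Thresholds c T₀ r u₀ δ) : ∀ t ∈ Icc 0 T₀, S.vLow T₀ < v t := by
  have hpos := forall_pos_of_deriv_pos_of_eq_zero (f := fun t => v t - S.vLow t) (a := 0) (b := T₀)
    (fun t ht => (E.hasDerivAt_v t ht.1).sub (S.hasDerivAt_vLow t))
    (by rw [S.vLow_zero]; linarith [E.half_v₀_lt C])
    (fun t ht hz => by
      have hvt : v t = S.vLow t := sub_eq_zero.1 hz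
      have hRy := mul_pos (S.R_pos (u t / ε)) (E.y_pos ht.1)
      have hμv : μ * S.vLow t ≤ ρ * δ * S.v₀ :=
        mul_le_mul P.μ_le (by linarith [S.vLow_antitone ht.1, S.vLow_zero, S.v₀_pos])
          (S.vLow_pos t).le P.ρδ_pos.le
      have hgv : S.g₀ * S.vLow T₀ ≤ S.g₀ * S.vLow t :=
        mul_le_mul_of_nonneg_left (S.vLow_antitone ht.2) S.g₀_pos.le
      have hρδv := mul_le_mul_of_nonneg_right P.ρδ_le S.v₀_pos.le
      have hδv := mul_pos P.δ_pos S.v₀_pos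
      unfold speed
      rw [hvt] at hRy ⊢
      linarith [(abs_le.1 P.abs_e_le).1, C.drift_le_vLow, P.ρδ_le, P.δ_pos])
  intro t ht
  linarith [hpos t ht, S.vLow_antitone ht.2]

lemma uLow_lt (E : S.IsEntering u₀ ε e μ u v) (P : S.Scaling ρ δ ε e μ)
    (C : S.Thresholds c T₀ r u₀ δ) : ∀ t ∈ Icc 0 T₀, S.uLow T₀ u₀ < u t := by
  have hm₁ : S.uLow T₀ u₀ ≤ u₀ / 2 := min_le_left _ _
  have hm₂ : S.uLow T₀ u₀ ≤ S.g₀ * S.vLow T₀ / 4 := min_le_right _ _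
  have hpos := forall_pos_of_deriv_pos_of_eq_zero (f := fun t => u t - S.uLow T₀ u₀) (a := 0)
    (b := T₀) (fun t ht => (E.hasDerivAt_u t ht.1).sub_const _)
    (by rw [E.u_zero]; linarith [C.u₀_pos])
    (fun t ht hz => by
      have hut : u t = S.uLow T₀ u₀ := sub_eq_zero.1 hz
      have hRy := E.R_mul_y_le P ht.1 (C.δ_le_uLow.trans hut.ge)
      have hgv : S.g₀ * S.vLow T₀ < S.g₀ * v t :=
        mul_lt_mul_of_pos_left (E.vLow_lt P C t ht) S.g₀_pos
      unfold speed
      linarith [C.cHigh_mul_le_vLow, mul_pos S.g₀_pos (S.vLow_pos T₀)])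
  exact fun t ht => sub_pos.1 (hpos t ht)

lemma δ_le_u (E : S.IsEntering u₀ ε e μ u v) (P : S.Scaling ρ δ ε e μ)
    (C : S.Thresholds c T₀ r u₀ δ) {t : ℝ} (ht : t ∈ Icc 0 T₀) : δ ≤ u t :=
  C.δ_le_uLow.trans (E.uLow_lt P C t ht).le

lemma deriv_sq_dist_le (E : S.IsEntering u₀ ε e μ u v) (P : S.Scaling ρ δ ε e μ)
    (C : S.Thresholds c T₀ r u₀ δ) {t : ℝ} (ht : t ∈ Icc 0 T₀) :
    2 * (u t - S.U t) * (-S.speed ε (u t) (v t) - (S.g₀ * S.V t - S.U t)) +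
        2 * (v t - S.V t) * (e - μ * v t - u t + S.speed ε (u t) (v t) - -(S.g₀ * S.V t)) ≤
      (S.g₀ + 1) * ((u t - S.U t) ^ 2 + (v t - S.V t) ^ 2) + 2 * (S.errorConst * δ) ^ 2 := by
  have hp := E.R_mul_y_le P ht.1 (E.δ_le_u P C ht)
  have hp₀ := mul_pos (S.R_pos (u t / ε)) (E.y_pos ht.1)
  obtain ⟨hd₁, hd₂⟩ := abs_le.1 (E.abs_drift_le P ht.1)
  have hω : S.errorConst * δ = S.tail.cHigh * δ * S.yMax + (1 + S.vBound) * δ := by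
    unfold errorConst; ring
  have hvδ := mul_pos (by linarith [S.vBound_pos] : 0 < 1 + S.vBound) P.δ_pos
  convert sq_dist_deriv_le (a := u t - S.U t) (b := v t - S.V t) S.g₀_pos.le
    (pow_le_pow_left₀ hp₀.le (by linarith : _ ≤ S.errorConst * δ) 2)
    (sq_le_sq' (by linarith : -(S.errorConst * δ) ≤ e - μ * v t + S.R (u t / ε) * S.y (v t))
      (by linarith)) using 1
  unfold speed
  ring

lemma close (E : S.IsEntering u₀ ε e μ u v) (P : S.Scaling ρ δ ε e μ)
    (C : S.Thresholds c T₀ r u₀ δ) : ∀ t ∈ Icc 0 T₀, |u t - S.U t| ≤ r ∧ |v t - S.V t| ≤ r := by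
  intro t ht
  have hg := S.g₀_pos
  set ω := S.errorConst * δ
  have hω : 2 * ω ^ 2 ≤ u₀ ^ 2 := C.error_le
  have hgronwall := le_mul_exp_of_deriv_le (K := S.g₀ + 1)
    (f := fun s => (u s - S.U s) ^ 2 + (v s - S.V s) ^ 2 + 2 * ω ^ 2) ht.1
    (fun s hs => ((((E.hasDerivAt_u s hs.1).sub (S.hasDerivAt_U s)).pow 2).add
      (((E.hasDerivAt_v s hs.1).sub (S.hasDerivAt_V s)).pow 2)).add_const _)
    (fun s hs => by
      have hdist := E.deriv_sq_dist_le P C ⟨hs.1, hs.2.trans ht.2⟩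
      simp only [Nat.add_one_sub_one, pow_one, Nat.cast_ofNat, Pi.sub_apply]
      nlinarith [sq_nonneg ω])
  have hstart : (u 0 - S.U 0) ^ 2 + (v 0 - S.V 0) ^ 2 + 2 * ω ^ 2 ≤ 11 * u₀ ^ 2 := by
    have hv := sq_le_sq' (abs_le.1 E.abs_v_zero_sub_le).1 (abs_le.1 E.abs_v_zero_sub_le).2
    rw [E.u_zero, S.U_zero, S.V_zero]
    linarith
  have hend : (u t - S.U t) ^ 2 + (v t - S.V t) ^ 2 ≤ r ^ 2 := calc
    _ ≤ (u t - S.U t) ^ 2 + (v t - S.V t) ^ 2 + 2 * ω ^ 2 :=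
      le_add_of_nonneg_right (by positivity)
    _ ≤ _ := hgronwall
    _ ≤ 11 * u₀ ^ 2 * Real.exp ((S.g₀ + 1) * T₀) := by
      rw [sub_zero]
      gcongr
      exact ht.2
    _ ≤ r ^ 2 := C.exp_le
  constructor <;> apply abs_le_of_sq_le_sq _ C.r_pos.le <;>
    linarith [sq_nonneg (u t - S.U t), sq_nonneg (v t - S.V t)]

lemma close_at_T₀ (E : S.IsEntering u₀ ε e μ u v) (P : S.Scaling ρ δ ε e μ)
    (C : S.Thresholds c T₀ r u₀ δ) : |u T₀ - S.U T₀| ≤ r ∧ |v T₀ - S.V T₀| ≤ r :=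
  E.close P C T₀ ⟨C.T₀_pos.le, le_rfl⟩

lemma half_U_le (E : S.IsEntering u₀ ε e μ u v) (P : S.Scaling ρ δ ε e μ)
    (C : S.Thresholds c T₀ r u₀ δ) : S.U T₀ / 2 ≤ u T₀ := by
  linarith [(abs_le.1 (E.close_at_T₀ P C).1).1, C.r_le_U]

lemma half_limitSpeed_le (E : S.IsEntering u₀ ε e μ u v) (P : S.Scaling ρ δ ε e μ)
    (C : S.Thresholds c T₀ r u₀ δ) : S.limitSpeed T₀ / 2 ≤ S.speed ε (u T₀) (v T₀) := by
  obtain ⟨hu, hv⟩ := E.close_at_T₀ P C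
  have hRy := mul_pos (S.R_pos (u T₀ / ε)) (E.y_pos C.T₀_pos.le)
  have hgv : S.g₀ * (v T₀ - S.V T₀) ≤ S.g₀ * r :=
    mul_le_mul_of_nonneg_left (abs_le.1 hv).2 S.g₀_pos.le
  have hr := C.r_le_limitSpeed
  unfold limitSpeed at hr ⊢
  unfold speed
  linarith [(abs_le.1 hu).1]

/-! ### Existence of the descent -/

lemma near_corner_of_add_le (E : S.IsEntering u₀ ε e μ u v) (P : S.Scaling ρ δ ε e μ)
    (C : S.Thresholds c T₀ r u₀ δ) {t : ℝ} (ht : T₀ ≤ t) (hu : 0 ≤ u t)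
    (hadd : u t + v t ≤ u T₀ + v T₀) : |u t| ≤ 3 / 4 * c ∧ |v t| ≤ 3 / 4 * c := by
  obtain ⟨hu₀, hv₀⟩ := E.close_at_T₀ P C
  have hv := E.neg_lt_v P (E.v_zero_pos C) (C.T₀_pos.le.trans ht)
  have hb := C.two_mul_ρδ_div_le P
  have hU := abs_le.1 (C.abs_U_le T₀ le_rfl)
  have hV := abs_le.1 (C.abs_V_le T₀ le_rfl)
  have hr := C.r_le_c
  have hc := C.u₀_le_c
  have hpos := C.u₀_pos
  rw [abs_le] at hu₀ hv₀ ⊢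
  rw [abs_le]
  refine ⟨⟨?_, ?_⟩, ?_, ?_⟩ <;> linarith

lemma near_corner_of_layer (E : S.IsEntering u₀ ε e μ u v) (P : S.Scaling ρ δ ε e μ)
    (C : S.Thresholds c T₀ r u₀ δ) {t : ℝ} (ht : T₀ ≤ t) (hlow : -u₀ ≤ u t)
    (hu : u t ≤ 2 * ρ * δ) (hvt : v t ≤ S.layerConst * δ + 2 * u₀) :
    |u t| ≤ 3 / 4 * c ∧ |v t| ≤ 3 / 4 * c := by
  have hv := E.neg_lt_v P (E.v_zero_pos C) (C.T₀_pos.le.trans ht)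
  have hb := C.two_mul_ρδ_div_le P
  have hρδ := C.two_mul_ρδ_le P
  have hM := C.layerConst_mul_lt
  have hc := C.u₀_le_c
  have hpos := C.u₀_pos
  rw [abs_le, abs_le]
  refine ⟨⟨?_, ?_⟩, ?_, ?_⟩ <;> linarith

lemma time_le_passageTime (E : S.IsEntering u₀ ε e μ u v) (P : S.Scaling ρ δ ε e μ)
    (C : S.Thresholds c T₀ r u₀ δ) :
    T₀ + 2 * (u T₀ + v T₀ + 1) / (ρ * δ) + 1 / δ ≤ S.passageTime T₀ ρ δ := by
  obtain ⟨hu, hv⟩ := E.close_at_T₀ P C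
  have hsum : u T₀ + v T₀ + 1 ≤ S.U T₀ + S.V T₀ + 3 := by
    linarith [(abs_le.1 hu).2, (abs_le.1 hv).2, C.r_le_one]
  have := P.ρδ_pos
  unfold passageTime
  gcongr

lemma exists_descent (E : S.IsEntering u₀ ε e μ u v) (P : S.Scaling ρ δ ε e μ)
    (C : S.Thresholds c T₀ r u₀ δ) : ∃ te, S.Descent c u₀ T₀ ρ δ ε te u v := by
  have hT₀ := C.T₀_pos.le
  have hv₀ := E.v_zero_pos C
  have hρδ := P.ρδ_pos
  obtain ⟨t₁, ht₁, hut₁, habove, hsum⟩ := E.exists_descent_to_layer P hv₀ hT₀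
    (by linarith [E.half_limitSpeed_le P C, C.limitSpeed_pos])
    (by linarith [E.half_U_le P C, C.δ_lt_U])
  obtain ⟨te, hte, hute, hfirst, hlayer⟩ := E.exists_crossing P hv₀ (hT₀.trans ht₁.1.le) hut₁ hsum
    C.u₀_pos C.u₀_le_one C.entry_le_crossingSpeed C.two_mul_le_crossingSpeed
    C.add_lt_crossingSpeed
  have hlow : ∀ t ∈ Icc t₁ te, -u₀ ≤ u t := fun t ht => by
    rcases ht.2.lt_or_eq with h | rfl
    exacts [(hfirst t ⟨ht.1, h⟩).le, hute.ge]
  refine ⟨te, ht₁.1.trans hte.1,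
    by linarith [ht₁.2, hte.2, E.time_le_passageTime P C], hute, fun t ht => ?_, ?_,
    fun t ht => ?_, fun t ht hu => ?_, fun t ht hu => ?_, fun t ht => ?_⟩
  · rcases le_total t T₀ with h | h
    · linarith [E.uLow_lt P C t ⟨ht.1, h⟩, C.uLow_pos, C.u₀_pos]
    rcases lt_or_ge t t₁ with h₁ | h₁
    exacts [by linarith [(habove t ⟨h, h₁.le⟩).1, C.u₀_pos], hfirst t ⟨h₁, ht.2⟩]
  · rw [abs_lt]
    constructor <;> linarith [(hlayer te ⟨hte.1.le, le_rfl⟩).2.2.2, C.layerConst_mul_lt,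
      E.neg_lt_v P hv₀ (hT₀.trans (ht₁.1.trans hte.1).le), C.two_mul_ρδ_div_le P, C.u₀_pos]
  all_goals rcases le_total t t₁ with h | h
  · exact (habove t ⟨ht.1, h⟩).2.1
  · linarith [(hlayer t ⟨h, ht.2⟩).2.1, P.δ_pos]
  · linarith [(habove t ⟨ht.1, h⟩).1]
  · exact (hlayer t ⟨h, ht.2⟩).2.1
  · linarith [(habove t ⟨ht.1, h⟩).1]
  · exact (hlayer t ⟨h, ht.2⟩).2.2.1 hu
  · exact E.near_corner_of_add_le P C ht.1 (by linarith [(habove t ⟨ht.1, h⟩).1])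
      (habove t ⟨ht.1, h⟩).2.2
  · exact E.near_corner_of_layer P C ht.1 (hlow t ⟨h, ht.2⟩) (hlayer t ⟨h, ht.2⟩).1
      (hlayer t ⟨h, ht.2⟩).2.2.2

variable {te : ℝ}

lemma exists_limit_near (E : S.IsEntering u₀ ε e μ u v) (P : S.Scaling ρ δ ε e μ)
    (C : S.Thresholds c T₀ r u₀ δ) (D : S.Descent c u₀ T₀ ρ δ ε te u v) :
    ∀ t ∈ Icc 0 te, ∃ s, 0 ≤ s ∧ |u t - S.U s| ≤ c ∧ |v t - S.V s| ≤ c := by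
  intro t ht
  rcases le_total t T₀ with h | h
  · exact ⟨t, ht.1, by linarith [E.close P C t ⟨ht.1, h⟩, C.r_le_c, C.r_pos],
      by linarith [E.close P C t ⟨ht.1, h⟩, C.r_le_c, C.r_pos]⟩
  · obtain ⟨hu, hv⟩ := D.near_corner t ⟨h, ht.2⟩
    exact ⟨T₀, C.T₀_pos.le,
      (abs_sub _ _).trans (by linarith [C.abs_U_le T₀ le_rfl, C.u₀_le_c, C.u₀_pos]),
      (abs_sub _ _).trans (by linarith [C.abs_V_le T₀ le_rfl, C.u₀_le_c, C.u₀_pos])⟩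

lemma exists_near_limit (E : S.IsEntering u₀ ε e μ u v) (P : S.Scaling ρ δ ε e μ)
    (C : S.Thresholds c T₀ r u₀ δ) (D : S.Descent c u₀ T₀ ρ δ ε te u v) :
    ∀ s, 0 ≤ s → ∃ t ∈ Icc 0 te, |u t - S.U s| ≤ c ∧ |v t - S.V s| ≤ c := by
  intro s hs
  rcases le_total s T₀ with h | h
  · exact ⟨s, ⟨hs, h.trans D.T₀_lt.le⟩,
      by linarith [E.close P C s ⟨hs, h⟩, C.r_le_c, C.r_pos],
      by linarith [E.close P C s ⟨hs, h⟩, C.r_le_c, C.r_pos]⟩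
  · obtain ⟨hu, hv⟩ := D.near_corner T₀ ⟨le_rfl, D.T₀_lt.le⟩
    exact ⟨T₀, ⟨C.T₀_pos.le, D.T₀_lt.le⟩,
      (abs_sub _ _).trans (by linarith [C.abs_U_le s h, C.u₀_le_c, C.u₀_pos]),
      (abs_sub _ _).trans (by linarith [C.abs_V_le s h, C.u₀_le_c, C.u₀_pos])⟩

end IsEntering

/-! ### Two solutions up to the corner -/

variable {u₁ v₁ u₂ v₂ : ℝ → ℝ} {te : ℝ}

lemma speedConst_pos (S : HalfSystem) : 0 < S.speedConst := by
  have := S.tail.cHigh_pos; have := S.yMax_pos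
  unfold speedConst
  positivity

lemma contractionExp_pos (S : HalfSystem) : 0 < S.contractionExp :=
  div_pos S.gMin_pos (pow_pos S.speedConst_pos 2)

lemma abs_σ (S : HalfSystem) : |S.σ| = 1 := by
  rcases S.σ_eq with h | h <;> simp only [h, abs_neg, abs_one]

lemma deriv_sq_dist_two_le {a b p g μ : ℝ} (hg : 0 ≤ g) (hμ : 0 ≤ μ) (hp : |p| ≤ |a| + |b|) :
    2 * a * (-a - p + g * b) + 2 * b * (-(μ * b) + p - g * b) ≤ (g + 4) * (a ^ 2 + b ^ 2) := by
  have hap : -(a * p) ≤ |a| * (|a| + |b|) :=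
    (neg_le_abs _).trans (by rw [abs_mul]; gcongr)
  have hbp : b * p ≤ |b| * (|a| + |b|) :=
    (le_abs_self _).trans (by rw [abs_mul]; gcongr)
  nlinarith [sq_abs a, sq_abs b, mul_nonneg hg (sq_nonneg (a - b)), mul_nonneg hg (sq_nonneg b),
    mul_nonneg hμ (sq_nonneg b), sq_nonneg (|a| - |b|), sq_nonneg a, sq_nonneg b]

lemma abs_inv_div_sub_le {m x₁ x₂ : ℝ} (hm : 0 < m) (hε : 0 < ε) (hεδ : ε ≤ δ)
    (h₁ : m ≤ x₁) (h₂ : m ≤ x₂) : |(x₁ / ε)⁻¹ - (x₂ / ε)⁻¹| ≤ δ / m ^ 2 * |x₁ - x₂| := by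
  have hx₁ := hm.trans_le h₁
  have hx₂ := hm.trans_le h₂
  have heq : (x₁ / ε)⁻¹ - (x₂ / ε)⁻¹ = -(ε / (x₁ * x₂) * (x₁ - x₂)) := by field_simp; ring
  rw [heq, abs_neg, abs_mul, abs_of_pos (by positivity), sq]
  gcongr
  exact hε.le.trans hεδ

namespace IsEntering

lemma abs_R_mul_y_sub_le (E₁ : S.IsEntering u₀ ε e μ u₁ v₁) (E₂ : S.IsEntering u₀ ε e μ u₂ v₂)
    (P : S.Scaling ρ δ ε e μ) (C : S.Thresholds c T₀ r u₀ δ) {t : ℝ} (ht : t ∈ Icc 0 T₀) :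
    |S.R (u₁ t / ε) * S.y (v₁ t) - S.R (u₂ t / ε) * S.y (v₂ t)| ≤
      |u₁ t - u₂ t| + |v₁ t - v₂ t| := by
  have hm := C.uLow_pos
  have hu₁ := (E₁.uLow_lt P C t ht).le
  have hu₂ := (E₂.uLow_lt P C t ht).le
  have hεm := P.ε_le_δ.trans C.δ_le_uLow
  have hR := S.R_pos (u₁ t / ε)
  have hy := E₂.y_pos ht.1
  have hL := S.tail.L_nonneg
  have hδ := P.δ_pos
  have hRdiff := (S.tail.abs_sub_le _ _ ((one_le_div P.ε_pos).2 (hεm.trans hu₁))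
    ((one_le_div P.ε_pos).2 (hεm.trans hu₂))).trans
    (mul_le_mul_of_nonneg_left (abs_inv_div_sub_le hm P.ε_pos P.ε_le_δ hu₁ hu₂) hL)
  have hleft : |S.R (u₁ t / ε) - S.R (u₂ t / ε)| * S.y (v₂ t) ≤ |u₁ t - u₂ t| :=
    calc _ ≤ S.tail.L * (δ / S.uLow T₀ u₀ ^ 2 * |u₁ t - u₂ t|) * S.yMax :=
          mul_le_mul hRdiff (E₂.le_yMax t ht.1) hy.le (by positivity)
      _ = S.tail.L * δ * S.yMax / S.uLow T₀ u₀ ^ 2 * |u₁ t - u₂ t| := by ring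
      _ ≤ |u₁ t - u₂ t| := mul_le_of_le_one_left (abs_nonneg _)
          ((div_le_one (by positivity)).2 C.lipschitz_le)
  have hright : S.R (u₁ t / ε) * |v₁ t - v₂ t| ≤ |v₁ t - v₂ t| :=
    mul_le_of_le_one_left (abs_nonneg _) ((P.R_le (E₁.δ_le_u P C ht)).trans C.cHigh_mul_le_one)
  calc _ = |(S.R (u₁ t / ε) - S.R (u₂ t / ε)) * S.y (v₂ t)
          + S.R (u₁ t / ε) * (S.σ * (v₁ t - v₂ t))| := by unfold y; ring_nf
    _ ≤ |S.R (u₁ t / ε) - S.R (u₂ t / ε)| * S.y (v₂ t) + S.R (u₁ t / ε) * |v₁ t - v₂ t| := by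
        refine (abs_add_le _ _).trans_eq ?_
        rw [abs_mul, abs_mul, abs_mul, S.abs_σ, one_mul, abs_of_pos hy, abs_of_pos hR]
    _ ≤ |u₁ t - u₂ t| + |v₁ t - v₂ t| := add_le_add hleft hright

lemma sq_dist_at_T₀_le (E₁ : S.IsEntering u₀ ε e μ u₁ v₁) (E₂ : S.IsEntering u₀ ε e μ u₂ v₂)
    (P : S.Scaling ρ δ ε e μ) (C : S.Thresholds c T₀ r u₀ δ) :
    (u₁ T₀ - u₂ T₀) ^ 2 + (v₁ T₀ - v₂ T₀) ^ 2 ≤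
      (v₁ 0 - v₂ 0) ^ 2 * Real.exp ((S.g₀ + 4) * T₀) := by
  have hgronwall := le_mul_exp_of_deriv_le (K := S.g₀ + 4) C.T₀_pos.le
    (fun t ht => ((((E₁.hasDerivAt_u t ht.1).sub (E₂.hasDerivAt_u t ht.1)).pow 2).add
      (((E₁.hasDerivAt_v t ht.1).sub (E₂.hasDerivAt_v t ht.1)).pow 2)))
    (fun t ht => by
      refine le_trans (le_of_eq ?_) (deriv_sq_dist_two_le S.g₀_pos.le P.μ_nonneg
        (E₁.abs_R_mul_y_sub_le E₂ P C ht))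
      unfold speed
      simp only [Pi.sub_apply]
      ring)
  simpa [E₁.u_zero, E₂.u_zero] using hgronwall

lemma abs_drift_le_one (E : S.IsEntering u₀ ε e μ u v) (P : S.Scaling ρ δ ε e μ)
    (C : S.Thresholds c T₀ r u₀ δ) {t : ℝ} (ht : 0 ≤ t) : |e - μ * v t| ≤ 1 := by
  have hδ := P.δ_pos
  have hcy := mul_pos S.tail.cHigh_pos S.yMax_pos
  calc |e - μ * v t| ≤ (1 + S.vBound) * δ := E.abs_drift_le P ht
    _ ≤ S.errorConst * δ := by unfold errorConst; gcongr; linarith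
    _ ≤ 1 := by nlinarith [C.error_le, C.u₀_pos, C.u₀_le_one]

lemma limitSpeed_le_speed (E : S.IsEntering u₀ ε e μ u v) (P : S.Scaling ρ δ ε e μ)
    (C : S.Thresholds c T₀ r u₀ δ) (D : S.Descent c u₀ T₀ ρ δ ε te u v) {t : ℝ}
    (ht : t ∈ Icc T₀ te) (hδ : δ ≤ u t) (hclose : u T₀ - u t ≤ 2 * r) :
    S.limitSpeed T₀ / 4 ≤ S.speed ε (u t) (v t) := by
  have hT₀ := C.T₀_pos.le
  have hsub {s : ℝ} (hs : s ∈ Icc T₀ t) : s ∈ Icc T₀ te := ⟨hs.1, hs.2.trans ht.2⟩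
  have hanti := E.u_antitoneOn hT₀ fun s hs => (D.speed_pos s (hsub hs)).le
  -- `speed - (1 + gMax) u` increases as long as `δ ≤ u`
  have hmono := le_of_forall_deriv_nonneg
    (f := fun s => S.speed ε (u s) (v s) - (1 + S.gMax) * u s) ht.1
    (fun s hs => (E.hasDerivAt_speed (hT₀.trans hs.1)).sub
      ((E.hasDerivAt_u s (hT₀.trans hs.1)).const_mul (1 + S.gMax)))
    (fun s hs => by
      have hs₀ := hT₀.trans hs.1
      have hdrift := P.drift_le (E.neg_lt_v P (E.v_zero_pos C) hs₀)
      have hus := hδ.trans (hanti hs ⟨ht.1, le_rfl⟩ hs.2)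
      have hR' : S.R' (u s / ε) / ε * S.y (v s) ≤ 0 := mul_nonpos_of_nonpos_of_nonneg
        (div_nonpos_of_nonpos_of_nonneg (S.R'_nonpos _) P.ε_pos.le) (E.y_pos hs₀).le
      have hg := S.gMin_pos.le.trans (S.gMin_le (u s / ε))
      have hprod : 0 ≤ (u s - (e - μ * v s)) * (S.g₀ - S.σ * S.R (u s / ε)) :=
        mul_nonneg (by linarith [P.ρδ_le, P.δ_pos]) hg
      have hspeed := mul_le_mul_of_nonneg_left (b := 1 + S.R' (u s / ε) / ε * S.y (v s)
          + (S.g₀ - S.σ * S.R (u s / ε))) (c := 1 + S.gMax)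
        (by linarith [S.le_gMax (u s / ε)]) (D.speed_pos s (hsub hs)).le
      linarith)
  have hle : (1 + S.gMax) * (u T₀ - u t) ≤ (1 + S.gMax) * (2 * r) :=
    mul_le_mul_of_nonneg_left hclose (by linarith [S.gMax_pos])
  linarith [C.two_mul_r_le_limitSpeed, E.half_limitSpeed_le P C]

lemma exists_hit_near_T₀ (E : S.IsEntering u₀ ε e μ u v) (P : S.Scaling ρ δ ε e μ)
    (C : S.Thresholds c T₀ r u₀ δ) (D : S.Descent c u₀ T₀ ρ δ ε te u v) {x : ℝ} (hδx : δ < x)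
    (hx : x ≤ u T₀) (hclose : u T₀ - x ≤ 2 * r) :
    ∃ s ∈ Icc T₀ te, u s = x ∧ |(u s + v s) - (u T₀ + v T₀)| ≤ S.slopeBound T₀ * (u T₀ - x) := by
  have hT₀ := C.T₀_pos.le
  have hq := C.slopeBound_nonneg
  obtain ⟨s, hs, rfl⟩ := intermediate_value_Icc' D.T₀_lt.le (E.continuousOn_u (b := te) hT₀)
    (show x ∈ Icc (u te) (u T₀) from ⟨by linarith [D.u_te, C.u₀_pos, P.δ_pos], hx⟩)
  have hsub {t : ℝ} (ht : t ∈ Icc T₀ s) : t ∈ Icc T₀ te := ⟨ht.1, ht.2.trans hs.2⟩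
  have hanti := E.u_antitoneOn hT₀ fun t ht => (D.speed_pos t (hsub ht)).le
  have hus {t : ℝ} (ht : t ∈ Icc T₀ s) : u s ≤ u t := hanti ht ⟨hs.1, le_rfl⟩ ht.2
  have hslope : S.slopeBound T₀ * (S.limitSpeed T₀ / 4) = S.U T₀ + 3 := by
    have := C.limitSpeed_pos.ne'
    unfold slopeBound
    field_simp
  have hdecr := E.u_add_v_le P (E.v_zero_pos C) hT₀ hs.1
    fun t ht => by linarith [hus ht, P.ρδ_le, P.δ_pos]
  have hincr := le_of_forall_deriv_nonneg (f := fun t => u t + v t - S.slopeBound T₀ * u t) hs.1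
    (fun t ht => (E.hasDerivAt_add (hT₀.trans ht.1)).sub
      ((E.hasDerivAt_u t (hT₀.trans ht.1)).const_mul _))
    (fun t ht => by
      have hut := hanti ⟨le_rfl, hs.1⟩ ht ht.1
      have hspeed := mul_le_mul_of_nonneg_left (E.limitSpeed_le_speed P C D (hsub ht)
        (hδx.le.trans (hus ht)) (by linarith [hus ht])) hq
      linarith [(abs_le.1 (E.abs_drift_le_one P C (hT₀.trans ht.1))).1,
        (abs_le.1 (E.close_at_T₀ P C).1).2, C.r_le_one])
  refine ⟨s, hs, rfl, abs_le.2 ⟨?_, ?_⟩⟩ <;> nlinarith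

end IsEntering

/-! ### Contraction along the descent -/

/-- The descending part of a passage, parametrized as a graph `v = w u` over `-u₀ ≤ u ≤ xL`. -/
structure DescentGraph (S : HalfSystem) (u₀ ρ δ ε e μ xL : ℝ) (w : ℝ → ℝ) : Prop where
  continuousOn : ContinuousOn w (Icc (-u₀) xL)
  hasDerivAt : ∀ x ∈ Ioo (-u₀) xL,
    HasDerivAt w ((x - (e - μ * w x)) / S.speed ε x (w x) - 1) x
  neg_lt : ∀ x ∈ Icc (-u₀) xL, -(2 * ρ * δ / S.g₀) < w x
  y_pos : ∀ x ∈ Icc (-u₀) xL, 0 < S.y (w x)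
  le_yMax : ∀ x ∈ Icc (-u₀) xL, S.y (w x) ≤ S.yMax
  speed_pos : ∀ x ∈ Icc (-u₀) xL, 0 < S.speed ε x (w x)
  two_mul_le_speed : ∀ x ∈ Icc (-u₀) xL, x < 2 * ρ * δ → 2 * δ ≤ S.speed ε x (w x)
  crossingSpeed_le : ∀ x ∈ Icc (-u₀) xL, x ≤ 0 → S.crossingSpeed ≤ S.speed ε x (w x)

lemma IsEntering.exists_descentGraph (E : S.IsEntering u₀ ε e μ u v) (P : S.Scaling ρ δ ε e μ)
    (C : S.Thresholds c T₀ r u₀ δ) (D : S.Descent c u₀ T₀ ρ δ ε te u v) {s xL : ℝ}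
    (hs : s ∈ Icc T₀ te) (hus : u s = xL) :
    ∃ w, S.DescentGraph u₀ ρ δ ε e μ xL w ∧ w (-u₀) = v te ∧ w xL = v s := by
  have hs₀ : 0 ≤ s := C.T₀_pos.le.trans hs.1
  obtain ⟨τ, hτ, hτu, hτcont, hτderiv⟩ := exists_inverse_of_deriv_neg hs.2
    (fun t ht => E.hasDerivAt_u t (hs₀.trans ht.1))
    (fun t ht => D.speed_pos t ⟨hs.1.trans ht.1, ht.2⟩)
  rw [D.u_te, hus] at hτ hτcont hτderiv
  have hτ_mem {x : ℝ} (hx : x ∈ Icc (-u₀) xL) : τ x ∈ Icc T₀ te :=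
    ⟨hs.1.trans (hτ x hx).1.1, (hτ x hx).1.2⟩
  have hτ_nonneg {x : ℝ} (hx : x ∈ Icc (-u₀) xL) : 0 ≤ τ x := hs₀.trans (hτ x hx).1.1
  have hspeed {x : ℝ} (hx : x ∈ Icc (-u₀) xL) : 0 < S.speed ε x (v (τ x)) := by
    simpa only [(hτ x hx).2] using D.speed_pos _ (hτ_mem hx)
  refine ⟨v ∘ τ, ⟨(E.continuousOn_v hs₀).comp hτcont fun x hx => (hτ x hx).1, fun x hx => ?_,
    fun x hx => E.neg_lt_v P (E.v_zero_pos C) (hτ_nonneg hx), fun x hx => E.y_pos (hτ_nonneg hx),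
    fun x hx => E.le_yMax _ (hτ_nonneg hx), fun x hx => hspeed hx, fun x hx hlt => ?_,
    fun x hx hle => ?_⟩, ?_, ?_⟩
  · have hx' := Ioo_subset_Icc_self hx
    have hne := (hspeed hx').ne'
    refine ((E.hasDerivAt_v (τ x) (hτ_nonneg hx')).comp x (hτderiv x hx)).congr_deriv ?_
    simp only [(hτ x hx').2, Function.comp_apply]
    field_simp
    ring
  · simpa only [(hτ x hx).2, Function.comp_apply] using
      D.two_mul_le_speed _ (hτ_mem hx) ((hτ x hx).2.trans_lt hlt)
  · simpa only [(hτ x hx).2, Function.comp_apply] using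
      D.crossingSpeed_le _ (hτ_mem hx) ((hτ x hx).2.trans_le hle)
  · rw [Function.comp_apply, ← D.u_te, hτu te ⟨hs.2, le_rfl⟩]
  · rw [Function.comp_apply, ← hus, hτu s ⟨le_rfl, hs.2⟩]

/-- Half the logarithmic derivative, with respect to `u`, of the squared distance between two
descending orbits `v = w₁` and `v = w₂`. -/
noncomputable def growthRate (S : HalfSystem) (ε e μ x w₁ w₂ : ℝ) : ℝ :=
  μ / S.speed ε x w₁ +
    (x - (e - μ * w₂)) * (S.g₀ - S.σ * S.R (x / ε)) / (S.speed ε x w₁ * S.speed ε x w₂)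

lemma neg_le_growthRate {b m x w₁ w₂ : ℝ} (hb : 0 ≤ b) (hm : 0 < m) (hμ : 0 ≤ μ)
    (hx : -b ≤ x - (e - μ * w₂)) (h₁ : m ≤ S.speed ε x w₁) (h₂ : m ≤ S.speed ε x w₂) :
    -(b * S.gMax / m ^ 2) ≤ S.growthRate ε e μ x w₁ w₂ := by
  have hg := S.gMin_pos.trans_le (S.gMin_le (x / ε))
  have hgMax := S.gMax_pos
  have hspeed := mul_le_mul h₁ h₂ hm.le (hm.le.trans h₁)
  have hnum : -(b * S.gMax) ≤ (x - (e - μ * w₂)) * (S.g₀ - S.σ * S.R (x / ε)) := by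
    nlinarith [S.le_gMax (x / ε)]
  calc -(b * S.gMax / m ^ 2)
      ≤ -(b * S.gMax / (S.speed ε x w₁ * S.speed ε x w₂)) := by rw [sq]; gcongr
    _ ≤ (x - (e - μ * w₂)) * (S.g₀ - S.σ * S.R (x / ε)) /
          (S.speed ε x w₁ * S.speed ε x w₂) := by
        rw [← neg_div]
        exact div_le_div_of_nonneg_right hnum ((mul_pos hm hm).le.trans hspeed)
    _ ≤ S.growthRate ε e μ x w₁ w₂ :=
        le_add_of_nonneg_left (div_nonneg hμ (hm.le.trans h₁))

namespace DescentGraph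

variable {w w₁ w₂ : ℝ → ℝ} {x a b xL : ℝ}

lemma drift_le (G : S.DescentGraph u₀ ρ δ ε e μ xL w) (P : S.Scaling ρ δ ε e μ)
    (hx : x ∈ Icc (-u₀) xL) : e - μ * w x ≤ 3 / 2 * (ρ * δ) :=
  P.drift_le (G.neg_lt x hx)

lemma speed_le (G : S.DescentGraph u₀ ρ δ ε e μ xL w) (P : S.Scaling ρ δ ε e μ)
    (hx : x ∈ Icc (-u₀) xL) (hδx : δ ≤ x) : S.speed ε x (w x) ≤ S.speedConst * x := by
  have hcy := mul_pos S.tail.cHigh_pos S.yMax_pos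
  have hRy : S.R (x / ε) * S.y (w x) ≤ S.tail.cHigh * S.yMax * x :=
    calc S.R (x / ε) * S.y (w x) ≤ S.tail.cHigh * δ * S.yMax :=
          mul_le_mul (P.R_le hδx) (G.le_yMax x hx) (G.y_pos x hx).le
            (mul_pos S.tail.cHigh_pos P.δ_pos).le
      _ = S.tail.cHigh * S.yMax * δ := by ring
      _ ≤ S.tail.cHigh * S.yMax * x := mul_le_mul_of_nonneg_left hδx hcy.le
  have hw : -(2 * ρ * δ) < S.g₀ * w x := by
    rw [← div_lt_iff₀' S.g₀_pos, neg_div]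
    exact G.neg_lt x hx
  unfold speed speedConst
  linarith [P.ρδ_le, P.δ_pos]

lemma hasDerivAt_sq_sub (G₁ : S.DescentGraph u₀ ρ δ ε e μ xL w₁)
    (G₂ : S.DescentGraph u₀ ρ δ ε e μ xL w₂) (hx : x ∈ Ioo (-u₀) xL) :
    HasDerivAt (fun x => (w₁ x - w₂ x) ^ 2)
      (2 * (w₁ x - w₂ x) ^ 2 * S.growthRate ε e μ x (w₁ x) (w₂ x)) x := by
  have h₁ := (G₁.speed_pos x (Ioo_subset_Icc_self hx)).ne'
  have h₂ := (G₂.speed_pos x (Ioo_subset_Icc_self hx)).ne'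
  have hdiff : S.speed ε x (w₂ x) - S.speed ε x (w₁ x) =
      (S.g₀ - S.σ * S.R (x / ε)) * (w₁ x - w₂ x) := by unfold speed y; ring
  refine (((G₁.hasDerivAt x hx).sub (G₂.hasDerivAt x hx)).pow 2).congr_deriv ?_
  simp only [growthRate, Pi.sub_apply]
  field_simp
  linear_combination 2 * (w₁ x - w₂ x) * (x - (e - μ * w₂ x)) * hdiff

lemma contractionExp_div_le_growthRate (G₁ : S.DescentGraph u₀ ρ δ ε e μ xL w₁)
    (G₂ : S.DescentGraph u₀ ρ δ ε e μ xL w₂) (P : S.Scaling ρ δ ε e μ)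
    (hx : x ∈ Icc (-u₀) xL) (hδx : δ ≤ x) :
    S.contractionExp / (2 * x) ≤ S.growthRate ε e μ x (w₁ x) (w₂ x) := by
  have hx₀ := P.δ_pos.trans_le hδx
  have h₁ := G₁.speed_pos x hx
  have h₂ := G₂.speed_pos x hx
  have hC := S.speedConst_pos
  have hg := S.gMin_pos
  have hdrift : x / 2 ≤ x - (e - μ * w₂ x) := by linarith [G₂.drift_le P hx, P.ρδ_le]
  have hdrift₀ : 0 ≤ x - (e - μ * w₂ x) := (half_pos hx₀).le.trans hdrift
  calc S.contractionExp / (2 * x)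
      = x / 2 * S.gMin / (S.speedConst * x * (S.speedConst * x)) := by
        unfold contractionExp; field_simp
    _ ≤ (x - (e - μ * w₂ x)) * (S.g₀ - S.σ * S.R (x / ε)) /
          (S.speed ε x (w₁ x) * S.speed ε x (w₂ x)) :=
        div_le_div₀ (mul_nonneg hdrift₀ (hg.le.trans (S.gMin_le _)))
          (mul_le_mul hdrift (S.gMin_le _) hg.le hdrift₀) (mul_pos h₁ h₂)
          (mul_le_mul (G₁.speed_le P hx hδx) (G₂.speed_le P hx hδx) h₂.le (by positivity))
    _ ≤ S.growthRate ε e μ x (w₁ x) (w₂ x) :=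
        le_add_of_nonneg_left (div_nonneg P.μ_nonneg h₁.le)

lemma growthRate_nonneg (G₁ : S.DescentGraph u₀ ρ δ ε e μ xL w₁)
    (G₂ : S.DescentGraph u₀ ρ δ ε e μ xL w₂) (P : S.Scaling ρ δ ε e μ)
    (hx : x ∈ Icc (-u₀) xL) (hρx : 2 * ρ * δ ≤ x) :
    0 ≤ S.growthRate ε e μ x (w₁ x) (w₂ x) := by
  have hg := S.gMin_pos.le.trans (S.gMin_le (x / ε))
  have hdrift : 0 ≤ x - (e - μ * w₂ x) := by linarith [G₂.drift_le P hx, P.ρδ_pos]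
  have h₁ := G₁.speed_pos x hx
  have h₂ := G₂.speed_pos x hx
  exact add_nonneg (div_nonneg P.μ_nonneg h₁.le)
    (div_nonneg (mul_nonneg hdrift hg) (mul_pos h₁ h₂).le)

lemma sq_sub_le_rpow (G₁ : S.DescentGraph u₀ ρ δ ε e μ xL w₁)
    (G₂ : S.DescentGraph u₀ ρ δ ε e μ xL w₂) (P : S.Scaling ρ δ ε e μ) (hu₀ : 0 < u₀)
    (hδ : δ ≤ xL) :
    (w₁ δ - w₂ δ) ^ 2 ≤ (w₁ xL - w₂ xL) ^ 2 * (δ / xL) ^ S.contractionExp := by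
  have hlow : -u₀ < δ := by linarith [P.δ_pos]
  refine le_mul_rpow_of_mul_div_le_deriv P.δ_pos hδ
    (((G₁.continuousOn.sub G₂.continuousOn).pow 2).mono (Icc_subset_Icc hlow.le le_rfl))
    (fun x hx => G₁.hasDerivAt_sq_sub G₂ ⟨hlow.trans hx.1, hx.2⟩) fun x hx => ?_
  have hx₀ := P.δ_pos.trans hx.1
  calc S.contractionExp * (w₁ x - w₂ x) ^ 2 / x
      = 2 * (w₁ x - w₂ x) ^ 2 * (S.contractionExp / (2 * x)) := by field_simp
    _ ≤ _ := mul_le_mul_of_nonneg_left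
        (G₁.contractionExp_div_le_growthRate G₂ P ⟨(hlow.trans hx.1).le, hx.2.le⟩ hx.1.le)
        (by positivity)

lemma sq_sub_le_exp {K : ℝ} (G₁ : S.DescentGraph u₀ ρ δ ε e μ xL w₁)
    (G₂ : S.DescentGraph u₀ ρ δ ε e μ xL w₂) (ha : -u₀ ≤ a) (hab : a ≤ b) (hb : b ≤ xL)
    (hK : ∀ x ∈ Ioo a b, -(K / 2) ≤ S.growthRate ε e μ x (w₁ x) (w₂ x)) :
    (w₁ a - w₂ a) ^ 2 ≤ (w₁ b - w₂ b) ^ 2 * Real.exp (K * (b - a)) := by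
  refine le_mul_exp_of_neg_mul_le_deriv (f := fun x => (w₁ x - w₂ x) ^ 2) hab
    (((G₁.continuousOn.sub G₂.continuousOn).pow 2).mono (Icc_subset_Icc ha hb))
    (fun x hx => G₁.hasDerivAt_sq_sub G₂ ⟨ha.trans_lt hx.1, hx.2.trans_le hb⟩) fun x hx => ?_
  calc -K * (w₁ x - w₂ x) ^ 2 = 2 * (w₁ x - w₂ x) ^ 2 * -(K / 2) := by ring
    _ ≤ _ := mul_le_mul_of_nonneg_left (hK x hx) (by positivity)

lemma sq_sub_le_of_layer (G₁ : S.DescentGraph u₀ ρ δ ε e μ xL w₁)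
    (G₂ : S.DescentGraph u₀ ρ δ ε e μ xL w₂) (P : S.Scaling ρ δ ε e μ) (hu₀ : 0 < u₀)
    (hδ : δ ≤ xL) :
    (w₁ 0 - w₂ 0) ^ 2 ≤ (w₁ δ - w₂ δ) ^ 2 * Real.exp (S.gMax / 2) := by
  have hδ₀ := P.δ_pos
  have hρδ := P.ρδ_pos
  have hρδ' := P.ρδ_le
  have hupper := G₁.sq_sub_le_exp G₂ (K := 0) (a := 2 * ρ * δ) (b := δ) (by linarith)
    (by linarith) hδ fun x hx => by
      simpa using G₁.growthRate_nonneg G₂ P ⟨by linarith [hx.1], by linarith [hx.2]⟩ hx.1.le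
  have hlower := G₁.sq_sub_le_exp G₂ (K := S.gMax / (2 * δ)) (a := 0) (b := 2 * ρ * δ)
    (by linarith) (by linarith) (by linarith) fun x hx => by
      have hx' : x ∈ Icc (-u₀) xL := ⟨by linarith [hx.1], by linarith [hx.2]⟩
      have := neg_le_growthRate hδ₀.le (by linarith : 0 < 2 * δ) P.μ_nonneg
        (by linarith [hx.1, G₂.drift_le P hx'] : -δ ≤ x - (e - μ * w₂ x))
        (G₁.two_mul_le_speed x hx' hx.2) (G₂.two_mul_le_speed x hx' hx.2)
      convert this using 2
      field_simp
  rw [zero_mul, Real.exp_zero, mul_one] at hupper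
  have hexp : S.gMax / (2 * δ) * (2 * ρ * δ - 0) ≤ S.gMax / 2 := by
    rw [sub_zero, div_mul_eq_mul_div, div_le_iff₀ (by positivity)]
    nlinarith [S.gMax_pos]
  calc _ ≤ _ := hlower
    _ ≤ (w₁ δ - w₂ δ) ^ 2 * Real.exp (S.gMax / 2) := by gcongr

lemma sq_sub_le_of_crossing (G₁ : S.DescentGraph u₀ ρ δ ε e μ xL w₁)
    (G₂ : S.DescentGraph u₀ ρ δ ε e μ xL w₂) (P : S.Scaling ρ δ ε e μ) (hu₀ : 0 < u₀)
    (hu₀_le : u₀ ≤ 1) (hxL : 0 ≤ xL) :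
    (w₁ (-u₀) - w₂ (-u₀)) ^ 2 ≤
      (w₁ 0 - w₂ 0) ^ 2 * Real.exp (4 * S.gMax / S.crossingSpeed ^ 2) := by
  have hrate := G₁.sq_sub_le_exp G₂ (K := 4 * S.gMax / S.crossingSpeed ^ 2) (a := -u₀) (b := 0)
    le_rfl (by linarith) hxL fun x hx => by
      have hx' : x ∈ Icc (-u₀) xL := ⟨hx.1.le, hx.2.le.trans hxL⟩
      have := neg_le_growthRate zero_le_two S.crossingSpeed_pos P.μ_nonneg
        (by linarith [hx.1, G₂.drift_le P hx', P.ρδ_le, P.δ_le_one] :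
          -2 ≤ x - (e - μ * w₂ x))
        (G₁.crossingSpeed_le x hx' hx.2.le) (G₂.crossingSpeed_le x hx' hx.2.le)
      convert this using 2
      ring
  have hgMax := S.gMax_pos
  have hexp : 4 * S.gMax / S.crossingSpeed ^ 2 * (0 - -u₀) ≤
      4 * S.gMax / S.crossingSpeed ^ 2 :=
    mul_le_of_le_one_right (by positivity) (by linarith)
  calc _ ≤ _ := hrate
    _ ≤ _ := by gcongr

lemma sq_sub_at_exit_le (G₁ : S.DescentGraph u₀ ρ δ ε e μ xL w₁)
    (G₂ : S.DescentGraph u₀ ρ δ ε e μ xL w₂) (P : S.Scaling ρ δ ε e μ) (hu₀ : 0 < u₀)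
    (hu₀_le : u₀ ≤ 1) (hδ : δ ≤ xL) :
    (w₁ (-u₀) - w₂ (-u₀)) ^ 2 ≤
      (w₁ xL - w₂ xL) ^ 2 * (δ / xL) ^ S.contractionExp * Real.exp S.expansionConst := by
  have hcross := G₁.sq_sub_le_of_crossing G₂ P hu₀ hu₀_le (P.δ_pos.le.trans hδ)
  have hlayer := G₁.sq_sub_le_of_layer G₂ P hu₀ hδ
  have hcontr := G₁.sq_sub_le_rpow G₂ P hu₀ hδ
  calc (w₁ (-u₀) - w₂ (-u₀)) ^ 2
      ≤ (w₁ xL - w₂ xL) ^ 2 * (δ / xL) ^ S.contractionExp * Real.exp (S.gMax / 2) *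
          Real.exp (4 * S.gMax / S.crossingSpeed ^ 2) :=
        hcross.trans (mul_le_mul_of_nonneg_right (hlayer.trans
          (mul_le_mul_of_nonneg_right hcontr (Real.exp_pos _).le)) (Real.exp_pos _).le)
    _ = _ := by rw [mul_assoc, ← Real.exp_add, expansionConst]

end DescentGraph

lemma sq_add_add_le {a b q z : ℝ} (hq : 0 ≤ q) (ha : 0 ≤ a) (hz : |z| ≤ q * a) :
    (z + a + b) ^ 2 ≤ 2 * (1 + q) ^ 2 * (a ^ 2 + b ^ 2) := by
  have hsum : |z + a + b| ≤ (1 + q) * (a + |b|) := by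
    have := abs_add_three z a b
    rw [abs_of_nonneg ha] at this
    nlinarith [abs_nonneg b]
  calc (z + a + b) ^ 2 = |z + a + b| ^ 2 := (sq_abs _).symm
    _ ≤ ((1 + q) * (a + |b|)) ^ 2 := by gcongr
    _ = (1 + q) ^ 2 * (a + |b|) ^ 2 := mul_pow _ _ _
    _ ≤ (1 + q) ^ 2 * (2 * (a ^ 2 + b ^ 2)) := by
        gcongr
        nlinarith [sq_nonneg (a - |b|), sq_abs b]
    _ = 2 * (1 + q) ^ 2 * (a ^ 2 + b ^ 2) := by ring

namespace IsEntering

variable {te₁ te₂ : ℝ}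

lemma sq_sub_at_exit_le (E₁ : S.IsEntering u₀ ε e μ u₁ v₁) (E₂ : S.IsEntering u₀ ε e μ u₂ v₂)
    (P : S.Scaling ρ δ ε e μ) (C : S.Thresholds c T₀ r u₀ δ)
    (D₁ : S.Descent c u₀ T₀ ρ δ ε te₁ u₁ v₁) (D₂ : S.Descent c u₀ T₀ ρ δ ε te₂ u₂ v₂)
    (hle : u₂ T₀ ≤ u₁ T₀) : (v₁ te₁ - v₂ te₂) ^ 2 ≤ 1 / 4 * (v₁ 0 - v₂ 0) ^ 2 := by
  have hU := E₂.half_U_le P C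
  have hU₀ := C.U_pos
  have hδ₀ := P.δ_pos
  have hδ : δ < u₂ T₀ := C.δ_lt_U.trans_le hU
  have hq := C.slopeBound_nonneg
  obtain ⟨s, hs, hus, hslope⟩ := E₁.exists_hit_near_T₀ P C D₁ hδ hle (by
    linarith [(abs_le.1 (E₁.close_at_T₀ P C).1).2, (abs_le.1 (E₂.close_at_T₀ P C).1).1])
  obtain ⟨w₁, G₁, hexit₁, hstart₁⟩ := E₁.exists_descentGraph P C D₁ hs hus
  obtain ⟨w₂, G₂, hexit₂, hstart₂⟩ :=
    E₂.exists_descentGraph P C D₂ ⟨le_rfl, D₂.T₀_lt.le⟩ rfl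
  have hcontr := G₁.sq_sub_at_exit_le G₂ P C.u₀_pos C.u₀_le_one hδ.le
  rw [hexit₁, hexit₂, hstart₁, hstart₂] at hcontr
  have hstart : (v₁ s - v₂ T₀) ^ 2 ≤
      2 * (1 + S.slopeBound T₀) ^ 2 * ((v₁ 0 - v₂ 0) ^ 2 * Real.exp ((S.g₀ + 4) * T₀)) :=
    calc (v₁ s - v₂ T₀) ^ 2
        = ((u₁ s + v₁ s - (u₁ T₀ + v₁ T₀)) + (u₁ T₀ - u₂ T₀) + (v₁ T₀ - v₂ T₀)) ^ 2 := by
          rw [hus]; ring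
      _ ≤ 2 * (1 + S.slopeBound T₀) ^ 2 * ((u₁ T₀ - u₂ T₀) ^ 2 + (v₁ T₀ - v₂ T₀) ^ 2) :=
          sq_add_add_le hq (sub_nonneg.2 hle) hslope
      _ ≤ _ := mul_le_mul_of_nonneg_left (E₁.sq_dist_at_T₀_le E₂ P C) (by positivity)
  have hpow : (δ / u₂ T₀) ^ S.contractionExp ≤ (δ / (S.U T₀ / 2)) ^ S.contractionExp :=
    Real.rpow_le_rpow (div_nonneg hδ₀.le (hδ₀.trans hδ).le) (by gcongr) S.contractionExp_pos.le
  calc (v₁ te₁ - v₂ te₂) ^ 2 ≤ _ := hcontr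
    _ ≤ 2 * (1 + S.slopeBound T₀) ^ 2 * ((v₁ 0 - v₂ 0) ^ 2 * Real.exp ((S.g₀ + 4) * T₀)) *
          (δ / (S.U T₀ / 2)) ^ S.contractionExp * Real.exp S.expansionConst := by
        have := Real.rpow_nonneg (div_nonneg hδ₀.le (hδ₀.trans hδ).le) S.contractionExp
        gcongr
    _ = Real.exp S.expansionConst * (δ / (S.U T₀ / 2)) ^ S.contractionExp *
          (2 * (1 + S.slopeBound T₀) ^ 2 * Real.exp ((S.g₀ + 4) * T₀)) *
            (v₁ 0 - v₂ 0) ^ 2 := by ring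
    _ ≤ 1 / 4 * (v₁ 0 - v₂ 0) ^ 2 :=
        mul_le_mul_of_nonneg_right C.contraction_le (sq_nonneg _)

lemma abs_sub_at_exit_le (E₁ : S.IsEntering u₀ ε e μ u₁ v₁) (E₂ : S.IsEntering u₀ ε e μ u₂ v₂)
    (P : S.Scaling ρ δ ε e μ) (C : S.Thresholds c T₀ r u₀ δ)
    (D₁ : S.Descent c u₀ T₀ ρ δ ε te₁ u₁ v₁) (D₂ : S.Descent c u₀ T₀ ρ δ ε te₂ u₂ v₂) :
    |v₁ te₁ - v₂ te₂| ≤ 1 / 2 * |v₁ 0 - v₂ 0| := by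
  wlog hle : u₂ T₀ ≤ u₁ T₀ generalizing u₁ v₁ u₂ v₂ te₁ te₂
  · rw [abs_sub_comm, abs_sub_comm (v₁ 0)]
    exact this E₂ E₁ D₂ D₁ (le_of_not_ge hle)
  refine abs_le_of_sq_le_sq ?_ (by positivity)
  rw [mul_pow, sq_abs]
  linarith [E₁.sq_sub_at_exit_le E₂ P C D₁ D₂ hle]

end IsEntering

/-! ### The limiting orbit and the choice of thresholds -/

section LimitingOrbit

variable (S : HalfSystem)

lemma V_pos (t : ℝ) : 0 < S.V t := by
  have hderiv : ∀ s, HasDerivAt (fun s => S.V s * Real.exp (S.g₀ * s)) 0 s := fun s => by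
    have hexp : HasDerivAt (fun s => Real.exp (S.g₀ * s)) (Real.exp (S.g₀ * s) * (S.g₀ * 1)) s :=
      ((hasDerivAt_id s).const_mul S.g₀).exp
    exact ((S.hasDerivAt_V s).mul hexp).congr_deriv (by ring)
  have hconst : S.V t * Real.exp (S.g₀ * t) = S.v₀ := by
    simpa only [mul_zero, Real.exp_zero, mul_one, S.V_zero] using
      is_const_of_deriv_eq_zero (fun s => (hderiv s).differentiableAt)
        (fun s => (hderiv s).deriv) t 0
  exact pos_of_mul_pos_left (hconst ▸ S.v₀_pos) (Real.exp_pos _).le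

lemma U_pos {t : ℝ} (ht : 0 < t) : 0 < S.U t := by
  have hderiv : ∀ s, HasDerivAt (fun s => S.U s * Real.exp s)
      (S.g₀ * S.V s * Real.exp s) s := fun s =>
    ((S.hasDerivAt_U s).mul (Real.hasDerivAt_exp s)).congr_deriv (by ring)
  have hmono : StrictMono fun s => S.U s * Real.exp s := strictMono_of_deriv_pos fun s => by
    rw [(hderiv s).deriv]
    exact mul_pos (mul_pos S.g₀_pos (S.V_pos s)) (Real.exp_pos s)
  have hpos : 0 < S.U t * Real.exp t := by simpa only [S.U_zero, zero_mul] using hmono ht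
  exact pos_of_mul_pos_left hpos (Real.exp_pos _).le

lemma exists_limitSpeed_pos : ∃ t, 1 ≤ t ∧ 0 < S.limitSpeed t := by
  by_contra! hcon
  have hge : ∀ t, 1 ≤ t → S.U 1 ≤ S.U t := fun t ht =>
    le_of_forall_deriv_nonneg ht (fun s _ => S.hasDerivAt_U s)
      fun s hs => sub_nonneg.2 (sub_nonpos.1 (hcon s hs.1))
  exact (ge_of_tendsto S.tendsto_U (eventually_atTop.2 ⟨1, hge⟩)).not_gt (S.U_pos one_pos)

lemma limitSpeed_pos_of_le {s t : ℝ} (hst : s ≤ t) (hs : 0 < S.limitSpeed s) :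
    0 < S.limitSpeed t := by
  have hderiv : ∀ τ, HasDerivAt (fun τ => S.limitSpeed τ * Real.exp τ)
      (S.g₀ ^ 2 * S.V τ * Real.exp τ) τ := fun τ =>
    (((S.hasDerivAt_U τ).sub ((S.hasDerivAt_V τ).const_mul S.g₀)).mul
      (Real.hasDerivAt_exp τ)).congr_deriv (by simp only [Pi.sub_apply]; ring)
  have hle := le_of_forall_deriv_nonneg hst (fun τ _ => hderiv τ) fun τ _ =>
    (mul_pos (mul_pos (pow_pos S.g₀_pos 2) (S.V_pos τ)) (Real.exp_pos τ)).le
  exact pos_of_mul_pos_left ((mul_pos hs (Real.exp_pos s)).trans_le hle) (Real.exp_pos _).le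

lemma eventually_limit_near (hc : 0 < c) :
    ∀ᶠ T₀ in atTop, 0 < T₀ ∧ 0 < S.limitSpeed T₀ ∧
      (∀ t, T₀ ≤ t → |S.U t| ≤ c / 8) ∧ ∀ t, T₀ ≤ t → |S.V t| ≤ c / 8 := by
  have near : ∀ {f : ℝ → ℝ}, Tendsto f atTop (𝓝 0) →
      ∀ᶠ T₀ in atTop, ∀ t, T₀ ≤ t → |f t| ≤ c / 8 := fun hf =>
    eventually_forall_ge_atTop.2 <|
      (hf.abs.eventually (gt_mem_nhds (by rw [abs_zero]; positivity))).mono fun _ => le_of_lt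
  obtain ⟨t₁, ht₁, hspeed⟩ := S.exists_limitSpeed_pos
  filter_upwards [eventually_ge_atTop t₁, near S.tendsto_U, near S.tendsto_V] with T₀ hT₀ hU hV
  exact ⟨zero_lt_one.trans_le (ht₁.trans hT₀), S.limitSpeed_pos_of_le hT₀ hspeed, hU, hV⟩

end LimitingOrbit

lemma eventually_lt_of_continuous {f : ℝ → ℝ} (hf : Continuous f) {b : ℝ} (h : f 0 < b) :
    ∀ᶠ δ in 𝓝[>] (0 : ℝ), f δ < b :=
  (hf.continuousAt.eventually (gt_mem_nhds h)).filter_mono nhdsWithin_le_nhds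

lemma exists_window (S : HalfSystem) (hc : 0 < c) : ∃ T₀ r, S.Window c T₀ r := by
  obtain ⟨T₀, hT₀, hspeed, hU, hV⟩ := (S.eventually_limit_near hc).exists
  have hU₀ := S.U_pos hT₀
  have small {f : ℝ → ℝ} (hf : Continuous f) {b : ℝ} (h : f 0 < b) :=
    eventually_lt_of_continuous hf h
  obtain ⟨r, hr, h₁, hrc, hrU, hrs, hrs'⟩ := (eventually_mem_nhdsWithin.and <|
    (small continuous_id (b := 1) (by simp)).and <|
    (small continuous_id (b := c / 8) (by simpa using hc)).and <|
    (small continuous_id (b := S.U T₀ / 2) (by simpa using hU₀)).and <|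
    (small (f := fun r => (1 + S.g₀) * r) (b := S.limitSpeed T₀ / 2) (by fun_prop)
      (by simpa using hspeed)).and <|
    small (f := fun r => (1 + S.gMax) * (2 * r)) (b := S.limitSpeed T₀ / 4) (by fun_prop)
      (by simpa using hspeed)).exists
  exact ⟨T₀, r, {
    T₀_pos := hT₀, U_pos := hU₀, limitSpeed_pos := hspeed, abs_U_le := hU, abs_V_le := hV
    r_pos := hr, r_le_one := h₁.le, r_le_c := hrc.le, r_le_U := hrU.le
    r_le_limitSpeed := hrs.le, two_mul_r_le_limitSpeed := hrs'.le }⟩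

lemma Window.eventually_entrySmall (W : S.Window c T₀ r) :
    ∀ᶠ u₀ in 𝓝[>] (0 : ℝ), S.EntrySmall c T₀ r u₀ := by
  have hcs := S.crossingSpeed_pos
  have small {f : ℝ → ℝ} (hf : Continuous f) {b : ℝ} (h : f 0 < b) :=
    eventually_lt_of_continuous hf h
  filter_upwards [self_mem_nhdsWithin,
    small continuous_id (b := 1) (by simp),
    small continuous_id (b := c / 8) (W.r_pos.trans_le W.r_le_c),
    small (f := fun u₀ => 7 * u₀) (b := S.v₀) (by fun_prop) (by simpa using S.v₀_pos),
    small (f := fun u₀ => u₀ + S.g₀ * (2 * u₀)) (b := S.crossingSpeed) (by fun_prop)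
      (by simpa using hcs),
    small (f := fun u₀ => 11 * u₀ ^ 2 * Real.exp ((S.g₀ + 1) * T₀)) (b := r ^ 2) (by fun_prop)
      (by simpa using pow_pos W.r_pos 2)] with u₀ h₀ h₁ hc hv hs hexp
  exact {
    u₀_pos := h₀, u₀_le_one := h₁.le, u₀_le_c := hc.le, u₀_le_v₀ := hv.le
    u₀_lt_crossingSpeed := hs, exp_le := hexp.le }

lemma eventually_contraction_le (S : HalfSystem) (T₀ : ℝ) :
    ∀ᶠ δ in 𝓝[>] (0 : ℝ), Real.exp S.expansionConst * (δ / (S.U T₀ / 2)) ^ S.contractionExp *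
      (2 * (1 + S.slopeBound T₀) ^ 2 * Real.exp ((S.g₀ + 4) * T₀)) < 1 / 4 := by
  have hexp := S.contractionExp_pos
  have hpow : Continuous fun δ : ℝ => (δ / (S.U T₀ / 2)) ^ S.contractionExp :=
    (continuous_id.div_const _).rpow_const fun _ => Or.inr hexp.le
  refine eventually_lt_of_continuous (f := fun δ => Real.exp S.expansionConst *
    (δ / (S.U T₀ / 2)) ^ S.contractionExp * (2 * (1 + S.slopeBound T₀) ^ 2 *
      Real.exp ((S.g₀ + 4) * T₀))) ((continuous_const.mul hpow).mul continuous_const) ?_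
  rw [zero_div, Real.zero_rpow hexp.ne', mul_zero, zero_mul]
  norm_num

lemma Window.eventually_layerSmall (W : S.Window c T₀ r) (E : S.EntrySmall c T₀ r u₀) :
    ∀ᶠ δ in 𝓝[>] (0 : ℝ), S.LayerSmall T₀ u₀ δ := by
  have hg₀ := S.g₀_pos
  have hu₀ := E.u₀_pos
  have hcs := S.crossingSpeed_pos
  have hvL := S.vLow_pos T₀
  have hgvL : 0 < S.g₀ * S.vLow T₀ := mul_pos hg₀ hvL
  have huL : 0 < S.uLow T₀ u₀ := lt_min (by positivity) (by positivity)
  have small {f : ℝ → ℝ} (hf : Continuous f) {b : ℝ} (h : f 0 < b) :=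
    eventually_lt_of_continuous hf h
  filter_upwards [small continuous_id (b := S.uLow T₀ u₀) huL,
    small continuous_id (b := S.U T₀ / 2) (by simpa using W.U_pos),
    small continuous_id (b := S.g₀ * u₀) (by simpa using mul_pos hg₀ hu₀),
    small (f := fun δ => S.layerConst * δ) (b := u₀) (by fun_prop) (by simpa using hu₀),
    small (f := fun δ => 2 * δ) (b := S.crossingSpeed) (by fun_prop) (by simpa using hcs),
    small (f := fun δ => u₀ + δ) (b := S.crossingSpeed) (by fun_prop)
      (by linarith [E.u₀_lt_crossingSpeed, mul_pos hg₀ hu₀]),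
    small (f := fun δ => u₀ + S.g₀ * (S.layerConst * δ + 2 * u₀)) (b := S.crossingSpeed)
      (by fun_prop) (by simpa using E.u₀_lt_crossingSpeed),
    small (f := fun δ => S.tail.cHigh * δ) (b := 1) (by fun_prop) (by simp),
    small (f := fun δ => S.tail.cHigh * δ * S.yMax) (b := S.g₀ * S.vLow T₀ / 4) (by fun_prop)
      (by simpa using hgvL),
    small (f := fun δ => δ * (1 + S.v₀)) (b := S.g₀ * S.vLow T₀) (by fun_prop)
      (by simpa using hgvL),
    small (f := fun δ => 2 * (S.errorConst * δ) ^ 2) (b := u₀ ^ 2) (by fun_prop)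
      (by simpa using pow_pos hu₀ 2),
    small (f := fun δ => S.tail.L * δ * S.yMax) (b := S.uLow T₀ u₀ ^ 2) (by fun_prop)
      (by simpa using pow_pos huL 2),
    S.eventually_contraction_le T₀] with δ h₁ h₂ h₃ h₄ h₅ h₆ h₇ h₈ h₉ h₁₀ h₁₁ h₁₂ h₁₃
  exact ⟨h₁.le, h₂, h₃.le, h₄, h₅.le, h₆, h₇.le, h₈.le, h₉.le, h₁₀.le, h₁₁.le, h₁₂.le, h₁₃.le⟩

/-! ### The transition map of a half system -/

/-- `T` is the first time at which `u` comes down to the level `a`. -/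
structure IsFirstHit (u : ℝ → ℝ) (a T : ℝ) : Prop where
  nonneg : 0 ≤ T
  eq : u T = a
  lt : ∀ t ∈ Ico 0 T, a < u t

lemma IsFirstHit.unique {a T T' : ℝ} (h : IsFirstHit u a T) (h' : IsFirstHit u a T') : T = T' :=
  le_antisymm (not_lt.1 fun hlt => (h.lt T' ⟨h'.nonneg, hlt⟩).ne' h'.eq)
    (not_lt.1 fun hlt => (h'.lt T ⟨h.nonneg, hlt⟩).ne' h.eq)

/-- A solution goes from the section `u = u₀` to the section `u = -u₀` in time `T ≤ Tmax` and
is `c`-close to the limiting orbit, in the sense of sets. -/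
structure Passage (S : HalfSystem) (c u₀ Tmax ε : ℝ) (u v : ℝ → ℝ) (T : ℝ) : Prop where
  T_pos : 0 < T
  T_le : T ≤ Tmax
  isFirstHit : IsFirstHit u (-u₀) T
  abs_v_lt : |v T| < 3 * u₀
  speed_pos : 0 < S.speed ε (u T) (v T)
  exists_limit_near : ∀ t ∈ Icc 0 T, ∃ s, 0 ≤ s ∧ |u t - S.U s| ≤ c ∧ |v t - S.V s| ≤ c
  exists_near_limit : ∀ s, 0 ≤ s → ∃ t ∈ Icc 0 T, |u t - S.U s| ≤ c ∧ |v t - S.V s| ≤ c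

/-- Every entering solution passes the half system, and the transition map between the sections
`u = u₀` and `u = -u₀` contracts by the factor `1 / 2`. -/
structure HalfPassage (S : HalfSystem) (c u₀ Tmax ε e μ : ℝ) : Prop where
  exists_passage : ∀ u v, S.IsEntering u₀ ε e μ u v → ∃ T, S.Passage c u₀ Tmax ε u v T
  contraction : ∀ u₁ v₁ u₂ v₂ T₁ T₂, S.IsEntering u₀ ε e μ u₁ v₁ → S.IsEntering u₀ ε e μ u₂ v₂ →
    IsFirstHit u₁ (-u₀) T₁ → IsFirstHit u₂ (-u₀) T₂ →
    |v₁ T₁ - v₂ T₂| ≤ 1 / 2 * |v₁ 0 - v₂ 0|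

lemma Descent.isFirstHit (D : S.Descent c u₀ T₀ ρ δ ε te u v) (C : S.Thresholds c T₀ r u₀ δ) :
    IsFirstHit u (-u₀) te :=
  ⟨(C.T₀_pos.trans D.T₀_lt).le, D.u_te, D.neg_lt_u⟩

lemma IsEntering.exists_passage (E : S.IsEntering u₀ ε e μ u v) (P : S.Scaling ρ δ ε e μ)
    (C : S.Thresholds c T₀ r u₀ δ) : ∃ T, S.Passage c u₀ (S.passageTime T₀ ρ δ) ε u v T := by
  obtain ⟨te, D⟩ := E.exists_descent P C
  exact ⟨te, {
    T_pos := C.T₀_pos.trans D.T₀_lt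
    T_le := D.le_passageTime
    isFirstHit := D.isFirstHit C
    abs_v_lt := D.abs_v_te_lt
    speed_pos := D.speed_pos te ⟨D.T₀_lt.le, le_rfl⟩
    exists_limit_near := E.exists_limit_near P C D
    exists_near_limit := E.exists_near_limit P C D }⟩

lemma Thresholds.halfPassage (C : S.Thresholds c T₀ r u₀ δ) (P : S.Scaling ρ δ ε e μ) :
    S.HalfPassage c u₀ (S.passageTime T₀ ρ δ) ε e μ where
  exists_passage _ _ E := E.exists_passage P C
  contraction u₁ v₁ u₂ v₂ T₁ T₂ E₁ E₂ h₁ h₂ := by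
    obtain ⟨te₁, D₁⟩ := E₁.exists_descent P C
    obtain ⟨te₂, D₂⟩ := E₂.exists_descent P C
    rw [h₁.unique (D₁.isFirstHit C), h₂.unique (D₂.isFirstHit C)]
    exact E₁.abs_sub_at_exit_le E₂ P C D₁ D₂

lemma eventually_halfPassage (S : HalfSystem) (hc : 0 < c) :
    ∀ᶠ u₀ in 𝓝[>] (0 : ℝ), ∀ᶠ δ in 𝓝[>] (0 : ℝ),
      ∀ ρ ε e μ, S.Scaling ρ δ ε e μ → ∃ Tmax, S.HalfPassage c u₀ Tmax ε e μ := by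
  obtain ⟨T₀, r, W⟩ := S.exists_window hc
  filter_upwards [W.eventually_entrySmall] with u₀ E
  filter_upwards [W.eventually_layerSmall E] with δ L ρ ε e μ P
  exact ⟨_, Thresholds.halfPassage ⟨W, E, L⟩ P⟩

end HalfSystem

/-! ### Flows of bounded Lipschitz vector fields -/

section Flow

variable {E : Type*} [NormedAddCommGroup E] [NormedSpace ℝ E]

/-- `Φ p` is the solution of `ẋ = F x` with initial value `p`, for all times; `F` is Lipschitz. -/
structure IsFlow (F : E → E) (K : ℝ≥0) (Φ : E → ℝ → E) : Prop where
  lipschitz : LipschitzWith K F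
  apply_zero : ∀ p, Φ p 0 = p
  hasDerivAt : ∀ p t, HasDerivAt (Φ p) (F (Φ p t)) t

section Existence

variable {F : E → E} {K B : ℝ≥0}

lemma exists_hasDerivAt_Ioo [CompleteSpace E] (hF : LipschitzWith K F) (hB : ∀ p, ‖F p‖ ≤ B)
    (p : E) (n : ℕ) :
    ∃ f : ℝ → E, f 0 = p ∧ ∀ t ∈ Ioo (-(n : ℝ)) n, HasDerivAt f (F (f t)) t := by
  have hn : (0 : ℝ) ≤ n := n.cast_nonneg
  have hPL : IsPicardLindelof (fun _ => F)
      (⟨0, neg_nonpos.2 hn, hn⟩ : Icc (-(n : ℝ)) n) p (B * n) 0 B K :=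
    .of_time_independent (fun x _ => hB x) hF.lipschitzOnWith (by simp)
  obtain ⟨f, hf₀, hf⟩ := hPL.exists_eq_forall_mem_Icc_hasDerivWithinAt₀
  exact ⟨f, hf₀, fun t ht =>
    (hf t (Ioo_subset_Icc_self ht)).hasDerivAt (Icc_mem_nhds ht.1 ht.2)⟩

lemma eqOn_Ioo_of_hasDerivAt (hF : LipschitzWith K F) {f g : ℝ → E} {a b : ℝ}
    (hf : ∀ t ∈ Ioo (-a) a, HasDerivAt f (F (f t)) t)
    (hg : ∀ t ∈ Ioo (-b) b, HasDerivAt g (F (g t)) t) (h₀ : f 0 = g 0) {t : ℝ}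
    (hta : t ∈ Ioo (-a) a) (htb : t ∈ Ioo (-b) b) : f t = g t := by
  rw [mem_Ioo, ← abs_lt] at hta htb
  have hsub {c : ℝ} (hc : min a b ≤ c) : Ioo (-min a b) (min a b) ⊆ Ioo (-c) c :=
    Ioo_subset_Ioo (neg_le_neg hc) hc
  exact ODE_solution_unique_of_mem_Ioo (v := fun _ => F) (s := fun _ => univ) (t₀ := 0)
    (fun _ _ => hF.lipschitzOnWith)
    (abs_lt.1 (by rw [abs_zero]; exact (abs_nonneg t).trans_lt (lt_min hta htb)))
    (fun s hs => ⟨hf s (hsub (min_le_left a b) hs), trivial⟩)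
    (fun s hs => ⟨hg s (hsub (min_le_right a b) hs), trivial⟩) h₀ (abs_lt.1 (lt_min hta htb))

lemma exists_isFlow [CompleteSpace E] (hF : LipschitzWith K F) (hB : ∀ p, ‖F p‖ ≤ B) :
    ∃ Φ, IsFlow F K Φ := by
  choose f hf₀ hf using exists_hasDerivAt_Ioo hF hB
  have hmem (t : ℝ) : t ∈ Ioo (-((⌈|t|⌉₊ + 1 : ℕ) : ℝ)) ((⌈|t|⌉₊ + 1 : ℕ) : ℝ) :=
    abs_lt.1 ((Nat.le_ceil |t|).trans_lt (by push_cast; linarith))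
  refine ⟨fun p t => f p (⌈|t|⌉₊ + 1) t, hF, fun p => hf₀ p _, fun p t => ?_⟩
  refine (hf p _ t (hmem t)).congr_of_eventuallyEq ?_
  filter_upwards [Ioo_mem_nhds (hmem t).1 (hmem t).2] with s hs
  exact eqOn_Ioo_of_hasDerivAt hF (hf p _) (hf p _) ((hf₀ p _).trans (hf₀ p _).symm) (hmem s) hs

end Existence

namespace IsFlow

variable {F : E → E} {K : ℝ≥0} {Φ : E → ℝ → E} {p : E} {T : ℝ}

lemma apply_apply (H : IsFlow F K Φ) (p : E) (s t : ℝ) : Φ (Φ p s) t = Φ p (t + s) :=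
  congrFun (ODE_solution_unique_univ (v := fun _ => F) (s := fun _ => univ) (K := K)
    (f := Φ (Φ p s)) (g := fun t => Φ p (t + s)) (t₀ := 0) (fun _ => H.lipschitz.lipschitzOnWith)
    (fun t => ⟨H.hasDerivAt _ t, trivial⟩)
    (fun t => ⟨(H.hasDerivAt p (t + s)).comp_add_const t s, trivial⟩)
    (by rw [H.apply_zero, zero_add])) t

lemma continuous (H : IsFlow F K Φ) (p : E) : Continuous (Φ p) :=
  continuous_iff_continuousAt.2 fun t => (H.hasDerivAt p t).continuousAt

lemma dist_le (H : IsFlow F K Φ) (p q : E) {t : ℝ} (ht : 0 ≤ t) :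
    dist (Φ p t) (Φ q t) ≤ dist p q * Real.exp (K * t) := by
  simpa only [sub_zero] using
    dist_le_of_trajectories_ODE (v := fun _ => F) (K := K) (f := Φ p) (g := Φ q) (a := 0) (b := t)
      (δ := dist p q) (fun _ => H.lipschitz) (H.continuous p).continuousOn
      (fun s _ => (H.hasDerivAt p s).hasDerivWithinAt) (H.continuous q).continuousOn
      (fun s _ => (H.hasDerivAt q s).hasDerivWithinAt) (by rw [H.apply_zero, H.apply_zero]) t
      ⟨ht, le_rfl⟩

lemma continuous_initial (H : IsFlow F K Φ) {t : ℝ} (ht : 0 ≤ t) : Continuous fun p => Φ p t :=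
  (LipschitzWith.of_dist_le_mul (K := (Real.exp (K * t)).toNNReal) fun p q => by
    rw [Real.coe_toNNReal _ (Real.exp_pos _).le, mul_comm]
    exact H.dist_le p q ht).continuous

lemma periodic (H : IsFlow F K Φ) (h : Φ p T = p) : Function.Periodic (Φ p) T := fun t => by
  rw [← H.apply_apply, h]

end IsFlow

end Flow

/-! ### Contracting return maps -/

section ReturnMap

variable {F : ℝ × ℝ → ℝ × ℝ} {K : ℝ≥0} {Φ : ℝ × ℝ → ℝ → ℝ × ℝ}

lemma hasDerivAt_fst {f : ℝ → ℝ × ℝ} {f' : ℝ × ℝ} {t : ℝ} (h : HasDerivAt f f' t) :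
    HasDerivAt (fun t => (f t).1) f'.1 t := h.fst

lemma hasDerivAt_snd {f : ℝ → ℝ × ℝ} {f' : ℝ × ℝ} {t : ℝ} (h : HasDerivAt f f' t) :
    HasDerivAt (fun t => (f t).2) f'.2 t := h.snd

lemma IsFlow.exists_crossing (H : IsFlow F K Φ) {p : ℝ × ℝ} (hp : 0 < (F p).1) {g : ℝ}
    (hg : 0 < g) : ∃ τ > 0, (Φ p (-τ)).1 < p.1 ∧ p.1 < (Φ p τ).1 ∧
      ∀ t, |t| ≤ τ → |(Φ p t).2 - p.2| < g := by
  have hcont := H.continuous p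
  have hspeed : ∀ᶠ t in 𝓝 (0 : ℝ), 0 < (F (Φ p t)).1 :=
    (H.lipschitz.continuous.comp hcont).fst.continuousAt.eventually
      (lt_mem_nhds (by simpa only [Function.comp_apply, H.apply_zero] using hp))
  have hnear : ∀ᶠ t in 𝓝 (0 : ℝ), |(Φ p t).2 - p.2| < g :=
    (hcont.snd.sub continuous_const).abs.continuousAt.eventually
      (gt_mem_nhds (by simpa only [Pi.sub_apply, H.apply_zero, sub_self, abs_zero] using hg))
  obtain ⟨d, hd, h⟩ := Metric.eventually_nhds_iff.1 (hspeed.and hnear)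
  have hlt {t : ℝ} (ht : |t| ≤ d / 2) : dist t 0 < d := by
    rw [Real.dist_eq, sub_zero]; linarith
  have hmono : StrictMonoOn (fun t => (Φ p t).1) (Icc (-(d / 2)) (d / 2)) :=
    strictMonoOn_of_deriv_pos (convex_Icc _ _) hcont.fst.continuousOn fun t ht => by
      rw [(hasDerivAt_fst (H.hasDerivAt p t)).deriv]
      have htIcc : t ∈ Icc (-(d / 2)) (d / 2) := interior_subset ht
      exact (h (hlt (abs_le.2 htIcc))).1
  have h₀ : (0 : ℝ) ∈ Icc (-(d / 2)) (d / 2) := ⟨by linarith, by linarith⟩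
  refine ⟨d / 2, half_pos hd, ?_, ?_, fun t ht => (h (hlt ht)).2⟩
  · simpa only [H.apply_zero] using hmono ⟨le_rfl, by linarith⟩ h₀ (by linarith)
  · simpa only [H.apply_zero] using hmono h₀ ⟨by linarith, le_rfl⟩ (half_pos hd)

lemma IsFlow.exists_eventually_hit (H : IsFlow F K Φ) {p : ℝ × ℝ} (hp : 0 < (F p).1) {g : ℝ}
    (hg : 0 < g) : ∃ τ, ∀ᶠ q in 𝓝 (Φ p (-τ)),
      ∃ s, 0 ≤ s ∧ (Φ q s).1 = p.1 ∧ |(Φ q s).2 - p.2| < g := by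
  obtain ⟨τ, hτ, hbefore, hafter, hnear⟩ := H.exists_crossing hp (half_pos hg)
  have h2τ : 0 ≤ 2 * τ := by linarith
  have hcont : Continuous fun q => dist q (Φ p (-τ)) * Real.exp (K * (2 * τ)) := by fun_prop
  refine ⟨τ, ?_⟩
  filter_upwards [continuous_fst.continuousAt.eventually (gt_mem_nhds hbefore),
    (H.continuous_initial h2τ).fst.continuousAt.eventually (lt_mem_nhds
      (show p.1 < (Φ (Φ p (-τ)) (2 * τ)).1 by
        rwa [H.apply_apply, show 2 * τ + -τ = τ by ring])),
    hcont.continuousAt.eventually (gt_mem_nhds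
      (show dist (Φ p (-τ)) (Φ p (-τ)) * Real.exp (K * (2 * τ)) < g / 2 by
        rw [dist_self, zero_mul]; exact half_pos hg))] with q hq₁ hq₂ hq₃
  obtain ⟨s, hs, hqs⟩ := intermediate_value_Icc h2τ (H.continuous q).fst.continuousOn
    ⟨by rw [H.apply_zero]; exact hq₁.le, hq₂.le⟩
  refine ⟨s, hs.1, hqs, ?_⟩
  have hdist : |(Φ q s).2 - (Φ p (s + -τ)).2| < g / 2 :=
    calc |(Φ q s).2 - (Φ p (s + -τ)).2| ≤ dist (Φ q s) (Φ (Φ p (-τ)) s) := by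
          rw [H.apply_apply]; exact le_max_right _ _
      _ ≤ dist q (Φ p (-τ)) * Real.exp (K * s) := H.dist_le _ _ hs.1
      _ ≤ dist q (Φ p (-τ)) * Real.exp (K * (2 * τ)) := by gcongr; exact hs.2
      _ < g / 2 := hq₃
  have := abs_sub_le (Φ q s).2 (Φ p (s + -τ)).2 p.2
  linarith [hnear (s + -τ) (abs_le.2 ⟨by linarith [hs.1], by linarith [hs.2]⟩)]

/-- The flow has a first return map `r`, with return time `Tr`, on the vertical section
`{x₀} × [y₀ - w, y₀ + w]` in the forward invariant open set `O`; the map `r` contracts by the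
factor `1 / 2`. -/
structure IsReturnMap (F : ℝ × ℝ → ℝ × ℝ) (Φ : ℝ × ℝ → ℝ → ℝ × ℝ) (O : Set (ℝ × ℝ))
    (x₀ y₀ w Tmin Tmax : ℝ) (Tr r : ℝ → ℝ) : Prop where
  isOpen : IsOpen O
  forward_mem : ∀ p ∈ O, ∀ t, 0 ≤ t → Φ p t ∈ O
  section_mem : ∀ y, |y - y₀| ≤ w → (x₀, y) ∈ O
  w_pos : 0 < w
  Tmin_pos : 0 < Tmin
  Tmin_le : ∀ y, |y - y₀| ≤ w → Tmin ≤ Tr y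
  le_Tmax : ∀ y, |y - y₀| ≤ w → Tr y ≤ Tmax
  flow_eq : ∀ y, |y - y₀| ≤ w → Φ (x₀, y) (Tr y) = (x₀, r y)
  abs_sub_lt : ∀ y, |y - y₀| ≤ w → |r y - y₀| < w
  transversal : ∀ y, |y - y₀| ≤ w → 0 < (F (x₀, r y)).1
  contraction : ∀ y₁ y₂, |y₁ - y₀| ≤ w → |y₂ - y₀| ≤ w → |r y₁ - r y₂| ≤ 1 / 2 * |y₁ - y₂|

namespace IsReturnMap

variable {O : Set (ℝ × ℝ)} {x₀ y₀ w Tmin Tmax y ys : ℝ} {Tr r : ℝ → ℝ}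

lemma exists_fixedPoint (Q : IsReturnMap F Φ O x₀ y₀ w Tmin Tmax Tr r) :
    ∃ ys, |ys - y₀| ≤ w ∧ r ys = ys := by
  have hmaps : MapsTo r (Metric.closedBall y₀ w) (Metric.closedBall y₀ w) :=
    fun y hy => (Q.abs_sub_lt y hy).le
  have hcontr : ContractingWith (1 / 2) (hmaps.restrict r _ _) :=
    ⟨by rw [← NNReal.coe_lt_coe]; norm_num, LipschitzWith.of_dist_le_mul fun y₁ y₂ => by
      simpa [Subtype.dist_eq, Real.dist_eq] using Q.contraction y₁ y₂ y₁.2 y₂.2⟩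
  obtain ⟨ys, hys, hfix, -⟩ := hcontr.exists_fixedPoint' Metric.isClosed_closedBall.isComplete
    hmaps (Metric.mem_closedBall_self Q.w_pos.le) (edist_ne_top _ _)
  exact ⟨ys, hys, hfix⟩

lemma flow_eq_flow_return (Q : IsReturnMap F Φ O x₀ y₀ w Tmin Tmax Tr r) (H : IsFlow F K Φ)
    (hy : |y - y₀| ≤ w) (t : ℝ) : Φ (x₀, y) t = Φ (x₀, r y) (t - Tr y) := by
  rw [← Q.flow_eq y hy, H.apply_apply, sub_add_cancel]

lemma abs_return_sub_le (Q : IsReturnMap F Φ O x₀ y₀ w Tmin Tmax Tr r) (hys : |ys - y₀| ≤ w)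
    (hr : r ys = ys) (hy : |y - y₀| ≤ w) : |r y - ys| ≤ 1 / 2 * |y - ys| := by
  simpa only [hr] using Q.contraction y ys hy hys

lemma infDist_le_of_le_return (Q : IsReturnMap F Φ O x₀ y₀ w Tmin Tmax Tr r) (H : IsFlow F K Φ)
    (hy : |y - y₀| ≤ w) {t : ℝ} (ht : 0 ≤ t) (ht' : t ≤ Tr y) :
    Metric.infDist (Φ (x₀, y) t) (range (Φ (x₀, ys))) ≤ Real.exp (K * Tmax) * |y - ys| :=
  calc Metric.infDist (Φ (x₀, y) t) (range (Φ (x₀, ys)))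
      ≤ dist (Φ (x₀, y) t) (Φ (x₀, ys) t) := Metric.infDist_le_dist_of_mem (mem_range_self t)
    _ ≤ dist (x₀, y) (x₀, ys) * Real.exp (K * t) := H.dist_le _ _ ht
    _ ≤ |y - ys| * Real.exp (K * Tmax) := by
        rw [dist_prod_same_left, Real.dist_eq]
        have := ht'.trans (Q.le_Tmax y hy)
        gcongr
    _ = Real.exp (K * Tmax) * |y - ys| := mul_comm _ _

lemma infDist_le_of_le_mul (Q : IsReturnMap F Φ O x₀ y₀ w Tmin Tmax Tr r) (H : IsFlow F K Φ)
    (hys : |ys - y₀| ≤ w) (hr : r ys = ys) (n : ℕ) :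
    ∀ y, |y - y₀| ≤ w → ∀ t, 0 ≤ t → t ≤ n * Tmin →
      Metric.infDist (Φ (x₀, y) t) (range (Φ (x₀, ys))) ≤ Real.exp (K * Tmax) * |y - ys| := by
  induction n with
  | zero =>
    intro y hy t ht ht'
    rw [Nat.cast_zero, zero_mul] at ht'
    exact Q.infDist_le_of_le_return H hy ht
      (ht'.trans (Q.Tmin_pos.le.trans (Q.Tmin_le y hy)))
  | succ n ih =>
    intro y hy t ht ht'
    rcases le_total t (Tr y) with h | h
    · exact Q.infDist_le_of_le_return H hy ht h
    · rw [Nat.cast_succ, add_one_mul] at ht'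
      rw [Q.flow_eq_flow_return H hy]
      refine (ih (r y) (Q.abs_sub_lt y hy).le _ (sub_nonneg.2 h)
        (by linarith [Q.Tmin_le y hy])).trans ?_
      exact mul_le_mul_of_nonneg_left (by
        linarith [Q.abs_return_sub_le hys hr hy, abs_nonneg (y - ys)]) (Real.exp_pos _).le

lemma exists_forall_infDist_le (Q : IsReturnMap F Φ O x₀ y₀ w Tmin Tmax Tr r)
    (H : IsFlow F K Φ) (hys : |ys - y₀| ≤ w) (hr : r ys = ys) (n : ℕ) :
    ∀ y, |y - y₀| ≤ w → ∃ t₀, ∀ t, t₀ ≤ t →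
      Metric.infDist (Φ (x₀, y) t) (range (Φ (x₀, ys))) ≤
        Real.exp (K * Tmax) * ((1 / 2) ^ n * |y - ys|) := by
  induction n with
  | zero =>
    intro y hy
    refine ⟨0, fun t ht => ?_⟩
    obtain ⟨m, hm⟩ := exists_nat_ge (t / Tmin)
    rw [pow_zero, one_mul]
    exact Q.infDist_le_of_le_mul H hys hr m y hy t ht ((div_le_iff₀ Q.Tmin_pos).1 hm)
  | succ n ih =>
    intro y hy
    obtain ⟨t₀, h⟩ := ih (r y) (Q.abs_sub_lt y hy).le
    refine ⟨t₀ + Tr y, fun t ht => ?_⟩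
    rw [Q.flow_eq_flow_return H hy]
    refine (h _ (le_sub_iff_add_le.2 ht)).trans ?_
    rw [pow_succ, mul_assoc ((1 / 2 : ℝ) ^ n)]
    gcongr
    exact Q.abs_return_sub_le hys hr hy

lemma tendsto_infDist (Q : IsReturnMap F Φ O x₀ y₀ w Tmin Tmax Tr r) (H : IsFlow F K Φ)
    (hys : |ys - y₀| ≤ w) (hr : r ys = ys) (hy : |y - y₀| ≤ w) :
    Tendsto (fun t => Metric.infDist (Φ (x₀, y) t) (range (Φ (x₀, ys)))) atTop (𝓝 0) := by
  have hlim : Tendsto (fun n : ℕ => Real.exp (K * Tmax) * ((1 / 2 : ℝ) ^ n * |y - ys|)) atTop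
      (𝓝 0) := by
    simpa only [zero_mul, mul_zero] using
      ((_root_.tendsto_pow_atTop_nhds_zero_of_lt_one (by norm_num) (by norm_num)).mul_const
        |y - ys|).const_mul (Real.exp (K * Tmax))
  refine Metric.tendsto_atTop.2 fun η hη => ?_
  obtain ⟨n, hn⟩ := (hlim.eventually (gt_mem_nhds hη)).exists
  obtain ⟨t₀, h⟩ := Q.exists_forall_infDist_le H hys hr n y hy
  refine ⟨t₀, fun t ht => ?_⟩
  rw [Real.dist_eq, sub_zero, abs_of_nonneg Metric.infDist_nonneg]
  exact (h t ht).trans_lt hn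

lemma tendsto_infDist_of_hit (Q : IsReturnMap F Φ O x₀ y₀ w Tmin Tmax Tr r) (H : IsFlow F K Φ)
    (hys : |ys - y₀| ≤ w) (hr : r ys = ys) {p : ℝ × ℝ} {s : ℝ} (hs₁ : (Φ p s).1 = x₀)
    (hs₂ : |(Φ p s).2 - y₀| ≤ w) :
    Tendsto (fun t => Metric.infDist (Φ p t) (range (Φ (x₀, ys)))) atTop (𝓝 0) := by
  refine ((Q.tendsto_infDist H hys hr hs₂).comp
    (tendsto_atTop_add_const_right atTop (-s) tendsto_id)).congr fun t => ?_
  rw [Function.comp_apply, ← hs₁, Prod.mk.eta, H.apply_apply, id, neg_add_cancel_right]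

theorem exists_attracting_orbit (Q : IsReturnMap F Φ O x₀ y₀ w Tmin Tmax Tr r)
    (H : IsFlow F K Φ) :
    ∃ ys, |ys - y₀| ≤ w ∧ Function.Periodic (Φ (x₀, ys)) (Tr ys) ∧
      ∃ A, IsOpen A ∧ range (Φ (x₀, ys)) ⊆ A ∧ A ⊆ O ∧
        ∀ p ∈ A, Tendsto (fun t => Metric.infDist (Φ p t) (range (Φ (x₀, ys)))) atTop (𝓝 0) := by
  obtain ⟨ys, hys, hr⟩ := Q.exists_fixedPoint
  have hper : Function.Periodic (Φ (x₀, ys)) (Tr ys) := H.periodic (by rw [Q.flow_eq ys hys, hr])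
  have hT : 0 < Tr ys := Q.Tmin_pos.trans_le (Q.Tmin_le ys hys)
  have hlt : |ys - y₀| < w := by simpa only [hr] using Q.abs_sub_lt ys hys
  have hpos : 0 < (F (x₀, ys)).1 := by simpa only [hr] using Q.transversal ys hys
  obtain ⟨τ, hτ⟩ := H.exists_eventually_hit hpos (sub_pos.2 hlt)
  obtain ⟨N, hN, hNopen, hτN⟩ := eventually_nhds_iff.1 hτ
  refine ⟨ys, hys, hper, O ∩ ⋃ t ∈ Ici (0 : ℝ), (fun p => Φ p t) ⁻¹' N,
    Q.isOpen.inter (isOpen_biUnion fun t ht => hNopen.preimage (H.continuous_initial ht)),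
    ?_, inter_subset_left, ?_⟩
  · rintro _ ⟨t, rfl⟩
    constructor
    · obtain ⟨s, hs, hts⟩ := hper.exists_mem_Ico hT t 0
      exact hts ▸ Q.forward_mem _ (Q.section_mem ys hys) s hs.1
    · obtain ⟨s, hs, hτs⟩ := hper.exists_mem_Ico hT (-τ) t
      refine mem_iUnion₂.2 ⟨s - t, sub_nonneg.2 hs.1, ?_⟩
      rwa [mem_preimage, H.apply_apply, sub_add_cancel, ← hτs]
  · rintro p ⟨-, hp⟩
    obtain ⟨t, -, ht⟩ := mem_iUnion₂.1 hp
    obtain ⟨s, -, hs₁, hs₂⟩ := hN _ ht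
    rw [H.apply_apply] at hs₁ hs₂
    exact Q.tendsto_infDist_of_hit H hys hr hs₁
      (by linarith [abs_sub_le (Φ p (s + t)).2 ys y₀])

end IsReturnMap

end ReturnMap

/-! ### The two half systems of the oscillator -/

lemma nonempty_algebraicTail {R f : ℝ → ℝ} {b : ℝ} {k : ℕ} (hb : 0 < b) (hf : ContDiff ℝ 1 f)
    (hf₀ : 0 < f 0) (hR : ∀ z, 0 < z → R z = b * ((z ^ k)⁻¹ * f z⁻¹)) (hRpos : ∀ z, 0 < R z) :
    Nonempty (AlgebraicTail R k) := by
  have hinv {z : ℝ} (hz : 1 ≤ z) : z⁻¹ ∈ Icc (0 : ℝ) 1 :=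
    ⟨inv_nonneg.2 (by linarith), inv_le_one_of_one_le₀ hz⟩
  have hR' {z : ℝ} (hz : 1 ≤ z) : R z = b * f z⁻¹ * (z⁻¹) ^ k := by
    rw [hR z (by linarith), inv_pow]; ring
  have hfpos : ∀ s ∈ Icc (0 : ℝ) 1, 0 < f s := fun s hs => by
    rcases hs.1.eq_or_lt with rfl | h
    · exact hf₀
    · have hpos := hRpos s⁻¹
      rw [hR _ (inv_pos.2 h), inv_inv] at hpos
      exact pos_of_mul_pos_right (pos_of_mul_pos_right hpos hb.le) (by positivity)
  have hne : (Icc (0 : ℝ) 1).Nonempty := nonempty_Icc.2 zero_le_one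
  obtain ⟨m, hm, hmin⟩ := isCompact_Icc.exists_isMinOn hne hf.continuous.continuousOn
  obtain ⟨M, hM, hmax⟩ := isCompact_Icc.exists_isMaxOn hne hf.continuous.continuousOn
  have hcont : ContDiff ℝ 1 fun s => b * f s * s ^ k := by fun_prop
  obtain ⟨L, hL⟩ := hcont.locallyLipschitz.locallyLipschitzOn.exists_lipschitzOnWith_of_compact
    (isCompact_Icc (a := (0 : ℝ)) (b := 1))
  refine ⟨⟨b * f m, b * f M, L, mul_pos hb (hfpos m hm), mul_pos hb (hfpos M hM), L.2,
    fun z hz => ?_, fun z hz => ?_, fun z₁ z₂ h₁ h₂ => ?_⟩⟩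
  · rw [hR' hz]
    have := (hinv hz).1
    gcongr
    exact hmin (hinv hz)
  · rw [hR' hz]
    have := (hinv hz).1
    gcongr
    exact hmax (hinv hz)
  · rw [hR' h₁, hR' h₂]
    simpa only [Real.dist_eq] using hL.dist_le_mul _ (hinv h₁) _ (hinv h₂)

/-- The sigmoid `φ`, the parameters of the oscillator and the two arcs `γR` and `γL` of the singular
cycle. The assumption of algebraic decay enters through the tails of `β (1 - φ)` at `+∞` and of
`β φ` at `-∞`. -/
structure Model where
  φ : ℝ → ℝ
  k : ℕ
  α : ℝ
  β : ℝ
  γR : ℝ → ℝ × ℝ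
  γL : ℝ → ℝ × ℝ
  contDiff : ContDiff ℝ 1 φ
  φ_pos : ∀ z, 0 < φ z
  φ_lt_one : ∀ z, φ z < 1
  monotone : Monotone φ
  one_le_k : 1 ≤ k
  tailR : AlgebraicTail (fun z => β * (1 - φ z)) k
  tailL : AlgebraicTail (fun z => β * φ (-z)) k
  α_pos : 0 < α
  β_pos : 0 < β
  γR_zero : γR 0 = (1, 1 / α)
  hasDerivAt_γR : ∀ t, HasDerivAt γR ((α + β) * (γR t).2 - (γR t).1, 1 - (α + β) * (γR t).2) t
  tendsto_γR : Tendsto γR atTop (𝓝 (1, 1 / (α + β)))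
  γL_zero : γL 0 = (1, 1 / (α + β))
  hasDerivAt_γL : ∀ t, HasDerivAt γL (α * (γL t).2 - (γL t).1, 1 - α * (γL t).2) t
  tendsto_γL : Tendsto γL atTop (𝓝 (1, 1 / α))

namespace Model

lemma add_pos (M : Model) : 0 < M.α + M.β := _root_.add_pos M.α_pos M.β_pos

lemma one_div_sub_pos (M : Model) : 0 < 1 / M.α - 1 / (M.α + M.β) :=
  sub_pos.2 (one_div_lt_one_div_of_lt M.α_pos (lt_add_of_pos_right _ M.β_pos))

lemma lt_gain (M : Model) (z : ℝ) : M.α < M.α + M.β * M.φ z :=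
  lt_add_of_pos_right _ (mul_pos M.β_pos (M.φ_pos z))

lemma gain_lt (M : Model) (z : ℝ) : M.α + M.β * M.φ z < M.α + M.β :=
  add_lt_add_right (mul_lt_of_lt_one_right M.β_pos (M.φ_lt_one z)) _

lemma yMin_pos (M : Model) : 0 < 1 / (2 * (M.α + M.β)) :=
  one_div_pos.2 (mul_pos two_pos M.add_pos)

lemma yMin_lt_yMax (M : Model) : 1 / (2 * (M.α + M.β)) < 2 / M.α := by
  have := M.α_pos; have := M.β_pos
  rw [div_lt_div_iff₀ (by positivity) M.α_pos]
  linarith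

lemma hasDerivAt_φ (M : Model) (z : ℝ) : HasDerivAt M.φ (deriv M.φ z) z :=
  (M.contDiff.differentiable one_ne_zero z).hasDerivAt

/-- The half system `1 ≤ x`, with `u = x - 1` and `v = y - 1 / (α + β)`. -/
noncomputable def right (M : Model) : HalfSystem where
  g₀ := M.α + M.β
  σ := 1
  gMin := M.α
  gMax := M.α + M.β
  yMin := 1 / (2 * (M.α + M.β))
  yMax := 2 / M.α
  v₀ := 1 / M.α - 1 / (M.α + M.β)
  k := M.k
  R z := M.β * (1 - M.φ z)
  R' z := M.β * -deriv M.φ z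
  U t := (M.γR t).1 - 1
  V t := (M.γR t).2 - 1 / (M.α + M.β)
  one_le_k := M.one_le_k
  g₀_pos := M.add_pos
  σ_eq := .inl rfl
  gMin_pos := M.α_pos
  yMin_pos := M.yMin_pos
  yMin_le_yMax := M.yMin_lt_yMax.le
  v₀_pos := M.one_div_sub_pos
  hasDerivAt_R z := ((M.hasDerivAt_φ z).const_sub 1).const_mul M.β
  R'_nonpos _ := mul_nonpos_of_nonneg_of_nonpos M.β_pos.le (neg_nonpos.2 M.monotone.deriv_nonneg)
  R_pos z := mul_pos M.β_pos (sub_pos.2 (M.φ_lt_one z))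
  gMin_le z := by linarith [M.lt_gain z]
  le_gMax z := by linarith [M.gain_lt z]
  tail := M.tailR
  hasDerivAt_U t := ((hasDerivAt_fst (M.hasDerivAt_γR t)).sub_const 1).congr_deriv (by
    have := M.add_pos.ne'
    field_simp
    ring)
  hasDerivAt_V t := ((hasDerivAt_snd (M.hasDerivAt_γR t)).sub_const _).congr_deriv (by
    have := M.add_pos.ne'
    field_simp
    ring)
  U_zero := by rw [M.γR_zero, sub_self]
  V_zero := by rw [M.γR_zero]
  tendsto_U := by simpa only [sub_self] using M.tendsto_γR.fst_nhds.sub_const 1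
  tendsto_V := by simpa only [sub_self] using M.tendsto_γR.snd_nhds.sub_const (1 / (M.α + M.β))

/-- The half system `x ≤ 1`, with `u = 1 - x` and `v = 1 / α - y`. -/
noncomputable def left (M : Model) : HalfSystem where
  g₀ := M.α
  σ := -1
  gMin := M.α
  gMax := M.α + M.β
  yMin := 1 / (2 * (M.α + M.β))
  yMax := 2 / M.α
  v₀ := 1 / M.α - 1 / (M.α + M.β)
  k := M.k
  R z := M.β * M.φ (-z)
  R' z := M.β * (deriv M.φ (-z) * -1)
  U t := 1 - (M.γL t).1
  V t := 1 / M.α - (M.γL t).2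
  one_le_k := M.one_le_k
  g₀_pos := M.α_pos
  σ_eq := .inr rfl
  gMin_pos := M.α_pos
  yMin_pos := M.yMin_pos
  yMin_le_yMax := M.yMin_lt_yMax.le
  v₀_pos := M.one_div_sub_pos
  hasDerivAt_R z := ((M.hasDerivAt_φ (-z)).comp z (hasDerivAt_neg z)).const_mul M.β
  R'_nonpos z := mul_nonpos_of_nonneg_of_nonpos M.β_pos.le (by
    linarith [M.monotone.deriv_nonneg (x := -z)])
  R_pos z := mul_pos M.β_pos (M.φ_pos (-z))
  gMin_le z := by linarith [M.lt_gain (-z)]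
  le_gMax z := by linarith [M.gain_lt (-z)]
  tail := M.tailL
  hasDerivAt_U t := ((hasDerivAt_fst (M.hasDerivAt_γL t)).const_sub 1).congr_deriv (by
    have := M.α_pos.ne'
    field_simp
    ring)
  hasDerivAt_V t := ((hasDerivAt_snd (M.hasDerivAt_γL t)).const_sub _).congr_deriv (by
    have := M.α_pos.ne'
    field_simp)
  U_zero := by rw [M.γL_zero, sub_self]
  V_zero := by rw [M.γL_zero]
  tendsto_U := by simpa only [sub_self] using M.tendsto_γL.fst_nhds.const_sub 1
  tendsto_V := by simpa only [sub_self] using M.tendsto_γL.snd_nhds.const_sub (1 / M.α)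

end Model

/-! ### The flow in a trapping box -/

/-- The projection of the plane onto the rectangle `[a, b] × [c, d]`. -/
noncomputable def clamp {a b c d : ℝ} (hab : a ≤ b) (hcd : c ≤ d) (p : ℝ × ℝ) : ℝ × ℝ :=
  (projIcc a b hab p.1, projIcc c d hcd p.2)

section Clamp

variable {a b c d : ℝ} (hab : a ≤ b) (hcd : c ≤ d)

lemma clamp_mem (p : ℝ × ℝ) : clamp hab hcd p ∈ Icc a b ×ˢ Icc c d :=
  ⟨Subtype.prop _, Subtype.prop _⟩

lemma clamp_of_mem {p : ℝ × ℝ} (hp : p ∈ Icc a b ×ˢ Icc c d) : clamp hab hcd p = p := by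
  rw [clamp, projIcc_of_mem hab hp.1, projIcc_of_mem hcd hp.2]

lemma clamp_fst_of_mem {p : ℝ × ℝ} (hp : p.1 ∈ Icc a b) : (clamp hab hcd p).1 = p.1 := by
  rw [clamp, projIcc_of_mem hab hp]

lemma clamp_snd_of_mem {p : ℝ × ℝ} (hp : p.2 ∈ Icc c d) : (clamp hab hcd p).2 = p.2 := by
  rw [clamp, projIcc_of_mem hcd hp]

lemma lipschitzWith_clamp : LipschitzWith 1 (clamp hab hcd) := by
  refine .of_dist_le_mul fun p q => ?_
  have h₁ := (LipschitzWith.projIcc hab).dist_le_mul p.1 q.1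
  have h₂ := (LipschitzWith.projIcc hcd).dist_le_mul p.2 q.2
  rw [NNReal.coe_one, one_mul] at h₁ h₂ ⊢
  exact max_le_max h₁ h₂

lemma exists_lipschitzWith_comp_clamp {G : ℝ × ℝ → ℝ × ℝ} (hG : ContDiff ℝ 1 G) :
    ∃ K B : ℝ≥0, LipschitzWith K (G ∘ clamp hab hcd) ∧ ∀ p, ‖G (clamp hab hcd p)‖ ≤ B := by
  have hcompact : IsCompact (Icc a b ×ˢ Icc c d) := isCompact_Icc.prod isCompact_Icc
  obtain ⟨K, hK⟩ :=
    hG.locallyLipschitz.locallyLipschitzOn.exists_lipschitzOnWith_of_compact hcompact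
  obtain ⟨B, hB⟩ := hcompact.exists_bound_of_continuousOn hG.continuous.continuousOn
  refine ⟨K, B.toNNReal, ?_, fun p => (hB _ (clamp_mem hab hcd p)).trans (Real.le_coe_toNNReal B)⟩
  simpa only [mul_one, lipschitzOnWith_univ] using
    hK.comp (lipschitzWith_clamp hab hcd).lipschitzOnWith (s := univ)
      fun p _ => clamp_mem hab hcd p

end Clamp

namespace Model

variable {M : Model} {μ η ε : ℝ}

/-- The right end of the trapping box. -/
noncomputable def xMax (M : Model) : ℝ := 2 * (M.α + M.β) / M.α + 1

/-- An open rectangle which is forward invariant for the oscillator if `η` is close to `1` and `μ`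
is small. -/
def trappingBox (M : Model) : Set (ℝ × ℝ) :=
  Ioo 0 M.xMax ×ˢ Ioo (1 / (2 * (M.α + M.β))) (2 / M.α)

lemma two_lt_xMax (M : Model) : 2 < M.xMax := by
  have h : 2 ≤ 2 * (M.α + M.β) / M.α := by
    rw [le_div_iff₀ M.α_pos]
    linarith [M.β_pos]
  exact lt_add_of_le_of_pos h one_pos

lemma fst_sdVF_pos (M : Model) {y : ℝ} (hy : 0 < y) :
    0 < (sdVF M.φ M.α M.β μ η ε (0, y)).1 := by
  rw [sdVF, sub_zero]
  exact mul_pos (M.α_pos.trans (M.lt_gain _)) hy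

lemma fst_sdVF_neg (M : Model) {y : ℝ} (hy₀ : 0 < y) (hy : y ≤ 2 / M.α) :
    (sdVF M.φ M.α M.β μ η ε (M.xMax, y)).1 < 0 := by
  have h : (M.α + M.β * M.φ ((M.xMax - 1) / ε)) * y ≤ (M.α + M.β) * (2 / M.α) :=
    mul_le_mul (M.gain_lt _).le hy hy₀.le M.add_pos.le
  have hX : (M.α + M.β) * (2 / M.α) < M.xMax := by
    rw [xMax, mul_div_assoc', mul_comm]
    exact lt_add_one _
  exact sub_neg.2 (h.trans_lt hX)

lemma snd_sdVF_pos (M : Model) (hη : μ / (2 * (M.α + M.β)) + 1 / 2 < η) (x : ℝ) :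
    0 < (sdVF M.φ M.α M.β μ η ε (x, 1 / (2 * (M.α + M.β)))).2 := by
  have hlt := mul_lt_mul_of_pos_right (M.gain_lt ((x - 1) / ε)) M.yMin_pos
  have hα : (M.α + M.β) * (1 / (2 * (M.α + M.β))) = 1 / 2 := by
    have := M.add_pos.ne'
    field_simp
  have hμ : μ * (1 / (2 * (M.α + M.β))) = μ / (2 * (M.α + M.β)) := mul_one_div _ _
  simp only [sdVF]
  linarith

lemma snd_sdVF_neg (M : Model) (hμ : 0 ≤ μ) (hη : η < 2) (x : ℝ) :
    (sdVF M.φ M.α M.β μ η ε (x, 2 / M.α)).2 < 0 := by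
  have hy : 0 < 2 / M.α := div_pos two_pos M.α_pos
  have hlt := mul_lt_mul_of_pos_right (M.lt_gain ((x - 1) / ε)) hy
  have hα : M.α * (2 / M.α) = 2 := mul_div_cancel₀ _ M.α_pos.ne'
  have hμy := mul_nonneg hμ hy.le
  simp only [sdVF]
  linarith

/-- `Φ` is the flow of a bounded Lipschitz vector field `F` which agrees with the oscillator on the
trapping box, and the box is forward invariant. -/
structure IsTrappedFlow (M : Model) (μ η ε : ℝ) (F : ℝ × ℝ → ℝ × ℝ) (K B : ℝ≥0)
    (Φ : ℝ × ℝ → ℝ → ℝ × ℝ) : Prop extends IsFlow F K Φ where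
  norm_le : ∀ p, ‖F p‖ ≤ B
  eqOn : EqOn F (sdVF M.φ M.α M.β μ η ε) M.trappingBox
  forward_mem : ∀ p ∈ M.trappingBox, ∀ t, 0 ≤ t → Φ p t ∈ M.trappingBox

/-- The vector field of the oscillator, frozen outside the trapping box. -/
noncomputable def clampedField (M : Model) (μ η ε : ℝ) : ℝ × ℝ → ℝ × ℝ :=
  sdVF M.φ M.α M.β μ η ε ∘ clamp (zero_lt_two.trans M.two_lt_xMax).le M.yMin_lt_yMax.le

lemma forward_mem_trappingBox {K : ℝ≥0} {Φ : ℝ × ℝ → ℝ → ℝ × ℝ}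
    (H : IsFlow (M.clampedField μ η ε) K Φ) (hμ : 0 ≤ μ) (hη : η < 2)
    (hη' : μ / (2 * (M.α + M.β)) + 1 / 2 < η) {p : ℝ × ℝ} (hp : p ∈ M.trappingBox) {t : ℝ}
    (ht : 0 ≤ t) : Φ p t ∈ M.trappingBox := by
  have hX := zero_lt_two.trans M.two_lt_xMax
  have hx (s : ℝ) := hasDerivAt_fst (H.hasDerivAt p s)
  have hy (s : ℝ) := hasDerivAt_snd (H.hasDerivAt p s)
  set C := clamp hX.le M.yMin_lt_yMax.le with hC
  have hmem (s : ℝ) : C (Φ p s) ∈ _ := clamp_mem _ _ (Φ p s)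
  have hpos (s : ℝ) : 0 < (C (Φ p s)).2 := M.yMin_pos.trans_le (hmem s).2.1
  have hsplit (q : ℝ × ℝ) : M.clampedField μ η ε q =
      sdVF M.φ M.α M.β μ η ε ((C q).1, (C q).2) := rfl
  have ht' : t ∈ Icc 0 t := ⟨ht, le_rfl⟩
  have hfst {s x : ℝ} (h : (Φ p s).1 = x) (hx : x ∈ Icc 0 M.xMax) : (C (Φ p s)).1 = x := by
    rw [hC, clamp_fst_of_mem _ _ (h ▸ hx), h]
  have hsnd {s y : ℝ} (h : (Φ p s).2 = y) (hy : y ∈ Icc (1 / (2 * (M.α + M.β))) (2 / M.α)) :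
      (C (Φ p s)).2 = y := by
    rw [hC, clamp_snd_of_mem _ _ (h ▸ hy), h]
  refine ⟨⟨?_, sub_pos.1 ?_⟩, sub_pos.1 ?_, sub_pos.1 ?_⟩
  · refine forall_pos_of_deriv_pos_of_eq_zero (fun s _ => hx s)
      (by rw [H.apply_zero]; exact hp.1.1) (fun s _ h => ?_) t ht'
    rw [hsplit, hfst h ⟨le_rfl, hX.le⟩]
    exact M.fst_sdVF_pos (hpos s)
  · refine forall_pos_of_deriv_pos_of_eq_zero (fun s _ => (hx s).const_sub M.xMax)
      (by rw [H.apply_zero]; exact sub_pos.2 hp.1.2) (fun s _ h => ?_) t ht'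
    rw [hsplit, hfst (sub_eq_zero.1 h).symm ⟨hX.le, le_rfl⟩]
    exact neg_pos.2 (M.fst_sdVF_neg (hpos s) (hmem s).2.2)
  · refine forall_pos_of_deriv_pos_of_eq_zero (fun s _ => (hy s).sub_const _)
      (by rw [H.apply_zero]; exact sub_pos.2 hp.2.1) (fun s _ h => ?_) t ht'
    rw [hsplit, hsnd (sub_eq_zero.1 h) ⟨le_rfl, M.yMin_lt_yMax.le⟩]
    exact M.snd_sdVF_pos hη' _
  · refine forall_pos_of_deriv_pos_of_eq_zero (fun s _ => (hy s).const_sub _)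
      (by rw [H.apply_zero]; exact sub_pos.2 hp.2.2) (fun s _ h => ?_) t ht'
    rw [hsplit, hsnd (sub_eq_zero.1 h).symm ⟨M.yMin_lt_yMax.le, le_rfl⟩]
    exact neg_pos.2 (M.snd_sdVF_neg hμ hη _)

theorem exists_isTrappedFlow (M : Model) (ε : ℝ) (hμ : 0 ≤ μ) (hη : η < 2)
    (hη' : μ / (2 * (M.α + M.β)) + 1 / 2 < η) :
    ∃ F K B Φ, M.IsTrappedFlow μ η ε F K B Φ := by
  have hsmooth : ContDiff ℝ 1 (sdVF M.φ M.α M.β μ η ε) := by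
    have := M.contDiff
    unfold sdVF
    fun_prop
  obtain ⟨K, B, hK, hB⟩ := exists_lipschitzWith_comp_clamp
    (zero_lt_two.trans M.two_lt_xMax).le M.yMin_lt_yMax.le hsmooth
  obtain ⟨Φ, H⟩ := exists_isFlow hK hB
  refine ⟨_, K, B, Φ, H, hB, fun p hp => ?_, fun p hp t ht =>
    forward_mem_trappingBox H hμ hη hη' hp ht⟩
  exact congrArg _ (clamp_of_mem _ _ (prod_mono Ioo_subset_Icc_self Ioo_subset_Icc_self hp))

end Model

/-! ### Transition maps of the oscillator -/

namespace HalfSystem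

variable (S : HalfSystem)

/-- The point of the plane with half-system coordinates `(u, v)`. -/
noncomputable def toPlane (u v : ℝ) : ℝ × ℝ := (1 + S.σ * u, S.y v)

/-- The half-system coordinate `u` of a point of the plane. -/
def coordU (p : ℝ × ℝ) : ℝ := S.σ * (p.1 - 1)

/-- The half-system coordinate `v` of a point of the plane. -/
noncomputable def coordV (p : ℝ × ℝ) : ℝ := S.σ * (p.2 - 1 / S.g₀)

lemma σ_mul_self : S.σ * S.σ = 1 := by
  rcases S.σ_eq with h | h <;> norm_num [h]

lemma y_coordV (p : ℝ × ℝ) : S.y (S.coordV p) = p.2 := by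
  rw [y, coordV, ← mul_assoc, S.σ_mul_self, one_mul, add_sub_cancel]

lemma toPlane_coord (p : ℝ × ℝ) : S.toPlane (S.coordU p) (S.coordV p) = p := by
  rw [toPlane, y_coordV, coordU, ← mul_assoc, S.σ_mul_self, one_mul, add_sub_cancel]

lemma coordU_section (u y : ℝ) : S.coordU (1 + S.σ * u, y) = u := by
  rw [coordU, add_sub_cancel_left, ← mul_assoc, S.σ_mul_self, one_mul]

lemma abs_y_sub_y (v w : ℝ) : |S.y v - S.y w| = |v - w| := by
  rw [y, y, add_sub_add_left_eq_sub, ← mul_sub, abs_mul, S.abs_σ, one_mul]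

lemma abs_coordV_sub_coordV (p q : ℝ × ℝ) : |S.coordV p - S.coordV q| = |p.2 - q.2| := by
  rw [← S.abs_y_sub_y, S.y_coordV, S.y_coordV]

lemma dist_toPlane_le {u v u' v' c : ℝ} (hu : |u - u'| ≤ c) (hv : |v - v'| ≤ c) :
    dist (S.toPlane u v) (S.toPlane u' v') ≤ c := by
  refine max_le ?_ ?_
  · rwa [toPlane, toPlane, Real.dist_eq, add_sub_add_left_eq_sub, ← mul_sub, abs_mul, S.abs_σ,
      one_mul]
  · rwa [toPlane, toPlane, Real.dist_eq, S.abs_y_sub_y]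

end HalfSystem

/-- On the interval of radius `w` about `y₀`, `m` is the transition map of the flow `Φ` from the
vertical line through `x` to the one through `x'` and `T` is the transition time. The orbits in
between are `c`-close to the arc `γ`, in the sense of sets. -/
structure IsTransitionMap (Φ : ℝ × ℝ → ℝ → ℝ × ℝ) (γ : ℝ → ℝ × ℝ) (x y₀ x' y₀' w c Tmax : ℝ)
    (T m : ℝ → ℝ) : Prop where
  T_pos : ∀ y, |y - y₀| ≤ w → 0 < T y
  T_le : ∀ y, |y - y₀| ≤ w → T y ≤ Tmax
  flow_eq : ∀ y, |y - y₀| ≤ w → Φ (x, y) (T y) = (x', m y)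
  abs_sub_lt : ∀ y, |y - y₀| ≤ w → |m y - y₀'| < w
  contraction : ∀ y₁ y₂, |y₁ - y₀| ≤ w → |y₂ - y₀| ≤ w → |m y₁ - m y₂| ≤ 1 / 2 * |y₁ - y₂|
  exists_arc_near : ∀ y, |y - y₀| ≤ w → ∀ t ∈ Icc 0 (T y), ∃ s, 0 ≤ s ∧
    dist (Φ (x, y) t) (γ s) ≤ c
  exists_near_arc : ∀ y, |y - y₀| ≤ w → ∀ s, 0 ≤ s → ∃ t ∈ Icc 0 (T y),
    dist (γ s) (Φ (x, y) t) ≤ c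

namespace Model

/-- The half system `S` describes the oscillator on one side of the line `x = 1`, and `γ` is the arc
of the singular cycle on this side. -/
structure IsSide (M : Model) (S : HalfSystem) (γ : ℝ → ℝ × ℝ) : Prop where
  gain_eq : ∀ z, M.α + M.β * M.φ z = S.g₀ - S.σ * S.R (S.σ * z)
  yMin_eq : S.yMin = 1 / (2 * (M.α + M.β))
  yMax_eq : S.yMax = 2 / M.α
  entry_mem : S.y S.v₀ ∈ Icc (1 / (M.α + M.β)) (1 / M.α)
  arc_eq : ∀ t, γ t = S.toPlane (S.U t) (S.V t)

lemma right_entry (M : Model) : M.right.y M.right.v₀ = 1 / M.α := by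
  simp only [HalfSystem.y, right, one_mul, add_sub_cancel]

lemma left_entry (M : Model) : M.left.y M.left.v₀ = 1 / (M.α + M.β) := by
  simp only [HalfSystem.y, left, neg_one_mul, neg_sub, add_sub_cancel]

lemma isSide_right (M : Model) : M.IsSide M.right M.γR where
  gain_eq z := by simp only [right, one_mul]; ring
  yMin_eq := rfl
  yMax_eq := rfl
  entry_mem := by
    rw [M.right_entry]
    exact right_mem_Icc.2 (sub_pos.1 M.one_div_sub_pos).le
  arc_eq t := by
    simp only [HalfSystem.toPlane, HalfSystem.y, right, one_mul, add_sub_cancel, Prod.mk.eta]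

lemma isSide_left (M : Model) : M.IsSide M.left M.γL where
  gain_eq z := by simp only [left, neg_one_mul, neg_neg, sub_neg_eq_add]
  yMin_eq := rfl
  yMax_eq := rfl
  entry_mem := by
    rw [M.left_entry]
    exact left_mem_Icc.2 (sub_pos.1 M.one_div_sub_pos).le
  arc_eq t := by
    simp only [HalfSystem.toPlane, HalfSystem.y, left, neg_one_mul, neg_sub, add_sub_cancel,
      Prod.mk.eta]

variable {M : Model} {S : HalfSystem} {γ : ℝ → ℝ × ℝ} {μ η ε u₀ y c Tmax : ℝ}
  {F : ℝ × ℝ → ℝ × ℝ} {K B : ℝ≥0} {Φ : ℝ × ℝ → ℝ → ℝ × ℝ}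

lemma IsTrappedFlow.hasDerivAt_sdVF (Y : M.IsTrappedFlow μ η ε F K B Φ) {p : ℝ × ℝ}
    (hp : p ∈ M.trappingBox) {t : ℝ} (ht : 0 ≤ t) :
    HasDerivAt (Φ p) (sdVF M.φ M.α M.β μ η ε (Φ p t)) t :=
  Y.eqOn (Y.forward_mem p hp t ht) ▸ Y.hasDerivAt p t

namespace IsSide

lemma fst_sdVF (I : M.IsSide S γ) (p : ℝ × ℝ) :
    S.σ * (sdVF M.φ M.α M.β μ η ε p).1 = -S.speed ε (S.coordU p) (S.coordV p) := by
  have hg := mul_one_div_cancel S.g₀_pos.ne'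
  rw [HalfSystem.speed, S.y_coordV, HalfSystem.coordU, HalfSystem.coordV, sdVF, I.gain_eq,
    mul_div_assoc]
  linear_combination -(S.R (S.σ * ((p.1 - 1) / ε)) * p.2) * S.σ_mul_self + S.σ * hg

lemma snd_sdVF (I : M.IsSide S γ) (p : ℝ × ℝ) :
    S.σ * (sdVF M.φ M.α M.β μ η ε p).2 = S.σ * (η - 1 - μ / S.g₀) - μ * S.coordV p - S.coordU p +
      S.speed ε (S.coordU p) (S.coordV p) := by
  have hg := mul_one_div_cancel S.g₀_pos.ne'
  rw [HalfSystem.speed, S.y_coordV, HalfSystem.coordU, HalfSystem.coordV, sdVF, add_assoc,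
    I.gain_eq, mul_div_assoc]
  linear_combination (S.R (S.σ * ((p.1 - 1) / ε)) * p.2) * S.σ_mul_self - S.σ * hg

lemma isSolution (I : M.IsSide S γ) (Y : M.IsTrappedFlow μ η ε F K B Φ) {p : ℝ × ℝ}
    (hp : p ∈ M.trappingBox) :
    S.IsSolution ε (S.σ * (η - 1 - μ / S.g₀)) μ (S.coordU ∘ Φ p) (S.coordV ∘ Φ p) where
  hasDerivAt_u t ht := (((hasDerivAt_fst (Y.hasDerivAt_sdVF hp ht)).sub_const 1).const_mul
    S.σ).congr_deriv (I.fst_sdVF _)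
  hasDerivAt_v t ht := (((hasDerivAt_snd (Y.hasDerivAt_sdVF hp ht)).sub_const _).const_mul
    S.σ).congr_deriv (I.snd_sdVF _)
  yMin_le t ht := by
    rw [Function.comp_apply, S.y_coordV, I.yMin_eq]
    exact (Y.forward_mem p hp t ht).2.1.le
  le_yMax t ht := by
    rw [Function.comp_apply, S.y_coordV, I.yMax_eq]
    exact (Y.forward_mem p hp t ht).2.2.le

lemma section_mem (I : M.IsSide S γ) (h₀ : 0 < u₀) (h₁ : u₀ < 1)
    (h₂ : 3 * u₀ < 1 / (2 * (M.α + M.β))) (hy : |y - S.y S.v₀| ≤ 3 * u₀) :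
    (1 + S.σ * u₀, y) ∈ M.trappingBox := by
  have hσ : |S.σ * u₀| < 1 := by rwa [abs_mul, S.abs_σ, one_mul, abs_of_pos h₀]
  have hx := abs_lt.1 hσ
  have hy := abs_le.1 hy
  have hX := M.two_lt_xMax
  have hhalf : 1 / (M.α + M.β) = 2 * (1 / (2 * (M.α + M.β))) := by
    have := M.add_pos.ne'
    field_simp
  have hdouble : 2 / M.α = 2 * (1 / M.α) := by ring
  have hlt := M.one_div_sub_pos
  obtain ⟨hlow, hhigh⟩ := I.entry_mem
  exact ⟨⟨by linarith, by linarith⟩, by linarith, by linarith⟩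

lemma isEntering (I : M.IsSide S γ) (Y : M.IsTrappedFlow μ η ε F K B Φ)
    (hp : (1 + S.σ * u₀, y) ∈ M.trappingBox) (hy : |y - S.y S.v₀| ≤ 3 * u₀) :
    S.IsEntering u₀ ε (S.σ * (η - 1 - μ / S.g₀)) μ (S.coordU ∘ Φ (1 + S.σ * u₀, y))
      (S.coordV ∘ Φ (1 + S.σ * u₀, y)) where
  toIsSolution := I.isSolution Y hp
  u_zero := by rw [Function.comp_apply, Y.apply_zero, S.coordU_section]
  abs_v_zero_sub_le := by
    rwa [Function.comp_apply, Y.apply_zero, ← S.abs_y_sub_y, S.y_coordV]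

theorem exists_transitionMap (I : M.IsSide S γ) (Y : M.IsTrappedFlow μ η ε F K B Φ)
    (H : S.HalfPassage c u₀ Tmax ε (S.σ * (η - 1 - μ / S.g₀)) μ) (h₀ : 0 < u₀) (h₁ : u₀ < 1)
    (h₂ : 3 * u₀ < 1 / (2 * (M.α + M.β))) :
    ∃ T m, IsTransitionMap Φ γ (1 + S.σ * u₀) (S.y S.v₀) (1 - S.σ * u₀) (1 / S.g₀) (3 * u₀) c
      Tmax T m ∧ ∀ y, |y - S.y S.v₀| ≤ 3 * u₀ → S.σ * (F (1 - S.σ * u₀, m y)).1 < 0 := by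
  have hE {y : ℝ} (hy : |y - S.y S.v₀| ≤ 3 * u₀) :=
    I.isEntering Y (I.section_mem h₀ h₁ h₂ hy) hy
  choose! T hT using fun y (hy : |y - S.y S.v₀| ≤ 3 * u₀) => H.exists_passage _ _ (hE hy)
  have hexit {y : ℝ} (hy : |y - S.y S.v₀| ≤ 3 * u₀) :
      Φ (1 + S.σ * u₀, y) (T y) = (1 - S.σ * u₀, (Φ (1 + S.σ * u₀, y) (T y)).2) := by
    have hu : S.coordU (Φ (1 + S.σ * u₀, y) (T y)) = -u₀ := (hT y hy).isFirstHit.eq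
    conv_lhs => rw [← S.toPlane_coord (Φ _ _), HalfSystem.toPlane, S.y_coordV]
    rw [hu, mul_neg, ← sub_eq_add_neg]
  have harc {p : ℝ × ℝ} {s : ℝ} (hu : |S.coordU p - S.U s| ≤ c)
      (hv : |S.coordV p - S.V s| ≤ c) : dist p (γ s) ≤ c := by
    rw [I.arc_eq, ← S.toPlane_coord p]
    exact S.dist_toPlane_le hu hv
  refine ⟨T, fun y => (Φ (1 + S.σ * u₀, y) (T y)).2, ⟨fun y hy => (hT y hy).T_pos,
    fun y hy => (hT y hy).T_le, fun y hy => hexit hy, fun y hy => ?_, fun y₁ y₂ hy₁ hy₂ => ?_,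
    fun y hy t ht => ?_, fun y hy s hs => ?_⟩, fun y hy => ?_⟩
  · simpa only [Function.comp_apply, HalfSystem.coordV, abs_mul, S.abs_σ, one_mul] using
      (hT y hy).abs_v_lt
  · simpa only [Function.comp_apply, S.abs_coordV_sub_coordV, Y.apply_zero] using
      H.contraction _ _ _ _ _ _ (hE hy₁) (hE hy₂) (hT y₁ hy₁).isFirstHit (hT y₂ hy₂).isFirstHit
  · obtain ⟨s, hs, hu, hv⟩ := (hT y hy).exists_limit_near t ht
    exact ⟨s, hs, harc hu hv⟩
  · obtain ⟨t, ht, hu, hv⟩ := (hT y hy).exists_near_limit s hs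
    exact ⟨t, ht, dist_comm (γ s) _ ▸ harc hu hv⟩
  · rw [← hexit hy, Y.eqOn (Y.forward_mem _ (I.section_mem h₀ h₁ h₂ hy) _ (hT y hy).T_pos.le),
      I.fst_sdVF]
    exact neg_neg_of_pos (hT y hy).speed_pos

end IsSide

end Model

/-! ### The limit cycle -/

namespace IsTransitionMap

variable {F : ℝ × ℝ → ℝ × ℝ} {K B : ℝ≥0} {Φ : ℝ × ℝ → ℝ → ℝ × ℝ} {O : Set (ℝ × ℝ)}
  {γ γ' : ℝ → ℝ × ℝ} {x y₀ x' y₀' w c Tmax Tmax' y : ℝ} {T m T' m' : ℝ → ℝ}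

lemma abs_sub_le (P : IsTransitionMap Φ γ x y₀ x' y₀' w c Tmax T m) (hy : |y - y₀| ≤ w) :
    |m y - y₀'| ≤ w :=
  (P.abs_sub_lt y hy).le

lemma flow_add (P : IsTransitionMap Φ γ x y₀ x' y₀' w c Tmax T m) (H : IsFlow F K Φ)
    (hy : |y - y₀| ≤ w) (t : ℝ) : Φ (x, y) (t + T y) = Φ (x', m y) t := by
  rw [← H.apply_apply, P.flow_eq y hy]

lemma le_T (P : IsTransitionMap Φ γ x y₀ x' y₀' w c Tmax T m) (H : IsFlow F K Φ)
    (hB : ∀ p, ‖F p‖ ≤ B) (hy : |y - y₀| ≤ w) : |x' - x| / (B + 1) ≤ T y := by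
  have hT := (P.T_pos y hy).le
  have hspeed := norm_image_sub_le_of_norm_deriv_le_segment'
    (fun t _ => (H.hasDerivAt (x, y) t).hasDerivWithinAt) (fun t _ => hB _) (T y)
    (right_mem_Icc.2 hT)
  rw [P.flow_eq y hy, H.apply_zero, sub_zero] at hspeed
  rw [div_le_iff₀ (by positivity)]
  calc |x' - x| ≤ B * T y := (norm_fst_le ((x', m y) - (x, y))).trans hspeed
    _ ≤ T y * (B + 1) := by linarith

lemma isReturnMap (P : IsTransitionMap Φ γ x y₀ x' y₀' w c Tmax T m)
    (P' : IsTransitionMap Φ γ' x' y₀' x y₀ w c Tmax' T' m') (H : IsFlow F K Φ)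
    (hB : ∀ p, ‖F p‖ ≤ B) (hO : IsOpen O) (hforward : ∀ p ∈ O, ∀ t, 0 ≤ t → Φ p t ∈ O)
    (hsection : ∀ y, |y - y₀| ≤ w → (x, y) ∈ O) (hw : 0 < w) (hx : x' ≠ x)
    (htrans : ∀ y, |y - y₀'| ≤ w → 0 < (F (x, m' y)).1) :
    IsReturnMap F Φ O x y₀ w (|x' - x| / (B + 1)) (Tmax + Tmax') (fun y => T y + T' (m y))
      (m' ∘ m) where
  isOpen := hO
  forward_mem := hforward
  section_mem := hsection
  w_pos := hw
  Tmin_pos := div_pos (abs_pos.2 (sub_ne_zero.2 hx)) (by positivity)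
  Tmin_le y hy := (P.le_T H hB hy).trans (le_add_of_nonneg_right (P'.T_pos _ (P.abs_sub_le hy)).le)
  le_Tmax y hy := add_le_add (P.T_le y hy) (P'.T_le _ (P.abs_sub_le hy))
  flow_eq y hy := by
    rw [add_comm, P.flow_add H hy, P'.flow_eq _ (P.abs_sub_le hy), Function.comp_apply]
  abs_sub_lt y hy := P'.abs_sub_lt _ (P.abs_sub_le hy)
  transversal y hy := htrans _ (P.abs_sub_le hy)
  contraction y₁ y₂ hy₁ hy₂ := by
    have h := P.contraction y₁ y₂ hy₁ hy₂
    have h' := P'.contraction _ _ (P.abs_sub_le hy₁) (P.abs_sub_le hy₂)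
    have := abs_nonneg (y₁ - y₂)
    rw [Function.comp_apply, Function.comp_apply]
    linarith

lemma hausdorffDist_le (P : IsTransitionMap Φ γ x y₀ x' y₀' w c Tmax T m)
    (P' : IsTransitionMap Φ γ' x' y₀' x y₀ w c Tmax' T' m') (H : IsFlow F K Φ) (hc : 0 ≤ c)
    (hy : |y - y₀| ≤ w) (hper : Function.Periodic (Φ (x, y)) (T y + T' (m y))) :
    Metric.hausdorffDist (range (Φ (x, y))) (γ '' Ici 0 ∪ γ' '' Ici 0) ≤ c := by
  have hy' := P.abs_sub_le hy
  refine Metric.hausdorffDist_le_of_mem_dist hc ?_ ?_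
  · rintro _ ⟨t, rfl⟩
    obtain ⟨s, hs, hst⟩ := hper.exists_mem_Ico₀ (_root_.add_pos (P.T_pos y hy) (P'.T_pos _ hy')) t
    rw [hst]
    rcases le_total s (T y) with h | h
    · obtain ⟨τ, hτ, hd⟩ := P.exists_arc_near y hy s ⟨hs.1, h⟩
      exact ⟨γ τ, .inl ⟨τ, hτ, rfl⟩, hd⟩
    · obtain ⟨τ, hτ, hd⟩ := P'.exists_arc_near _ hy' (s - T y)
        ⟨sub_nonneg.2 h, sub_le_iff_le_add'.2 hs.2.le⟩
      rw [← P.flow_add H hy, sub_add_cancel] at hd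
      exact ⟨γ' τ, .inr ⟨τ, hτ, rfl⟩, hd⟩
  · rintro _ (⟨s, hs, rfl⟩ | ⟨s, hs, rfl⟩)
    · obtain ⟨t, -, hd⟩ := P.exists_near_arc y hy s hs
      exact ⟨_, ⟨t, rfl⟩, hd⟩
    · obtain ⟨t, -, hd⟩ := P'.exists_near_arc _ hy' s hs
      rw [← P.flow_add H hy] at hd
      exact ⟨_, ⟨_, rfl⟩, hd⟩

end IsTransitionMap

/-- The vector field `F` has an attracting limit cycle (the image of a nonconstant periodic solution
to which all forward solutions from an open neighborhood converge) within Hausdorff distance `c` of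
`Γ`. -/
def HasAttractingCycleNear (F : ℝ × ℝ → ℝ × ℝ) (Γ : Set (ℝ × ℝ)) (c : ℝ) : Prop :=
  ∃ sol : ℝ → ℝ × ℝ,
    (∀ t, HasDerivAt sol (F (sol t)) t) ∧
    (∃ T > 0, ∀ t, sol (t + T) = sol t) ∧
    (∃ t s : ℝ, sol t ≠ sol s) ∧
    (∃ U : Set (ℝ × ℝ), IsOpen U ∧ range sol ⊆ U ∧
      ∀ p ∈ U, ∃ ψ : ℝ → ℝ × ℝ, ψ 0 = p ∧ (∀ t : ℝ, 0 ≤ t → HasDerivAt ψ (F (ψ t)) t) ∧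
        Tendsto (fun t => Metric.infDist (ψ t) (range sol)) atTop (𝓝 0)) ∧
    Metric.hausdorffDist (range sol) Γ ≤ c

namespace Model

/-- The singular cycle: the two arcs and the two corners on the switching line. -/
def singularCycle (M : Model) : Set (ℝ × ℝ) :=
  M.γR '' Ici 0 ∪ M.γL '' Ici 0 ∪ {(1, 1 / M.α), (1, 1 / (M.α + M.β))}

lemma singularCycle_eq (M : Model) : M.singularCycle = M.γR '' Ici 0 ∪ M.γL '' Ici 0 := by
  refine union_eq_left.2 (pair_subset (.inl ?_) (.inr ?_))
  · exact ⟨0, self_mem_Ici, M.γR_zero⟩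
  · exact ⟨0, self_mem_Ici, M.γL_zero⟩

variable {M : Model} {μ η ε u₀ c Tmax Tmax' : ℝ} {F : ℝ × ℝ → ℝ × ℝ} {K B : ℝ≥0}
  {Φ : ℝ × ℝ → ℝ → ℝ × ℝ}

lemma IsTrappedFlow.exists_right_transitionMap (Y : M.IsTrappedFlow μ η ε F K B Φ)
    (H : M.right.HalfPassage c u₀ Tmax ε (M.right.σ * (η - 1 - μ / M.right.g₀)) μ) (h₀ : 0 < u₀)
    (h₁ : u₀ < 1) (h₂ : 3 * u₀ < 1 / (2 * (M.α + M.β))) :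
    ∃ T m, IsTransitionMap Φ M.γR (1 + u₀) (1 / M.α) (1 - u₀) (1 / (M.α + M.β)) (3 * u₀) c Tmax
      T m := by
  obtain ⟨T, m, P, -⟩ := M.isSide_right.exists_transitionMap Y H h₀ h₁ h₂
  rw [M.right_entry, show M.right.σ = 1 from rfl, one_mul] at P
  exact ⟨T, m, P⟩

lemma IsTrappedFlow.exists_left_transitionMap (Y : M.IsTrappedFlow μ η ε F K B Φ)
    (H : M.left.HalfPassage c u₀ Tmax ε (M.left.σ * (η - 1 - μ / M.left.g₀)) μ) (h₀ : 0 < u₀)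
    (h₁ : u₀ < 1) (h₂ : 3 * u₀ < 1 / (2 * (M.α + M.β))) :
    ∃ T m, IsTransitionMap Φ M.γL (1 - u₀) (1 / (M.α + M.β)) (1 + u₀) (1 / M.α) (3 * u₀) c Tmax
      T m ∧ ∀ y, |y - 1 / (M.α + M.β)| ≤ 3 * u₀ → 0 < (F (1 + u₀, m y)).1 := by
  obtain ⟨T, m, P, hF⟩ := M.isSide_left.exists_transitionMap Y H h₀ h₁ h₂
  rw [M.left_entry, show M.left.σ = -1 from rfl, neg_one_mul, sub_neg_eq_add,
    ← sub_eq_add_neg] at P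
  rw [M.left_entry, show M.left.σ = -1 from rfl, neg_one_mul, sub_neg_eq_add] at hF
  exact ⟨T, m, P, fun y hy => by linarith [hF y hy]⟩

theorem IsTrappedFlow.hasAttractingCycleNear (Y : M.IsTrappedFlow μ η ε F K B Φ) (hc : 0 ≤ c)
    (hR : M.right.HalfPassage c u₀ Tmax ε (M.right.σ * (η - 1 - μ / M.right.g₀)) μ)
    (hL : M.left.HalfPassage c u₀ Tmax' ε (M.left.σ * (η - 1 - μ / M.left.g₀)) μ)
    (h₀ : 0 < u₀) (h₁ : u₀ < 1) (h₂ : 3 * u₀ < 1 / (2 * (M.α + M.β))) :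
    HasAttractingCycleNear (sdVF M.φ M.α M.β μ η ε) M.singularCycle c := by
  obtain ⟨T, m, P⟩ := Y.exists_right_transitionMap hR h₀ h₁ h₂
  obtain ⟨T', m', P', hF⟩ := Y.exists_left_transitionMap hL h₀ h₁ h₂
  have hx : 1 - u₀ ≠ 1 + u₀ := by linarith
  have hsection (y : ℝ) (hy : |y - 1 / M.α| ≤ 3 * u₀) : (1 + u₀, y) ∈ M.trappingBox := by
    rw [← one_mul u₀]
    exact M.isSide_right.section_mem h₀ h₁ h₂ (by rwa [M.right_entry])
  have Q := P.isReturnMap P' Y.toIsFlow Y.norm_le (isOpen_Ioo.prod isOpen_Ioo) Y.forward_mem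
    hsection (by linarith) hx hF
  obtain ⟨y, hy, hper, U, hU, hrange, hUbox, hconv⟩ := Q.exists_attracting_orbit Y.toIsFlow
  have hmem (t : ℝ) : Φ (1 + u₀, y) t ∈ M.trappingBox := hUbox (hrange ⟨t, rfl⟩)
  refine ⟨Φ (1 + u₀, y), fun t => Y.eqOn (hmem t) ▸ Y.hasDerivAt _ t,
    ⟨_, Q.Tmin_pos.trans_le (Q.Tmin_le y hy), hper⟩, ⟨T y, 0, fun h => hx ?_⟩,
    ⟨U, hU, hrange, fun p hp => ⟨Φ p, Y.apply_zero p,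
      fun t ht => Y.hasDerivAt_sdVF (hUbox hp) ht, hconv p hp⟩⟩, ?_⟩
  · rw [P.flow_eq y hy, Y.apply_zero] at h
    exact congrArg Prod.fst h
  · rw [M.singularCycle_eq]
    exact P.hausdorffDist_le P' Y.toIsFlow hc hy hper

end Model

/-! ### Parameters near the heteroclinic values -/

lemma tendsto_rpow_nhdsGT_zero {p : ℝ} (hp : 0 < p) :
    Tendsto (fun ε : ℝ => ε ^ p) (𝓝[>] 0) (𝓝[>] 0) := by
  refine tendsto_nhdsWithin_of_tendsto_nhds_of_eventually_within _ ?_ ?_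
  · have h := (Real.continuousAt_rpow_const 0 p (.inr hp.le)).tendsto
    rw [Real.zero_rpow hp.ne'] at h
    exact h.mono_left nhdsWithin_le_nhds
  · filter_upwards [self_mem_nhdsWithin] with ε hε using Real.rpow_pos_of_pos hε p

lemma pow_eq_rpow_div_pow_succ {ε : ℝ} (hε : 0 ≤ ε) (k : ℕ) :
    ε ^ k = (ε ^ ((k : ℝ) / ((k : ℝ) + 1))) ^ (k + 1) := by
  rw [← Real.rpow_mul_natCast hε, Nat.cast_add_one, div_mul_cancel₀ _ (by positivity),
    Real.rpow_natCast]

lemma le_mul_of_pow_eq_pow_succ {ε δ r : ℝ} {k : ℕ} (hk : k ≠ 0) (hδ : 0 ≤ δ) (hr : 0 ≤ r)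
    (h : ε ^ k = δ ^ (k + 1)) (hδr : δ ≤ r ^ k) : ε ≤ r * δ := by
  refine le_of_pow_le_pow_left₀ hk (by positivity) ?_
  rw [h, pow_succ', mul_pow]
  gcongr

lemma window_bounds {a b ρ h μ₁ η₁ : ℝ} (hab : 0 < a - b) (hhρ : h ≤ ρ)
    (hh : 2 * h ≤ ρ * (a - b)) (hμ₁ : 0 ≤ μ₁) (hl : -h + μ₁ * a < η₁) (hr : η₁ < h + μ₁ * b) :
    μ₁ ≤ ρ ∧ |η₁ - μ₁ * a| ≤ ρ ∧ |η₁ - μ₁ * b| ≤ ρ := by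
  have hμab : 0 ≤ μ₁ * (a - b) := by positivity
  refine ⟨le_of_mul_le_mul_right ?_ hab, abs_le.2 ⟨?_, ?_⟩, abs_le.2 ⟨?_, ?_⟩⟩ <;> linarith

namespace HalfSystem

variable {S : HalfSystem} {ρ δ ε μ₁ η₁ : ℝ}

lemma scaling_of_abs_sub_le (hρ : 0 < ρ) (hρ' : ρ ≤ 1 / 6)
    (hlayer : (S.g₀ * S.layerConst + 2) * (3 * ρ) ≤ S.tail.cLow * S.yMin) (hδ : 0 < δ)
    (hδ₁ : δ ≤ 1) (hδg : δ ≤ S.g₀) (hδρ : δ ≤ (3 * ρ) ^ S.k) (hε : 0 < ε)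
    (hpow : ε ^ S.k = δ ^ (S.k + 1)) (hμ₁ : 0 ≤ μ₁) (hμρ : μ₁ ≤ ρ)
    (hη : |η₁ - μ₁ * (1 / S.g₀)| ≤ ρ) :
    S.Scaling ρ δ ε (S.σ * (1 + δ * η₁ - 1 - δ * μ₁ / S.g₀)) (δ * μ₁) where
  ρ_pos := hρ
  ρ_le := hρ'
  ρ_le_layer := hlayer
  δ_pos := hδ
  δ_le_one := hδ₁
  δ_le_g₀ := hδg
  ε_pos := hε
  ε_pow := hpow
  ε_le := le_mul_of_pow_eq_pow_succ (Nat.one_le_iff_ne_zero.1 S.one_le_k) hδ.le (by positivity)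
    hpow hδρ
  abs_e_le := by
    rw [abs_mul, S.abs_σ, one_mul,
      show 1 + δ * η₁ - 1 - δ * μ₁ / S.g₀ = (η₁ - μ₁ * (1 / S.g₀)) * δ by ring, abs_mul,
      abs_of_pos hδ]
    gcongr
  μ_nonneg := by positivity
  μ_le := by
    rw [mul_comm]
    gcongr

lemma eventually_layer_le (S : HalfSystem) :
    ∀ᶠ ρ in 𝓝[>] (0 : ℝ), (S.g₀ * S.layerConst + 2) * (3 * ρ) < S.tail.cLow * S.yMin := by
  refine eventually_lt_of_continuous (by fun_prop) ?_
  rw [mul_zero, mul_zero]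
  exact mul_pos S.tail.cLow_pos S.yMin_pos

end HalfSystem

namespace Model

open HalfSystem

variable {c ρ μ₁ η₁ : ℝ}

lemma exists_section (M : Model) (hc : 0 < c) :
    ∃ u₀, 0 < u₀ ∧ u₀ < 1 ∧ 3 * u₀ < 1 / (2 * (M.α + M.β)) ∧
      ∀ S ∈ ({M.right, M.left} : Set HalfSystem), ∀ᶠ δ in 𝓝[>] (0 : ℝ), ∀ ρ ε e μ,
        S.Scaling ρ δ ε e μ → ∃ Tmax, S.HalfPassage c u₀ Tmax ε e μ := by
  have h₁ : ∀ᶠ u₀ in 𝓝[>] (0 : ℝ), u₀ < 1 := eventually_lt_of_continuous continuous_id one_pos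
  have h₂ : ∀ᶠ u₀ in 𝓝[>] (0 : ℝ), 3 * u₀ < 1 / (2 * (M.α + M.β)) :=
    eventually_lt_of_continuous (by fun_prop) (by rw [mul_zero]; exact M.yMin_pos)
  have h₀ : ∀ᶠ u₀ in 𝓝[>] (0 : ℝ), 0 < u₀ := self_mem_nhdsWithin
  obtain ⟨u₀, hR, hL, h₀, h₁, h₂⟩ := (M.right.eventually_halfPassage hc |>.and <|
    M.left.eventually_halfPassage hc |>.and <| h₀.and <| h₁.and h₂).exists
  exact ⟨u₀, h₀, h₁, h₂, by rintro _ (rfl | rfl) <;> assumption⟩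

lemma eventually_trapping (M : Model) (μ₁ η₁ : ℝ) :
    ∀ᶠ δ in 𝓝[>] (0 : ℝ),
      1 + δ * η₁ < 2 ∧ δ * μ₁ / (2 * (M.α + M.β)) + 1 / 2 < 1 + δ * η₁ := by
  refine Filter.Eventually.and (eventually_lt_of_continuous (by fun_prop) (by norm_num)) ?_
  have h : ∀ᶠ δ in 𝓝[>] (0 : ℝ), δ * μ₁ / (2 * (M.α + M.β)) + 1 / 2 - δ * η₁ < 1 :=
    eventually_lt_of_continuous (by fun_prop) (by norm_num)
  filter_upwards [h] with δ hδ
  linarith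

lemma eventually_hasAttractingCycleNear (M : Model) (hc : 0 < c) (hρ : 0 < ρ) (hρ' : ρ ≤ 1 / 6)
    (hlayer : ∀ S ∈ ({M.right, M.left} : Set HalfSystem),
      (S.g₀ * S.layerConst + 2) * (3 * ρ) ≤ S.tail.cLow * S.yMin)
    (hμ₁ : 0 ≤ μ₁) (hμρ : μ₁ ≤ ρ) (hηL : |η₁ - μ₁ * (1 / M.α)| ≤ ρ)
    (hηR : |η₁ - μ₁ * (1 / (M.α + M.β))| ≤ ρ) :
    ∀ᶠ δ in 𝓝[>] (0 : ℝ), ∀ ε, 0 < ε → ε ^ M.k = δ ^ (M.k + 1) →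
      HasAttractingCycleNear (sdVF M.φ M.α M.β (δ * μ₁) (1 + δ * η₁) ε) M.singularCycle c := by
  obtain ⟨u₀, h₀, h₁, h₂, hpassage⟩ := M.exists_section hc
  have hsmall {b : ℝ} (hb : 0 < b) : ∀ᶠ δ in 𝓝[>] (0 : ℝ), δ < b :=
    eventually_lt_of_continuous continuous_id hb
  filter_upwards [self_mem_nhdsWithin, hpassage _ (.inl rfl), hpassage _ (.inr rfl),
    M.eventually_trapping μ₁ η₁, hsmall one_pos, hsmall M.α_pos,
    hsmall (show 0 < (3 * ρ) ^ M.k by positivity)]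
    with δ hδ hR hL ⟨hη, hη'⟩ hδ₁ hδα hδρ ε hε hpow
  have hδ : 0 < δ := hδ
  have hscalingR := scaling_of_abs_sub_le (S := M.right) hρ hρ' (hlayer _ (.inl rfl)) hδ hδ₁.le
    (hδα.le.trans (le_add_of_nonneg_right M.β_pos.le)) hδρ.le hε hpow hμ₁ hμρ hηR
  have hscalingL := scaling_of_abs_sub_le (S := M.left) hρ hρ' (hlayer _ (.inr rfl)) hδ hδ₁.le
    hδα.le hδρ.le hε hpow hμ₁ hμρ hηL
  obtain ⟨_, hR⟩ := hR _ _ _ _ hscalingR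
  obtain ⟨_, hL⟩ := hL _ _ _ _ hscalingL
  obtain ⟨F, K, B, Φ, Y⟩ := M.exists_isTrappedFlow ε (mul_nonneg hδ.le hμ₁) hη hη'
  exact Y.hasAttractingCycleNear hc.le hR hL h₀ h₁ h₂

lemma exists_halfWidth (M : Model) :
    ∃ h > 0, ∀ μ₁, 0 ≤ μ₁ → ∀ η₁, -h + μ₁ / M.α < η₁ → η₁ < h + μ₁ / (M.α + M.β) →
      ∀ c, 0 < c → ∀ᶠ δ in 𝓝[>] (0 : ℝ), ∀ ε, 0 < ε → ε ^ M.k = δ ^ (M.k + 1) →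
        HasAttractingCycleNear (sdVF M.φ M.α M.β (δ * μ₁) (1 + δ * η₁) ε) M.singularCycle c := by
  have hρ₀ : ∀ᶠ ρ in 𝓝[>] (0 : ℝ), 0 < ρ := self_mem_nhdsWithin
  have hρ₁ : ∀ᶠ ρ in 𝓝[>] (0 : ℝ), ρ < 1 / 6 :=
    eventually_lt_of_continuous continuous_id (by norm_num)
  obtain ⟨ρ, hρ, hρ', hlayerR, hlayerL⟩ := (hρ₀.and <| hρ₁.and <|
    M.right.eventually_layer_le.and M.left.eventually_layer_le).exists
  set d := 1 / M.α - 1 / (M.α + M.β)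
  have hd : 0 < d := M.one_div_sub_pos
  refine ⟨min ρ (ρ * d / 2), by positivity, fun μ₁ hμ₁ η₁ hl hr c hc => ?_⟩
  rw [← mul_one_div μ₁] at hl hr
  obtain ⟨hμρ, hηL, hηR⟩ := window_bounds hd (min_le_left ρ (ρ * d / 2))
    (by linarith [min_le_right ρ (ρ * d / 2)]) hμ₁ hl hr
  refine M.eventually_hasAttractingCycleNear hc hρ hρ'.le ?_ hμ₁ hμρ hηL hηR
  rintro _ (rfl | rfl)
  exacts [hlayerR.le, hlayerL.le]

theorem exists_relaxation_oscillations (M : Model) :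
    ∃ ηL₀ : ℝ, ηL₀ < 0 ∧ ∃ ηR₀ : ℝ, 0 < ηR₀ ∧ ∀ μ₁ : ℝ, 0 ≤ μ₁ → ∀ η₁ : ℝ,
      ηL₀ + μ₁ / M.α < η₁ → η₁ < ηR₀ + μ₁ / (M.α + M.β) → ∀ c : ℝ, 0 < c →
      ∃ ε₀ > 0, ∀ ε : ℝ, 0 < ε → ε < ε₀ →
        HasAttractingCycleNear (sdVF M.φ M.α M.β (ε ^ ((M.k : ℝ) / ((M.k : ℝ) + 1)) * μ₁)
          (1 + ε ^ ((M.k : ℝ) / ((M.k : ℝ) + 1)) * η₁) ε) M.singularCycle c := by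
  obtain ⟨h, hh, hcycle⟩ := M.exists_halfWidth
  refine ⟨-h, neg_neg_of_pos hh, h, hh, fun μ₁ hμ₁ η₁ hl hr c hc => ?_⟩
  have hk : 0 < (M.k : ℝ) := Nat.cast_pos.2 M.one_le_k
  obtain ⟨ε₀, hε₀, hsub⟩ := mem_nhdsGT_iff_exists_Ioo_subset.1 <|
    (tendsto_rpow_nhdsGT_zero (p := M.k / (M.k + 1)) (by positivity)).eventually
      (hcycle μ₁ hμ₁ η₁ hl hr c hc)
  exact ⟨ε₀, hε₀, fun ε hε hεε₀ =>
    hsub ⟨hε, hεε₀⟩ ε hε (pow_eq_rpow_div_pow_succ hε.le M.k)⟩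

end Model

end SubstrateDepletion

open SubstrateDepletion in
theorem existence_of_relaxation_oscillations_general
    (φ φL φR : ℝ → ℝ) (k : ℕ) (α β : ℝ)
    (hφ : ContDiff ℝ 1 φ) (hφ0 : ∀ z, 0 < φ z) (hφ1 : ∀ z, φ z < 1) (hmono : Monotone φ)
    (hk : 1 ≤ k) (hφL : ContDiff ℝ 1 φL) (hφR : ContDiff ℝ 1 φR)
    (hφL0 : 0 < φL 0) (hφR0 : 0 < φR 0)
    (hAL : ∀ z : ℝ, z < 0 → φ z = ((-z) ^ k)⁻¹ * φL (-z)⁻¹)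
    (hAR : ∀ z : ℝ, 0 < z → φ z = 1 - (z ^ k)⁻¹ * φR z⁻¹)
    (hα : 0 < α) (hβ : 0 < β)
    (γR γL : ℝ → ℝ × ℝ)
    (hγR0 : γR 0 = (1, 1 / α))
    (hγR : ∀ t, HasDerivAt γR
      ((α + β) * (γR t).2 - (γR t).1, 1 - (α + β) * (γR t).2) t)
    (hγRlim : Tendsto γR atTop (𝓝 (1, 1 / (α + β))))
    (hγL0 : γL 0 = (1, 1 / (α + β)))
    (hγL : ∀ t, HasDerivAt γL
      (α * (γL t).2 - (γL t).1, 1 - α * (γL t).2) t)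
    (hγLlim : Tendsto γL atTop (𝓝 (1, 1 / α))) :
    ∃ ηL0 : ℝ, ηL0 < 0 ∧ ∃ ηR0 : ℝ, 0 < ηR0 ∧
      ∀ μ₁ : ℝ, 0 ≤ μ₁ → ∀ η₁ : ℝ,
        ηL0 + μ₁ / α < η₁ → η₁ < ηR0 + μ₁ / (α + β) →
        ∀ c : ℝ, 0 < c →
        ∃ ε₀ > 0, ∀ ε : ℝ, 0 < ε → ε < ε₀ →
          HasAttractingCycleNear
            (sdVF φ α β (ε ^ ((k : ℝ) / ((k : ℝ) + 1)) * μ₁)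
              (1 + ε ^ ((k : ℝ) / ((k : ℝ) + 1)) * η₁) ε)
            (γR '' Set.Ici 0 ∪ γL '' Set.Ici 0 ∪ {(1, 1 / α), (1, 1 / (α + β))}) c := by
  obtain ⟨tailR⟩ : Nonempty (AlgebraicTail (fun z => β * (1 - φ z)) k) :=
    nonempty_algebraicTail hβ hφR hφR0
      (fun z hz => by rw [hAR z hz, sub_sub_cancel]) fun z => mul_pos hβ (sub_pos.2 (hφ1 z))
  obtain ⟨tailL⟩ : Nonempty (AlgebraicTail (fun z => β * φ (-z)) k) :=
    nonempty_algebraicTail hβ hφL hφL0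
      (fun z hz => by rw [hAL (-z) (neg_lt_zero.2 hz), neg_neg]) fun z => mul_pos hβ (hφ0 (-z))
  exact Model.exists_relaxation_oscillations
    { φ, k, α, β, γR, γL, tailR, tailL, contDiff := hφ, φ_pos := hφ0, φ_lt_one := hφ1,
      monotone := hmono, one_le_k := hk, α_pos := hα, β_pos := hβ, γR_zero := hγR0,
      hasDerivAt_γR := hγR, tendsto_γR := hγRlim, γL_zero := hγL0, hasDerivAt_γL := hγL,
      tendsto_γL := hγLlim }

/-- Existence of relaxation oscillations (Theorem 1(b), existence part): there are
heteroclinic values `η^L₀ < 0 < η^R₀` such that for every `μ₁ ≥ 0` and every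
`η₁ ∈ (η^L₀ + μ₁/α, η^R₀ + μ₁/(α+β))`, and every `c > 0`, for all sufficiently small
`ε > 0` the system with `η = 1 + ε^{k/(k+1)}η₁`, `μ = ε^{k/(k+1)}μ₁` has an attracting
limit cycle whose image is within Hausdorff distance `c` of the singular cycle `Γ₀`. -/
theorem existence_of_relaxation_oscillations
    (φ φL φR : ℝ → ℝ) (k : ℕ) (α β : ℝ)
    (hφ : ContDiff ℝ (⊤ : ℕ∞) φ)
    (hφ0 : ∀ z, 0 < φ z) (hφ1 : ∀ z, φ z < 1)
    (hφ' : ∀ z, 0 < deriv φ z)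
    (hφtop : Tendsto φ atTop (nhds 1)) (hφbot : Tendsto φ atBot (nhds 0))
    (hk : 1 ≤ k)
    (hφL : ContDiff ℝ (⊤ : ℕ∞) φL) (hφR : ContDiff ℝ (⊤ : ℕ∞) φR)
    (hφLnn : ∀ u : ℝ, 0 ≤ u → 0 ≤ φL u) (hφRnn : ∀ u : ℝ, 0 ≤ u → 0 ≤ φR u)
    (hφL0 : 0 < φL 0) (hφR0 : 0 < φR 0)
    (hAL : ∀ z : ℝ, z < 0 → φ z = ((-z) ^ k)⁻¹ * φL (-z)⁻¹)
    (hAR : ∀ z : ℝ, 0 < z → φ z = 1 - (z ^ k)⁻¹ * φR z⁻¹)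
    (hα : 0 < α) (hα1 : α < 1) (hαβ : 1 < α + β)
    (γR γL : ℝ → ℝ × ℝ)
    (hγR0 : γR 0 = (1, 1 / α))
    (hγR : ∀ t, HasDerivAt γR
      ((α + β) * (γR t).2 - (γR t).1, 1 - (α + β) * (γR t).2) t)
    (hγRlim : Tendsto γR atTop (nhds (1, 1 / (α + β))))
    (hγL0 : γL 0 = (1, 1 / (α + β)))
    (hγL : ∀ t, HasDerivAt γL
      (α * (γL t).2 - (γL t).1, 1 - α * (γL t).2) t)
    (hγLlim : Tendsto γL atTop (nhds (1, 1 / α))) :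
    ∃ ηL0 : ℝ, ηL0 < 0 ∧ ∃ ηR0 : ℝ, 0 < ηR0 ∧
      ∀ μ₁ : ℝ, 0 ≤ μ₁ → ∀ η₁ : ℝ,
        ηL0 + μ₁ / α < η₁ → η₁ < ηR0 + μ₁ / (α + β) →
        ∀ c : ℝ, 0 < c →
        ∃ ε₀ > 0, ∀ ε : ℝ, 0 < ε → ε < ε₀ →
          ∃ sol : ℝ → ℝ × ℝ,
            (∀ t, HasDerivAt sol
              (sdVF φ α β (ε ^ ((k : ℝ) / ((k : ℝ) + 1)) * μ₁)
                (1 + ε ^ ((k : ℝ) / ((k : ℝ) + 1)) * η₁) ε (sol t)) t) ∧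
            (∃ T > 0, ∀ t, sol (t + T) = sol t) ∧
            (∃ t s : ℝ, sol t ≠ sol s) ∧
            (∃ U : Set (ℝ × ℝ), IsOpen U ∧ Set.range sol ⊆ U ∧
              ∀ p ∈ U, ∃ ψ : ℝ → ℝ × ℝ, ψ 0 = p ∧
                (∀ t : ℝ, 0 ≤ t → HasDerivAt ψ
                  (sdVF φ α β (ε ^ ((k : ℝ) / ((k : ℝ) + 1)) * μ₁)
                    (1 + ε ^ ((k : ℝ) / ((k : ℝ) + 1)) * η₁) ε (ψ t)) t) ∧
                Tendsto (fun t => Metric.infDist (ψ t) (Set.range sol))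
                  atTop (nhds 0)) ∧
            Metric.hausdorffDist (Set.range sol)
              (γR '' Set.Ici 0 ∪ γL '' Set.Ici 0 ∪ {(1, 1 / α), (1, 1 / (α + β))}) ≤ c := by
  exact existence_of_relaxation_oscillations_general φ φL φR k α β (hφ.of_le (by norm_num)) hφ0 hφ1
    (strictMono_of_deriv_pos hφ').monotone hk (hφL.of_le (by norm_num)) (hφR.of_le (by norm_num))
    hφL0 hφR0 hAL hAR hα (by linarith) γR γL hγR0 hγR hγRlim hγL0 hγL hγLlim
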